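/- Let φ be an injective endomorphism of the free group F_n of rank n ≥ 2. Then for every finite collection ψ_1, ..., ψ_k of pairwise non-similar injective endomorphisms of F_n all lying in the Inn-coset of φ, one has Σ_{j=1}^{k} max{0, rk(fix(ψ_j)) + a(ψ_j)/2 − 1} ≤ n − 1; equivalently, Σ_{j=1}^{k} max{0, 2·rk(fix(ψ_j)) + a(ψ_j) − 2} ≤ 2n − 2. -/

import Mathlib

/-!
Let `F` be free of rank `n`, and for `ψ = i_m ∘ φ` write `tw φ a b` for the map
`Y ↦ a * φ Y * b⁻¹`, so that `tw φ m m = ψ` and `i_b ∘ φ`, `i_a ∘ φ` are similar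
as soon as `tw φ a b` has a fixed point.

**The limit tree.** Let `F` act on its Cayley tree through `φ ^ k!`, for each `k`. Sequences of
vertices, up to bounded distance along a nonprincipal ultrafilter, are the points of a limit tree
`Tinf`. No metric is needed on it: the only structure is the relation expressing that `a` and `b`
lie in the same direction from `q` (`Dendron`). The group `F` acts on `Tinf`, and the stabilizers of germs of
directions are commutative (`Dinf_comm`). Each `m` has a point `Pt φ m`. An element `g` sends
`Pt φ b` to `Pt φ a` if and only if it is periodic under `tw φ a b`; in particular the stabilizer
of `Pt φ m` is the group of the elements periodic under `i_m ∘ φ`. By bounded cancellation, an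
attracting fixed word `W` of `i_m ∘ φ` gives a germ at `Pt φ m`, pointing to a translate of
`Pt φ m` by a long prefix of `W`. These germs have trivial stabilizers, and germs of inequivalent
words lie in distinct orbits (`germ_attracting`).

**The index inequality.** `Dendron.index_inequality` bounds, for finitely many points in distinct
orbits, the sum of `2 * rank (stabilizer) - 2`, plus the number of orbits of germs with trivial
stabilizer at these points, by `2 * n - 2`. It comes from an Euler characteristic count in the
finite median-closed set spanned by a large finite piece of the orbits, and in its intersections
with its translates by the basis elements. In particular the stabilizers have finite rank.

**One orbit of points.** Endomorphisms of the coset whose points lie in one orbit induce on the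
stabilizer of this point, a free group of some rank `r`, twisted forms of one automorphism
of finite order. `index_of_finite_order` bounds the sum of `2 * rank (fixed subgroup) - 2` over
those with nontrivial fixed subgroup by `2 * r - 2`. Its proof uses a tree on which the free group
and the twisted automorphisms act together. Take a Cayley graph which is invariant under the
automorphism; its cuts with few boundary edges which are not generated by cuts of smaller
complexity are pairwise nested (`good_nested`), since two crossing cuts could be replaced by their
corners, and a nested family of cuts is the set of oriented edges of a tree (`Ori`). The free group
acts freely on this tree, the twisted fixed subgroups are centralizers of elements `σ` of finite
order (such a `σ` fixes the axis of every nontrivial element commuting with it), and such a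
centralizer acts on the subtree fixed by `σ`. Applying the index inequality to
the vertices and edges of these subtrees gives the bound.

**Conclusion.** In `sum_index_le` the endomorphisms are grouped by the orbits of their points, and
the two bounds are added. The terms where `2 * rk + a - 2` is negative are then discarded by
restricting to the set of the other ones.
-/

open Filter

namespace ZZFix

/-- A letter: a basis element together with a sign. -/
abbrev Letter (α : Type*) := α × Bool

/-- The inverse letter. -/
def linv {α : Type*} (l : Letter α) : Letter α := (l.1, !l.2)

/-- An infinite reduced word: a sequence of letters with no adjacent cancellation. -/
def InfWord (α : Type*) : Type _ := {w : ℕ → Letter α // ∀ i, w (i + 1) ≠ linv (w i)}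

/-- The length-`i` prefix of an infinite reduced word, as a list of letters. -/
def prefixList {α : Type*} (W : InfWord α) (i : ℕ) : List (Letter α) :=
  (List.range i).map W.1

/-- The length-`i` prefix of an infinite reduced word, as an element of the free group. -/
def wordPrefix {α : Type*} (W : InfWord α) (i : ℕ) : FreeGroup α :=
  FreeGroup.mk (prefixList W i)

/-- Length of the longest common prefix of two lists. -/
def commonPrefixLength {β : Type*} [DecidableEq β] : List β → List β → ℕ
  | a :: as, b :: bs => if a = b then commonPrefixLength as bs + 1 else 0
  | _, _ => 0

variable {α : Type*} [DecidableEq α]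

/-- `|W ∧ g|` for an infinite reduced word `W` and a finite reduced word `g`. -/
def wedgeF (W : InfWord α) (g : FreeGroup α) : ℕ :=
  commonPrefixLength (prefixList W (FreeGroup.toWord g).length) (FreeGroup.toWord g)

/-- `|g ∧ h|` for finite reduced words. -/
def wedgeFF (g h : FreeGroup α) : ℕ :=
  commonPrefixLength (FreeGroup.toWord g) (FreeGroup.toWord h)

/-- `|W ∧ V|` for infinite reduced words, valued in `ℕ∞` (it is `⊤` iff `W = V`). -/
noncomputable def wedgeI {α : Type*} (W V : InfWord α) : ℕ∞ :=
  sSup ((fun i : ℕ => (i : ℕ∞)) '' {i : ℕ | prefixList W i = prefixList V i})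

/-- A sequence of group elements converges to the infinite reduced word `W`
(in the initial segment metric on `F ⊔ ∂F`). -/
def ConvergesTo (u : ℕ → FreeGroup α) (W : InfWord α) : Prop :=
  Tendsto (fun i => wedgeF W (u i)) atTop atTop

/-- `W` is a fixed infinite word of `φ`: `|W ∧ φ(W_i)| → ∞`. -/
def IsFixedInfWord (φ : FreeGroup α →* FreeGroup α) (W : InfWord α) : Prop :=
  Tendsto (fun i => wedgeF W (φ (wordPrefix W i))) atTop atTop

/-- `W` is an attracting fixed word of `φ`: it is fixed and `|W ∧ φ(W_i)| - i → +∞`. -/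
def IsAttractingFixedWord (φ : FreeGroup α →* FreeGroup α) (W : InfWord α) : Prop :=
  IsFixedInfWord φ W ∧
    Tendsto (fun i => (wedgeF W (φ (wordPrefix W i)) : ℤ) - (i : ℤ)) atTop atTop

/-- The fixed subgroup of an endomorphism. -/
def fixedSubgroup {G : Type*} [Group G] (φ : G →* G) : Subgroup G where
  carrier := {g | φ g = g}
  one_mem' := map_one φ
  mul_mem' := by
    intro a b ha hb
    simp only [Set.mem_setOf_eq] at *
    rw [map_mul, ha, hb]
  inv_mem' := by
    intro a ha
    simp only [Set.mem_setOf_eq] at *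
    rw [map_inv, ha]

/-- The rank (minimal number of generators) of a subgroup, valued in `ℕ∞`. -/
noncomputable def grpRank {G : Type*} [Group G] (H : Subgroup G) : ℕ∞ :=
  sInf {k : ℕ∞ | ∃ S : Finset G, Subgroup.closure (S : Set G) = H ∧ (S.card : ℕ∞) = k}

/-- Two infinite reduced words are equivalent (w.r.t. `φ`) if `W' = U·W` for some
`U ∈ fix(φ)`, i.e. the reduced products `U·W_i` converge to `W'`. -/
def EquivFixedWords (φ : FreeGroup α →* FreeGroup α) (W W' : InfWord α) : Prop :=
  ∃ U ∈ fixedSubgroup φ, ConvergesTo (fun i => U * wordPrefix W i) W'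

/-- `a(φ)`: the number of equivalence classes of attracting fixed words, in `ℕ∞`. -/
noncomputable def aCard (φ : FreeGroup α →* FreeGroup α) : ℕ∞ :=
  ENat.card (Quot fun (W W' : {W : InfWord α // IsAttractingFixedWord φ W}) =>
    EquivFixedWords φ W.1 W'.1)

/-- The inner automorphism `i_c : g ↦ c g c⁻¹`, as a monoid homomorphism. -/
def innerAut {G : Type*} [Group G] (c : G) : G →* G := (MulAut.conj c).toMonoidHom

/-- Two endomorphisms are similar if `ψ₂ = i_c ∘ ψ₁ ∘ i_c⁻¹` for some `c`. -/
def Similar {G : Type*} [Group G] (ψ₁ ψ₂ : G →* G) : Prop :=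
  ∃ c : G, ψ₂ = ((innerAut c).comp ψ₁).comp (innerAut c⁻¹)

/-- The trace of the endomorphism of `ℤⁿ` induced by `φ` on the abelianization. -/
def abTrace {n : ℕ} (φ : FreeGroup (Fin n) →* FreeGroup (Fin n)) : ℤ :=
  ∑ i : Fin n, Multiplicative.toAdd
    ((FreeGroup.lift fun k => Multiplicative.ofAdd (if k = i then (1 : ℤ) else 0))
      (φ (FreeGroup.of i)))

/-- The constant infinite reduced word `l l l ⋯`. -/
def constWord {α : Type*} (l : Letter α) : InfWord α :=
  ⟨fun _ => l, fun _ h => by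
    have h2 := congrArg Prod.snd h
    simp [linv] at h2⟩

/-- `W` is an attracting fixed point of `φ`: it is fixed, and there is `i₀` such that
every finite or infinite reduced word `V` with `|W ∧ V| ≥ i₀` satisfies
`|W ∧ φᵖ(V)| → ∞` as `p → ∞`. -/
def IsAttractingFixedPoint (φ : FreeGroup α →* FreeGroup α) (W : InfWord α) : Prop :=
  IsFixedInfWord φ W ∧
    ∃ i₀ : ℕ,
      (∀ g : FreeGroup α, i₀ ≤ wedgeF W g →
        Tendsto (fun p => wedgeF W ((⇑φ)^[p] g)) atTop atTop) ∧
      (∀ V : InfWord α, (i₀ : ℕ∞) ≤ wedgeI W V →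
        ∀ Vs : ℕ → InfWord α, Vs 0 = V →
          (∀ p, ConvergesTo (fun i => φ (wordPrefix (Vs p) i)) (Vs (p + 1))) →
          Tendsto (fun p => wedgeI W (Vs p)) atTop atTop)

open scoped Classical in
/-- The initial segment metric. -/
noncomputable def distIS {α : Type*} (W V : InfWord α) : ℝ :=
  if W = V then 0 else 1 / (1 + ((wedgeI W V).toNat : ℝ))

/-! ### The word metric on a free group -/

theorem le_cpl_iff {β : Type*} [DecidableEq β] (k : ℕ) (a b : List β) :
    k ≤ commonPrefixLength a b ↔ k ≤ a.length ∧ k ≤ b.length ∧ a.take k = b.take k := by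
  induction a generalizing b k with
  | nil =>
    cases b <;> simp [commonPrefixLength] <;> omega
  | cons x xs ih =>
    cases b with
    | nil =>
      simp [commonPrefixLength]
      omega
    | cons y ys =>
      cases k with
      | zero => simp
      | succ k =>
        by_cases h : x = y
        · simp [commonPrefixLength, h, ih]
        · simp [commonPrefixLength, h]

theorem cpl_comm {β : Type*} [DecidableEq β] (a b : List β) :
    commonPrefixLength a b = commonPrefixLength b a := by
  apply le_antisymm
  · rw [le_cpl_iff]
    have := (le_cpl_iff _ a b).1 le_rfl
    exact ⟨this.2.1, this.1, this.2.2.symm⟩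
  · rw [le_cpl_iff]
    have := (le_cpl_iff _ b a).1 le_rfl
    exact ⟨this.2.1, this.1, this.2.2.symm⟩

/-- The `0`-hyperbolic inequality for common prefixes. -/
theorem cpl_hyp {β : Type*} [DecidableEq β] (a b c : List β) :
    min (commonPrefixLength a b) (commonPrefixLength b c) ≤ commonPrefixLength a c := by
  rw [le_cpl_iff]
  have h1 := (le_cpl_iff _ a b).1 (min_le_left _ (commonPrefixLength b c))
  have h2 := (le_cpl_iff _ b c).1 (min_le_right (commonPrefixLength a b) _)
  exact ⟨h1.1, h2.2.1, h1.2.2.trans h2.2.2⟩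

theorem le_wedgeFF_iff (k : ℕ) (a b : FreeGroup α) :
    k ≤ wedgeFF a b ↔ k ≤ a.norm ∧ k ≤ b.norm ∧ a.toWord.take k = b.toWord.take k :=
  le_cpl_iff _ _ _

theorem isReduced_append_cons {s t : List (α × Bool)} (hs : FreeGroup.IsReduced s)
    (ht : FreeGroup.IsReduced t)
    (h : ∀ x ∈ s.head?, ∀ y ∈ t.head?, x ≠ y) :
    FreeGroup.IsReduced (FreeGroup.invRev s ++ t) := by
  have hs' : FreeGroup.IsReduced (FreeGroup.invRev s) := by
    rw [FreeGroup.isReduced_iff_reduce_eq] at hs ⊢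
    rw [FreeGroup.reduce_invRev, hs]
  unfold FreeGroup.IsReduced at *
  rw [List.isChain_append]
  refine ⟨hs', ht, ?_⟩
  intro x hx y hy
  cases s with
  | nil => simp [FreeGroup.invRev] at hx
  | cons a l =>
    simp [FreeGroup.invRev] at hx
    have := h a (by simp) y hy
    subst hx
    rcases a with ⟨a, i⟩
    rcases y with ⟨b, j⟩
    intro hab
    simp at hab
    subst hab
    simp at this ⊢
    cases i <;> cases j <;> simp_all

theorem norm_inv_mul (a b : FreeGroup α) :
    (a⁻¹ * b).norm + 2 * wedgeFF a b = a.norm + b.norm := by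
  set k := wedgeFF a b with hk
  obtain ⟨h1, h2, h3⟩ := (le_wedgeFF_iff k a b).1 le_rfl
  have hmax : ¬ (k + 1 ≤ wedgeFF a b) := by omega
  rw [le_wedgeFF_iff] at hmax
  set p := a.toWord.take k
  set s := a.toWord.drop k with hs
  set t := b.toWord.drop k with ht
  have ha : a = FreeGroup.mk p * FreeGroup.mk s := by
    rw [FreeGroup.mul_mk, List.take_append_drop, FreeGroup.mk_toWord]
  have hb : b = FreeGroup.mk p * FreeGroup.mk t := by
    rw [FreeGroup.mul_mk, h3, List.take_append_drop, FreeGroup.mk_toWord]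
  have hab : a⁻¹ * b = FreeGroup.mk (FreeGroup.invRev s ++ t) := by
    rw [← FreeGroup.mul_mk, ← FreeGroup.inv_mk]
    conv_lhs => rw [ha, hb]
    group
  have hsr : FreeGroup.IsReduced s :=
    (FreeGroup.isReduced_toWord (x := a)).drop k
  have htr : FreeGroup.IsReduced t :=
    (FreeGroup.isReduced_toWord (x := b)).drop k
  have hred : FreeGroup.IsReduced (FreeGroup.invRev s ++ t) := by
    apply isReduced_append_cons hsr htr
    intro x hx y hy hxy
    subst hxy
    apply hmax
    rw [hs, List.head?_drop] at hx
    rw [ht, List.head?_drop] at hy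
    simp only [Option.mem_def] at hx hy
    obtain ⟨hxl, hx'⟩ := List.getElem?_eq_some_iff.1 hx
    obtain ⟨hyl, hy'⟩ := List.getElem?_eq_some_iff.1 hy
    refine ⟨hxl, hyl, ?_⟩
    rw [List.take_add_one, List.take_add_one, hx, hy]
    simp only [Option.toList_some]
    congr 1
  have : (a⁻¹ * b).norm = s.length + t.length := by
    unfold FreeGroup.norm
    rw [hab, FreeGroup.toWord_mk, FreeGroup.isReduced_iff_reduce_eq.1 hred]
    simp
  have e1 : s.length = a.norm - k := by simp [hs, FreeGroup.norm]
  have e2 : t.length = b.norm - k := by simp [ht, FreeGroup.norm]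
  omega

/-- The word metric. -/
def dist1 (a b : FreeGroup α) : ℕ := (a⁻¹ * b).norm

/-- The Gromov product of `a` and `b` seen from `q`: the length of the common part of the
geodesics `[q, a]` and `[q, b]` of the Cayley tree. -/
def gp (q a b : FreeGroup α) : ℕ := wedgeFF (q⁻¹ * a) (q⁻¹ * b)

/-- The usual formula for twice the Gromov product, free of subtraction. -/
theorem two_gp (q a b : FreeGroup α) :
    dist1 a b + 2 * gp q a b = dist1 q a + dist1 q b := by
  have := norm_inv_mul (q⁻¹ * a) (q⁻¹ * b)
  unfold dist1 gp
  rw [← this]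
  congr 2
  group

/-- The `0`-hyperbolic inequality for Gromov products. -/
theorem gp_hyp (q a b c : FreeGroup α) : min (gp q a b) (gp q b c) ≤ gp q a c := cpl_hyp _ _ _

theorem gp_comm (q a b : FreeGroup α) : gp q a b = gp q b a := cpl_comm _ _

theorem dist1_comm (a b : FreeGroup α) : dist1 a b = dist1 b a := by
  unfold dist1
  rw [← FreeGroup.norm_inv_eq]
  simp

@[simp] theorem dist1_self (a : FreeGroup α) : dist1 a a = 0 := by simp [dist1]

theorem dist1_eq_zero {a b : FreeGroup α} : dist1 a b = 0 ↔ a = b := by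
  simp [dist1, inv_mul_eq_one]

theorem dist1_tri (a b c : FreeGroup α) : dist1 a c ≤ dist1 a b + dist1 b c := by
  unfold dist1
  have := FreeGroup.norm_mul_le (a⁻¹ * b) (b⁻¹ * c)
  simpa [mul_assoc] using this

@[simp] theorem dist1_mul (g a b : FreeGroup α) : dist1 (g * a) (g * b) = dist1 a b := by
  unfold dist1; congr 1; group

@[simp] theorem gp_mul (g q a b : FreeGroup α) : gp (g * q) (g * a) (g * b) = gp q a b := by
  unfold gp; congr 1 <;> group

theorem dist1_one (a : FreeGroup α) : dist1 1 a = a.norm := by simp [dist1]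

theorem gp_one (a b : FreeGroup α) : gp 1 a b = wedgeFF a b := by simp [gp]

theorem gp_le_left (q a b : FreeGroup α) : gp q a b ≤ dist1 q a := by
  have h1 := two_gp q a b
  have h2 := dist1_tri q a b
  have := dist1_tri q b a
  have := dist1_comm a b
  omega

theorem gp_le_right (q a b : FreeGroup α) : gp q a b ≤ dist1 q b := by
  rw [gp_comm]; exact gp_le_left _ _ _

theorem norm_take (w : FreeGroup α) (s : ℕ) :
    (FreeGroup.mk (w.toWord.take s)).toWord = w.toWord.take s := by
  rw [FreeGroup.toWord_mk, FreeGroup.isReduced_iff_reduce_eq.1]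
  exact (FreeGroup.isReduced_toWord (x := w)).take s

/-- The point at distance `s` from `q` on the geodesic `[q, p]`. -/
def geo (q p : FreeGroup α) (s : ℕ) : FreeGroup α := q * FreeGroup.mk ((q⁻¹ * p).toWord.take s)

theorem dist1_geo_left {q p : FreeGroup α} {s : ℕ} (hs : s ≤ dist1 q p) :
    dist1 q (geo q p s) = s := by
  unfold dist1 geo FreeGroup.norm at *
  rw [inv_mul_cancel_left, norm_take]
  simpa using hs

theorem dist1_geo_right {q p : FreeGroup α} {s : ℕ} (hs : s ≤ dist1 q p) :
    s + dist1 (geo q p s) p = dist1 q p := by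
  have h1 := dist1_geo_left hs
  have : gp q (geo q p s) p = s := by
    apply le_antisymm
    · exact (gp_le_left _ _ _).trans h1.le
    · unfold gp
      rw [le_wedgeFF_iff]
      refine ⟨h1.ge, hs, ?_⟩
      unfold geo
      rw [inv_mul_cancel_left, norm_take]
      simp
  have := two_gp q (geo q p s) p
  omega

/-- Points on a geodesic are determined by their distance from its origin. -/
theorem eq_of_on_geodesic {q p y z : FreeGroup α} (hy : dist1 q y + dist1 y p = dist1 q p)
    (hz : dist1 q z + dist1 z p = dist1 q p) (h : dist1 q y = dist1 q z) : y = z := by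
  have h1 := two_gp q y p
  have h2 := two_gp q p z
  have h3 := gp_hyp q y p z
  have h4 := two_gp q y z
  have h5 := gp_comm q p z
  have h6 := dist1_comm z p
  rw [← dist1_eq_zero]
  omega

theorem exists_median (a b c : FreeGroup α) :
    ∃ m, gp m a b = 0 ∧ gp m b c = 0 ∧ gp m a c = 0 := by
  have hs : gp a b c ≤ dist1 a b := gp_le_left _ _ _
  refine ⟨geo a b (gp a b c), ?_⟩
  set m := geo a b (gp a b c)
  have h1 : dist1 a m = _ := dist1_geo_left hs
  have h2 : _ + dist1 m b = _ := dist1_geo_right hs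
  have h3 := two_gp a m b
  have h4 := gp_hyp a m b c
  have h5 := two_gp a m c
  have h6 := two_gp a b c
  have h7 := two_gp m a b
  have h8 := two_gp m a c
  have h9 := two_gp m b c
  have h10 := dist1_comm a m
  have h11 := gp_le_left a m c
  have := dist1_tri a m c
  omega

theorem finite_ball [Finite α] (R : ℕ) : {g : FreeGroup α | g.norm ≤ R}.Finite := by
  have : Set.Finite {l : List (α × Bool) | l.length ≤ R} := List.finite_length_le _ _
  exact Set.Finite.preimage (FreeGroup.toWord_injective.injOn) this

theorem exists_pow_norm_gt [Finite α] {z : FreeGroup α} (hz : z ≠ 1) (K : ℕ) :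
    ∃ N : ℕ, ∀ m : ℕ, N ≤ m → K < (z ^ m).norm := by
  have hinj : Function.Injective (fun m : ℕ => z ^ m) := injective_pow_iff_not_isOfFinOrder.2
    (by rw [isOfFinOrder_iff_pow_eq_one]; rintro ⟨n, hn, h⟩
        exact hz ((pow_eq_one_iff_left hn.ne').1 h))
  have := (finite_ball (α := α) K).preimage (hinj.injOn)
  obtain ⟨N, hN⟩ := this.bddAbove
  refine ⟨N + 1, fun m hm => ?_⟩
  by_contra hcon
  push Not at hcon
  have := hN (show m ∈ _ from hcon)
  omega

/-! ### Median-like betweenness structures -/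

/-- A relation `D q a b`, expressing that `a` and `b` lie in the same direction from `q`, with the
properties it has in a tree (or an `ℝ`-tree). Lying in the same direction from `q` is an
equivalence relation on the complement of `q`; if `q ≠ q'`, every point lies in the direction of
`q'` from `q` or in the direction of `q` from `q'`; any three points have a median. -/
structure Dendron {X : Type*} (D : X → X → X → Prop) : Prop where
  refl_iff : ∀ q a, D q a a ↔ a ≠ q
  symm : ∀ {q a b}, D q a b → D q b a
  trans : ∀ {q a b c}, D q a b → D q b c → D q a c
  sep : ∀ {q q' : X} (a : X), q ≠ q' → D q a q' ∨ D q' a q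
  med : ∀ a b c, ∃ m, ¬ D m a b ∧ ¬ D m b c ∧ ¬ D m a c

namespace Dendron

variable {X : Type*} {D : X → X → X → Prop}

theorem ne_left (h : Dendron D) {q a b : X} (hd : D q a b) : a ≠ q :=
  (h.refl_iff q a).1 (h.trans hd (h.symm hd))

theorem ne_right (h : Dendron D) {q a b : X} (hd : D q a b) : b ≠ q :=
  h.ne_left (h.symm hd)

/-- `m` is a median of `a, b, c`. -/
def IsMed (D : X → X → X → Prop) (m a b c : X) : Prop := ¬ D m a b ∧ ¬ D m b c ∧ ¬ D m a c

theorem med_unique (h : Dendron D) {m m' a b c : X} (hm : IsMed D m a b c)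
    (hm' : IsMed D m' a b c) : m = m' := by
  by_contra hne
  have ha := h.sep a hne
  have hb := h.sep b hne
  have hc := h.sep c hne
  have key : ∀ {q x y z : X}, D q x z → D q y z → D q x y := fun h1 h2 => h.trans h1 (h.symm h2)
  obtain ⟨h1, h2, h3⟩ := hm
  obtain ⟨h4, h5, h6⟩ := hm'
  rcases ha with ha | ha <;> rcases hb with hb | hb <;> rcases hc with hc | hc
  all_goals first
    | exact h1 (key ha hb) | exact h2 (key hb hc) | exact h3 (key ha hc)
    | exact h4 (key ha hb) | exact h5 (key hb hc) | exact h6 (key ha hc)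

theorem eq_of_isMed_self (h : Dendron D) {m b : X} (hm : IsMed D m b b b) : m = b := by
  by_contra hne
  exact hm.1 ((h.refl_iff m b).2 (Ne.symm hne))

/-- If `m` is the median of `a, b, c`, then from every other point one of them lies in the
direction of `m`. -/
theorem med_dir (h : Dendron D) {m p a b c : X} (hm : IsMed D m a b c) (hne : p ≠ m) :
    ∃ y, (y = a ∨ y = b ∨ y = c) ∧ D p y m := by
  by_contra hcon
  push Not at hcon
  have ha := (h.sep a hne).resolve_left (hcon a (by simp))
  have hb := (h.sep b hne).resolve_left (hcon b (by simp))
  exact hm.1 (h.trans ha (h.symm hb))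

/-- The median-closed sets. -/
def MedClosed (D : X → X → X → Prop) (V : Set X) : Prop :=
  ∀ a ∈ V, ∀ b ∈ V, ∀ c ∈ V, ∀ m, IsMed D m a b c → m ∈ V

/-- The median of three points. -/
noncomputable def mid (h : Dendron D) (a b c : X) : X := (h.med a b c).choose

theorem mid_isMed (h : Dendron D) (a b c : X) : IsMed D (h.mid a b c) a b c :=
  (h.med a b c).choose_spec

open scoped Classical in
/-- All medians of triples of points of `B`. -/
noncomputable def hull (h : Dendron D) (B : Finset X) : Finset X :=
  (B ×ˢ B ×ˢ B).image fun p => h.mid p.1 p.2.1 p.2.2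

theorem mem_hull (h : Dendron D) {B : Finset X} {v : X} :
    v ∈ h.hull B ↔ ∃ a ∈ B, ∃ b ∈ B, ∃ c ∈ B, IsMed D v a b c := by
  classical
  simp only [hull, Finset.mem_image, Finset.mem_product, Prod.exists]
  constructor
  · rintro ⟨a, b, c, ⟨ha, hb, hc⟩, rfl⟩
    exact ⟨a, ha, b, hb, c, hc, h.mid_isMed a b c⟩
  · rintro ⟨a, ha, b, hb, c, hc, hm⟩
    exact ⟨a, b, c, ⟨ha, hb, hc⟩, h.med_unique (h.mid_isMed a b c) hm⟩

theorem subset_hull (h : Dendron D) (B : Finset X) : B ⊆ h.hull B := by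
  intro b hb
  rw [h.mem_hull]
  refine ⟨b, hb, b, hb, b, hb, ?_⟩
  have : ¬ D b b b := by rw [h.refl_iff]; simp
  exact ⟨this, this, this⟩

theorem hull_medClosed (h : Dendron D) (B : Finset X) :
    MedClosed D (h.hull B : Set X) := by
  intro a ha b hb c hc m hm
  by_cases hma : m = a
  · exact hma ▸ ha
  by_cases hmb : m = b
  · exact hmb ▸ hb
  by_cases hmc : m = c
  · exact hmc ▸ hc
  have key : ∀ v ∈ h.hull B, m ≠ v → ∃ y ∈ B, D m y v := by
    intro v hv hne
    obtain ⟨x, hx, y, hy, z, hz, hxyz⟩ := h.mem_hull.1 hv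
    obtain ⟨w, hw, hd⟩ := h.med_dir hxyz hne
    rcases hw with rfl | rfl | rfl <;> exact ⟨_, by assumption, hd⟩
  obtain ⟨a', ha', hda⟩ := key a ha hma
  obtain ⟨b', hb', hdb⟩ := key b hb hmb
  obtain ⟨c', hc', hdc⟩ := key c hc hmc
  refine h.mem_hull.2 ⟨a', ha', b', hb', c', hc', ?_, ?_, ?_⟩
  · exact fun hd => hm.1 (h.trans (h.symm hda) (h.trans hd hdb))
  · exact fun hd => hm.2.1 (h.trans (h.symm hdb) (h.trans hd hdc))
  · exact fun hd => hm.2.2 (h.trans (h.symm hda) (h.trans hd hdc))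

/-- The germ at `v` pointing towards `y`. -/
def germ (D : X → X → X → Prop) (v y : X) : X × Set X := (v, {z | D v y z})

theorem germ_eq_iff (h : Dendron D) {v y y' : X} (hy : y ≠ v) :
    germ D v y = germ D v y' ↔ D v y y' := by
  simp only [germ, Prod.mk.injEq, true_and]
  constructor
  · intro heq
    have : y ∈ {z | D v y z} := (h.refl_iff v y).2 hy
    rw [heq] at this
    exact h.symm this
  · intro hd
    ext z
    exact ⟨fun hz => h.trans (h.symm hd) hz, fun hz => h.trans hd hz⟩

open scoped Classical in
/-- The germs at `v` pointing towards points of `V`. -/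
noncomputable def germsAt (D : X → X → X → Prop) (V : Finset X) (v : X) : Finset (X × Set X) :=
  (V.erase v).image (germ D v)

theorem mem_germsAt {V : Finset X} {v : X} {g : X × Set X} :
    g ∈ germsAt D V v ↔ ∃ y ∈ V, y ≠ v ∧ germ D v y = g := by
  classical
  simp [germsAt, and_assoc, and_left_comm]

theorem germsAt_mono {V V' : Finset X} (hV : V ⊆ V') (v : X) :
    germsAt D V v ⊆ germsAt D V' v := by
  intro g
  simp only [mem_germsAt]
  rintro ⟨y, hy, h⟩
  exact ⟨y, hV hy, h⟩

/-- A finite median-closed set with at least two points has an extremal point `l`, hanging off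
a neighbouring point `m`. -/
theorem exists_leaf (h : Dendron D) {V : Finset X} (hV : MedClosed D (V : Set X))
    (h2 : 2 ≤ V.card) :
    ∃ l ∈ V, ∃ m ∈ V, l ≠ m ∧ (∀ z ∈ V, D m z l → z = l) ∧
      (∀ z ∈ V, z ≠ l → D l z m) ∧ (∀ v ∈ V, v ≠ l → v ≠ m → D v l m) := by
  classical
  let f : X × X → ℕ := fun p => (V.filter fun z => D p.2 z p.1).card
  have hne : ((V ×ˢ V).filter fun p => p.1 ≠ p.2).Nonempty := by
    obtain ⟨a, ha, b, hb, hab⟩ := Finset.one_lt_card.1 h2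
    exact ⟨(a, b), by simp [ha, hb, hab]⟩
  obtain ⟨⟨l, m⟩, hlm, hmin⟩ := Finset.exists_min_image _ f hne
  simp only [Finset.mem_filter, Finset.mem_product] at hlm hmin
  obtain ⟨⟨hl, hm⟩, hlm⟩ := hlm
  have hS : ∀ z ∈ V, D m z l → z = l := by
    intro z hz hd
    by_contra hzl
    obtain ⟨c, hc1, hc2, hc3⟩ := h.med m l z
    have hcV : c ∈ V := hV m hm l hl z hz c ⟨hc1, hc2, hc3⟩
    have hcm : c ≠ m := by
      rintro rfl
      exact hc2 (h.symm hd)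
    have hml : D m l c := by
      rcases h.sep l hcm.symm with h' | h'
      · exact h'
      · exact absurd (h.symm h') hc1
    have main : ∀ e ∈ V, e ≠ c → ¬ D c m e → False := by
      intro e he hec hce
      have := hmin (e, c) ⟨⟨he, hcV⟩, hec⟩
      have hlt : f (e, c) < f (l, m) := by
        apply Finset.card_lt_card
        rw [Finset.ssubset_iff_of_subset]
        · refine ⟨c, ?_, ?_⟩
          · simp only [Finset.mem_filter]
            exact ⟨hcV, h.symm hml⟩
          · simp only [Finset.mem_filter, not_and]
            intro _ hd'
            exact h.ne_left hd' rfl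
        · intro y
          simp only [Finset.mem_filter]
          rintro ⟨hy, hd'⟩
          refine ⟨hy, ?_⟩
          rcases h.sep y hcm.symm with h' | h'
          · exact h.trans h' (h.symm hml)
          · exact absurd (h.trans (h.symm h') hd') hce
      omega
    by_cases hcl : c = l
    · refine main z hz ?_ hc3
      rw [hcl]; exact hzl
    · exact main l hl (Ne.symm hcl) hc1
  refine ⟨l, hl, m, hm, hlm, hS, ?_, ?_⟩
  · intro z hz hzl
    rcases h.sep z hlm with h' | h'
    · exact h'
    · exact absurd (hS z hz h') hzl
  · intro v hv hvl hvm
    rcases h.sep l hvm with h' | h'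
    · exact h'
    · have := hS v hv (h.symm h')
      exact absurd this hvl

/-- The number of germs of a finite tree is twice its number of edges. -/
theorem sum_germsAt (h : Dendron D) : ∀ (N : ℕ) (V : Finset X), V.card = N →
    MedClosed D (V : Set X) → V.Nonempty →
    ∑ v ∈ V, (germsAt D V v).card + 2 = 2 * V.card := by
  classical
  intro N
  induction N with
  | zero =>
    intro V hc _ hne
    simp at hc
    simp [hc] at hne
  | succ N ih =>
    intro V hc hV hne
    by_cases h2 : 2 ≤ V.card
    · obtain ⟨l, hl, m, hm, hlm, hS, hA, hB⟩ := h.exists_leaf hV h2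
      have hcard : (V.erase l).card = N := by rw [Finset.card_erase_of_mem hl, hc]; rfl
      have hmV : m ∈ V.erase l := Finset.mem_erase.2 ⟨hlm.symm, hm⟩
      have hV' : MedClosed D ((V.erase l : Finset X) : Set X) := by
        intro a ha b hb c hc' x hx
        simp only [Finset.coe_erase, Set.mem_sdiff, Finset.mem_coe,
          Set.mem_singleton_iff] at ha hb hc' ⊢
        refine ⟨hV a ha.1 b hb.1 c hc'.1 x hx, ?_⟩
        rintro rfl
        exact hx.1 (h.trans (hA a ha.1 ha.2) (h.symm (hA b hb.1 hb.2)))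
      have hih := ih (V.erase l) hcard hV' ⟨m, hmV⟩
      have e1 : (germsAt D V l).card = 1 := by
        rw [Finset.card_eq_one]
        refine ⟨germ D l m, ?_⟩
        ext g
        rw [mem_germsAt, Finset.mem_singleton]
        constructor
        · rintro ⟨y, hy, hyl, rfl⟩
          exact (h.germ_eq_iff hyl).2 (hA y hy hyl)
        · rintro rfl
          exact ⟨m, hm, hlm.symm, rfl⟩
      have e2 : ∀ v ∈ (V.erase l).erase m, germsAt D V v = germsAt D (V.erase l) v := by
        intro v hv
        simp only [Finset.mem_erase] at hv
        apply Finset.Subset.antisymm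
        · intro g
          simp only [mem_germsAt]
          rintro ⟨y, hy, hyv, rfl⟩
          by_cases hyl : y = l
          · refine ⟨m, hmV, Ne.symm hv.1, ?_⟩
            rw [hyl]
            exact ((h.germ_eq_iff (Ne.symm hv.2.1)).2 (hB v hv.2.2 hv.2.1 hv.1)).symm
          · exact ⟨y, Finset.mem_erase.2 ⟨hyl, hy⟩, hyv, rfl⟩
        · exact germsAt_mono (Finset.erase_subset _ _) v
      have e3 : (germsAt D V m).card = (germsAt D (V.erase l) m).card + 1 := by
        have : germsAt D V m = insert (germ D m l) (germsAt D (V.erase l) m) := by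
          ext g
          simp only [mem_germsAt, Finset.mem_insert, Finset.mem_erase]
          constructor
          · rintro ⟨y, hy, hym, rfl⟩
            by_cases hyl : y = l
            · left; rw [hyl]
            · right; exact ⟨y, ⟨hyl, hy⟩, hym, rfl⟩
          · rintro (rfl | ⟨y, hy, hym, rfl⟩)
            · exact ⟨l, hl, hlm, rfl⟩
            · exact ⟨y, hy.2, hym, rfl⟩
        rw [this, Finset.card_insert_of_notMem]
        simp only [mem_germsAt, Finset.mem_erase, not_exists, not_and]
        rintro y ⟨hyl, hy⟩ hym heq
        exact hyl (hS y hy ((h.germ_eq_iff hym).1 heq))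
      rw [← Finset.add_sum_erase _ _ hl, ← Finset.add_sum_erase _ _ hmV, e1, e3,
        Finset.sum_congr rfl (fun v hv => by rw [e2 v hv])]
      rw [← Finset.add_sum_erase _ _ hmV] at hih
      rw [hcard] at hih
      omega
    · have : V.card = 1 := by
        have := hne.card_pos
        omega
      obtain ⟨v, rfl⟩ := Finset.card_eq_one.1 this
      simp [germsAt]

/-- A branch point of the hull which is not one of the generating points has three directions. -/
theorem three_le_germsAt (h : Dendron D) {B : Finset X} {v : X} (hv : v ∈ h.hull B)
    (hvB : v ∉ B) : 3 ≤ (germsAt D (h.hull B) v).card := by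
  classical
  obtain ⟨a, ha, b, hb, c, hc, hm⟩ := h.mem_hull.1 hv
  have hav : a ≠ v := fun h => hvB (h ▸ ha)
  have hbv : b ≠ v := fun h => hvB (h ▸ hb)
  have hcv : c ≠ v := fun h => hvB (h ▸ hc)
  have : ({germ D v a, germ D v b, germ D v c} : Finset _) ⊆ germsAt D (h.hull B) v := by
    intro g hg
    simp only [Finset.mem_insert, Finset.mem_singleton] at hg
    rw [mem_germsAt]
    rcases hg with rfl | rfl | rfl
    · exact ⟨a, h.subset_hull B ha, hav, rfl⟩
    · exact ⟨b, h.subset_hull B hb, hbv, rfl⟩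
    · exact ⟨c, h.subset_hull B hc, hcv, rfl⟩
  refine le_trans ?_ (Finset.card_le_card this)
  rw [Finset.card_eq_three.2]
  refine ⟨_, _, _, ?_, ?_, ?_, rfl⟩
  · rw [Ne, h.germ_eq_iff hav]; exact hm.1
  · rw [Ne, h.germ_eq_iff hav]; exact hm.2.2
  · rw [Ne, h.germ_eq_iff hbv]; exact hm.2.1

end Dendron

/-! ### Spanning trees and orbit counts -/

/-- Spanning trees, for a finite graph whose edges carry group labels. Connectedness is expressed
by cuts. The tree edge joining `u` towards the root is `par u`, and `τ u` is the label of the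
tree path from the root to `u`; the predicate `I` records an invariant carried along paths. -/
theorem exists_spanning {X κ G : Type*} [Group G] [Nonempty κ] (C : Finset X) (E : Finset κ)
    (s t : κ → X)
    (lam : κ → G) (root : X) (hroot : root ∈ C) (hs : ∀ e ∈ E, s e ∈ C) (ht : ∀ e ∈ E, t e ∈ C)
    (hconn : ∀ U ⊆ C, root ∈ U → (∀ e ∈ E, s e ∈ U ↔ t e ∈ U) → U = C)
    (I : X → G → Prop) (I1 : I root 1)
    (I2 : ∀ e ∈ E, ∀ g, I (s e) g → I (t e) (lam e * g))
    (I3 : ∀ e ∈ E, ∀ g, I (t e) g → I (s e) ((lam e)⁻¹ * g)) :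
    ∃ (par : X → κ) (τ : X → G), τ root = 1 ∧
      (∀ u ∈ C, u ≠ root → par u ∈ E ∧ (s (par u) = u ∨ t (par u) = u) ∧
        τ (t (par u)) = lam (par u) * τ (s (par u))) ∧
      (∀ u ∈ C, u ≠ root → ∀ u' ∈ C, u' ≠ root → par u = par u' → u = u') ∧
      (∀ u ∈ C, I u (τ u)) := by
  classical
  have key : ∀ k : ℕ, k + 1 ≤ C.card → ∃ U ⊆ C, root ∈ U ∧ U.card = k + 1 ∧
      ∃ (par : X → κ) (τ : X → G), τ root = 1 ∧
      (∀ u ∈ U, u ≠ root → par u ∈ E ∧ (s (par u) = u ∨ t (par u) = u) ∧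
        s (par u) ∈ U ∧ t (par u) ∈ U ∧
        τ (t (par u)) = lam (par u) * τ (s (par u))) ∧
      (∀ u ∈ U, u ≠ root → ∀ u' ∈ U, u' ≠ root → par u = par u' → u = u') ∧
      (∀ u ∈ U, I u (τ u)) := by
    intro k
    induction k with
    | zero =>
      intro _
      refine ⟨{root}, by simpa using hroot, by simp, by simp, fun _ => Classical.arbitrary κ,
        fun _ => 1, rfl, ?_, ?_, ?_⟩
      · intro u hu hne; simp at hu; exact absurd hu hne
      · intro u hu hne; simp at hu; exact absurd hu hne
      · intro u hu; simp at hu; rw [hu]; exact I1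
    | succ k ih =>
      intro hk
      obtain ⟨U, hUC, hrU, hcard, par, τ, h1, h2, h3, h4⟩ := ih (by omega)
      have step : ∀ v ∈ C, v ∉ U → ∀ e ∈ E, ∀ g, (s e = v ∨ t e = v) → (s e ∈ U ∨ t e ∈ U) →
          s e ∈ insert v U → t e ∈ insert v U →
          I v g → (Function.update τ v g) (t e) = lam e * (Function.update τ v g) (s e) →
          ∃ U ⊆ C, root ∈ U ∧ U.card = k + 1 + 1 ∧
      ∃ (par : X → κ) (τ : X → G), τ root = 1 ∧
      (∀ u ∈ U, u ≠ root → par u ∈ E ∧ (s (par u) = u ∨ t (par u) = u) ∧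
        s (par u) ∈ U ∧ t (par u) ∈ U ∧
        τ (t (par u)) = lam (par u) * τ (s (par u))) ∧
      (∀ u ∈ U, u ≠ root → ∀ u' ∈ U, u' ≠ root → par u = par u' → u = u') ∧
      (∀ u ∈ U, I u (τ u)) := by
        intro v hvC hvU e he g hinc hor hsU htU hI hτ
        have hne : ∀ u ∈ U, u ≠ v := fun u hu h => hvU (h ▸ hu)
        have hnew : ∀ u ∈ U, u ≠ root → par u ≠ e := by
          intro u hu hr heq
          obtain ⟨_, _, a, b, _⟩ := h2 u hu hr
          rw [heq] at a b
          rcases hinc with h | h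
          · exact hvU (h ▸ a)
          · exact hvU (h ▸ b)
        refine ⟨insert v U, Finset.insert_subset hvC hUC, Finset.mem_insert_of_mem hrU, ?_,
          Function.update par v e, Function.update τ v g, ?_, ?_, ?_, ?_⟩
        · rw [Finset.card_insert_of_notMem hvU, hcard]
        · rw [Function.update_of_ne (hne root hrU), h1]
        · intro u hu hr
          by_cases huv : u = v
          · subst huv
            rw [Function.update_self]
            exact ⟨he, hinc, hsU, htU, hτ⟩
          · have hu' : u ∈ U := (Finset.mem_insert.1 hu).resolve_left huv
            rw [Function.update_of_ne huv]
            obtain ⟨a, b, c, d, f⟩ := h2 u hu' hr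
            refine ⟨a, b, Finset.mem_insert_of_mem c, Finset.mem_insert_of_mem d, ?_⟩
            rw [Function.update_of_ne (hne _ c), Function.update_of_ne (hne _ d), f]
        · intro u hu hr u' hu' hr' heq
          by_cases huv : u = v <;> by_cases huv' : u' = v
          · rw [huv, huv']
          · exfalso
            rw [huv, Function.update_self, Function.update_of_ne huv'] at heq
            exact hnew u' ((Finset.mem_insert.1 hu').resolve_left huv') hr' heq.symm
          · exfalso
            rw [huv', Function.update_self, Function.update_of_ne huv] at heq
            exact hnew u ((Finset.mem_insert.1 hu).resolve_left huv) hr heq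
          · rw [Function.update_of_ne huv, Function.update_of_ne huv'] at heq
            exact h3 u ((Finset.mem_insert.1 hu).resolve_left huv) hr u'
              ((Finset.mem_insert.1 hu').resolve_left huv') hr' heq
        · intro u hu
          by_cases huv : u = v
          · rw [huv, Function.update_self]; exact hI
          · rw [Function.update_of_ne huv]
            exact h4 u ((Finset.mem_insert.1 hu).resolve_left huv)
      have hUne : U ≠ C := by
        rintro rfl
        omega
      have : ∃ e ∈ E, ¬ (s e ∈ U ↔ t e ∈ U) := by
        by_contra hcon
        push Not at hcon
        exact hUne (hconn U hUC hrU (fun e he => by have := hcon e he; tauto))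
      obtain ⟨e, he, hiff⟩ := this
      by_cases hse : s e ∈ U
      · have hte : t e ∉ U := by tauto
        refine step (t e) (ht e he) hte e he (lam e * τ (s e)) (Or.inr rfl) (Or.inl hse)
          (Finset.mem_insert_of_mem hse) (Finset.mem_insert_self _ _) (I2 e he _ (h4 _ hse)) ?_
        rw [Function.update_self, Function.update_of_ne]
        rintro h
        exact hte (h ▸ hse)
      · have hte : t e ∈ U := by tauto
        refine step (s e) (hs e he) hse e he ((lam e)⁻¹ * τ (t e)) (Or.inl rfl) (Or.inr hte)
          (Finset.mem_insert_self _ _) (Finset.mem_insert_of_mem hte) (I3 e he _ (h4 _ hte)) ?_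
        rw [Function.update_self, Function.update_of_ne]
        · group
        · rintro h
          exact hse (h ▸ hte)
  have hpos : 1 ≤ C.card := Finset.card_pos.2 ⟨root, hroot⟩
  obtain ⟨U, hUC, hrU, hcard, par, τ, h1, h2, h3, h4⟩ := key (C.card - 1) (by omega)
  have : U = C := Finset.eq_of_subset_of_card_le hUC (by omega)
  subst this
  exact ⟨par, τ, h1, fun u hu hr => ⟨(h2 u hu hr).1, (h2 u hu hr).2.1, (h2 u hu hr).2.2.2.2⟩,
    h3, h4⟩

/-- The labels of closed paths based at the root of a connected finite graph are generated by
one element for each edge outside a spanning tree. -/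
theorem exists_loop_gens {X κ G : Type*} [Group G] [Nonempty κ] (C : Finset X) (E : Finset κ)
    (s t : κ → X)
    (lam : κ → G) (root : X) (hroot : root ∈ C) (hs : ∀ e ∈ E, s e ∈ C) (ht : ∀ e ∈ E, t e ∈ C)
    (hconn : ∀ U ⊆ C, root ∈ U → (∀ e ∈ E, s e ∈ U ↔ t e ∈ U) → U = C)
    (I : X → G → Prop) (I1 : I root 1)
    (I2 : ∀ e ∈ E, ∀ g, I (s e) g → I (t e) (lam e * g))
    (I3 : ∀ e ∈ E, ∀ g, I (t e) g → I (s e) ((lam e)⁻¹ * g)) :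
    ∃ (S : Finset G) (τ : X → G), τ root = 1 ∧ S.card + C.card ≤ E.card + 1 ∧
      (∀ e ∈ E, (τ (t e))⁻¹ * lam e * τ (s e) ∈ Subgroup.closure (S : Set G)) ∧
      (∀ g ∈ S, ∃ e ∈ E, g = (τ (t e))⁻¹ * lam e * τ (s e)) ∧
      (∀ u ∈ C, I u (τ u)) := by
  classical
  obtain ⟨par, τ, h1, h2, h3, h4⟩ :=
    exists_spanning C E s t lam root hroot hs ht hconn I I1 I2 I3
  let T := (C.erase root).image par
  have hT : T ⊆ E := by
    intro e he
    obtain ⟨u, hu, rfl⟩ := Finset.mem_image.1 he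
    exact (h2 u (Finset.mem_of_mem_erase hu) (Finset.ne_of_mem_erase hu)).1
  have hTc : T.card + 1 = C.card := by
    rw [Finset.card_image_of_injOn, Finset.card_erase_add_one hroot]
    intro u hu u' hu' heq
    simp only [Finset.coe_erase, Set.mem_sdiff, Finset.mem_coe, Set.mem_singleton_iff] at hu hu'
    exact h3 u hu.1 hu.2 u' hu'.1 hu'.2 heq
  refine ⟨(E \ T).image fun e => (τ (t e))⁻¹ * lam e * τ (s e), τ, h1, ?_, ?_, ?_, h4⟩
  · have e1 := Finset.card_image_le (s := E \ T) (f := fun e => (τ (t e))⁻¹ * lam e * τ (s e))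
    have e2 := Finset.card_sdiff_add_card_eq_card hT
    omega
  · intro e he
    by_cases heT : e ∈ T
    · obtain ⟨u, hu, rfl⟩ := Finset.mem_image.1 heT
      rw [(h2 u (Finset.mem_of_mem_erase hu) (Finset.ne_of_mem_erase hu)).2.2]
      have : ∀ a b : G, (a * b)⁻¹ * a * b = 1 := by intro a b; group
      rw [this]
      exact Subgroup.one_mem _
    · apply Subgroup.subset_closure
      exact Finset.mem_coe.2 (Finset.mem_image.2 ⟨e, Finset.mem_sdiff.2 ⟨he, heT⟩, rfl⟩)
  · intro g hg
    obtain ⟨e, he, rfl⟩ := Finset.mem_image.1 hg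
    exact ⟨e, (Finset.mem_sdiff.1 he).1, rfl⟩

section
variable {α : Type*} [DecidableEq α]

/-- The first letter of a reduced word. -/
def hd (g : FreeGroup α) : Option (α × Bool) := g.toWord.head?

theorem hd_mul_of_norm_lt {w s : FreeGroup α} (h : s.norm < w.norm) : hd (w * s) = hd w := by
  have h1 := norm_inv_mul w (w * s)
  rw [inv_mul_cancel_left] at h1
  have h2 : w.norm ≤ (w * s).norm + s.norm := by
    have := FreeGroup.norm_mul_le (w * s) s⁻¹
    simpa using this
  have h3 : 1 ≤ wedgeFF w (w * s) := by omega
  obtain ⟨a, b, c⟩ := (le_wedgeFF_iff _ _ _).1 h3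
  unfold hd
  have : ∀ l : List (α × Bool), l.head? = (l.take 1).head? := by intro l; cases l <;> simp
  rw [this, ← c, ← this]

theorem hd_of_mul {x : α} {w : FreeGroup α} (h : hd w ≠ some (x, false)) :
    hd (FreeGroup.of x * w) = some (x, true) := by
  have : (FreeGroup.of x * w).toWord = (x, true) :: w.toWord := by
    have : FreeGroup.of x * w = FreeGroup.mk ((x, true) :: w.toWord) := by
      conv_lhs => rw [← FreeGroup.mk_toWord (x := w)]
      rw [FreeGroup.of, FreeGroup.mul_mk]; rfl
    rw [this, FreeGroup.toWord_mk, ← FreeGroup.isReduced_iff_reduce_eq]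
    have hr := FreeGroup.isReduced_toWord (x := w)
    unfold FreeGroup.IsReduced at *
    rw [List.isChain_cons]
    refine ⟨?_, hr⟩
    rintro ⟨y, b⟩ hy
    simp only
    rintro rfl
    unfold hd at h
    rw [Option.mem_def.1 hy] at h
    cases b <;> simp_all
  unfold hd
  rw [this]; rfl

open MulAction in
/-- A free group of rank `r` acting on a set `Ω`: a finite set of vertices has, up to orbits of
vertices with free stabilizer, at least as many points as the edges `ω — x • ω` it supports.
Each edge is assigned to one of its endpoints by means of the first letter of a group element
carrying a base point of the orbit to that endpoint. -/
theorem orbit_count [Fintype α] {Ω : Type*} [MulAction (FreeGroup α) Ω] (A : Finset Ω)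
    (Ax : α → Finset Ω) (hAx : ∀ x, Ax x ⊆ A) (hx : ∀ x, ∀ ω ∈ Ax x, FreeGroup.of x • ω ∈ A)
    (hcomm : ∀ ω ∈ A, ∀ g h : FreeGroup α, g • ω = ω → h • ω = ω → g * h = h * g)
    (Z : Finset Ω) (hZA : Z ⊆ A)
    (hZ : ∀ z ∈ Z, ∀ z' ∈ Z, ∀ g : FreeGroup α, g • z = z' → z = z' ∧ g = 1) :
    ∑ x, (Ax x).card + Z.card ≤ A.card := by
  classical
  let Q := Quotient (orbitRel (FreeGroup α) Ω)
  let mkQ : Ω → Q := fun ω => Quotient.mk _ ω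
  have mkQ_eq : ∀ {ω ω' : Ω}, mkQ ω = mkQ ω' ↔ ∃ g : FreeGroup α, g • ω' = ω := by
    intro ω ω'
    simp only [mkQ]
    rw [Quotient.eq (r := orbitRel (FreeGroup α) Ω), orbitRel_apply, mem_orbit_iff]
  -- base points of orbits, chosen in `Z` when possible
  have hr : ∃ r : Q → Ω, (∀ q, mkQ (r q) = q) ∧ ∀ z ∈ Z, r (mkQ z) = z := by
    refine ⟨fun q => if h : ∃ z ∈ Z, mkQ z = q then h.choose else q.out, ?_, ?_⟩
    · intro q
      dsimp only
      split_ifs with h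
      · exact h.choose_spec.2
      · exact Quotient.out_eq q
    · intro z hz
      have h : ∃ z' ∈ Z, mkQ z' = mkQ z := ⟨z, hz, rfl⟩
      simp only [dif_pos h]
      obtain ⟨g, hg⟩ := mkQ_eq.1 h.choose_spec.2
      exact (hZ z hz _ h.choose_spec.1 g hg).1.symm
  obtain ⟨r, hr1, hr2⟩ := hr
  have hh : ∀ ω : Ω, ∃ g : FreeGroup α, g • r (mkQ ω) = ω ∧ (r (mkQ ω) = ω → g = 1) := by
    intro ω
    by_cases hω : r (mkQ ω) = ω
    · exact ⟨1, by simp [hω], fun _ => rfl⟩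
    · obtain ⟨g, hg⟩ := mkQ_eq.1 (hr1 (mkQ ω)).symm
      exact ⟨g, hg, fun h => absurd h hω⟩
  choose h hh1 hh2 using hh
  let M : ℕ := A.sup fun ω => (h ω).norm
  have hM : ∀ ω ∈ A, (h ω).norm ≤ M := fun ω hω => Finset.le_sup (f := fun ω => (h ω).norm) hω
  have hu : ∀ q : Q, ∃ u : FreeGroup α, (∃ ω ∈ A, mkQ ω = q) →
      (∀ s : FreeGroup α, s • r q = r q → s * u = u * s) ∧
      ((∀ s : FreeGroup α, s • r q = r q → s = 1) → u = 1) ∧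
      ((¬ ∀ s : FreeGroup α, s • r q = r q → s = 1) → 3 * M + 1 < u.norm) := by
    intro q
    by_cases hq : ∃ ω ∈ A, mkQ ω = q
    swap
    · exact ⟨1, fun h => absurd h hq⟩
    obtain ⟨ω, hω, rfl⟩ := hq
    by_cases htriv : ∀ s : FreeGroup α, s • r (mkQ ω) = r (mkQ ω) → s = 1
    · exact ⟨1, fun _ => ⟨by simp, fun _ => rfl, fun h => absurd htriv h⟩⟩
    · have htriv' := htriv
      push Not at htriv'
      obtain ⟨z, hz1, hz2⟩ := htriv'
      obtain ⟨N, hN⟩ := exists_pow_norm_gt hz2 (3 * M + 1)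
      refine ⟨z ^ N, fun _ => ⟨?_, fun h => absurd h htriv, fun _ => hN N le_rfl⟩⟩
      intro s hs
      have hconj : ∀ s : FreeGroup α, s • r (mkQ ω) = r (mkQ ω) → (h ω * s * (h ω)⁻¹) • ω = ω := by
        intro s hs
        have e : (h ω)⁻¹ • ω = r (mkQ ω) := by rw [inv_smul_eq_iff, hh1]
        rw [mul_smul, mul_smul, e, hs, hh1]
      have := hcomm ω hω _ _ (hconj s hs) (hconj z hz1)
      have hc : s * z = z * s := by
        have e : h ω * (s * z) * (h ω)⁻¹ = h ω * (z * s) * (h ω)⁻¹ := by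
          calc _ = h ω * s * (h ω)⁻¹ * (h ω * z * (h ω)⁻¹) := by group
            _ = _ := this
            _ = _ := by group
        simpa using e
      exact (Commute.pow_right hc N : _)
  choose u hu using hu
  let w : Ω → FreeGroup α := fun ω => h ω * u (mkQ ω)
  have hwZ : ∀ z ∈ Z, w z = 1 := by
    intro z hz
    have h1 : h z = 1 := hh2 z (hr2 z hz)
    have h2 : u (mkQ z) = 1 := by
      apply (hu (mkQ z) ⟨z, hZA hz, rfl⟩).2.1
      intro s hs
      rw [hr2 z hz] at hs
      exact (hZ z hz z hz s hs).2
    simp [w, h1, h2]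
  have hedge : ∀ x, ∀ ω ∈ Ax x, hd (w ω) ≠ some (x, false) →
      hd (w (FreeGroup.of x • ω)) = some (x, true) := by
    intro x ω hω hne
    rw [← hd_of_mul hne]
    set ω' := FreeGroup.of x • ω with hω'
    have hq : mkQ ω' = mkQ ω := mkQ_eq.2 ⟨_, rfl⟩
    let s : FreeGroup α := (h ω')⁻¹ * FreeGroup.of x * h ω
    have hs : s • r (mkQ ω) = r (mkQ ω) := by
      have := hh1 ω'
      rw [hq] at this
      simp only [s, mul_smul, hh1]
      rw [inv_smul_eq_iff, this]
    have hA : ω ∈ A := hAx x hω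
    have hA' : ω' ∈ A := hx x ω hω
    obtain ⟨c1, c2, c3⟩ := hu (mkQ ω) ⟨ω, hA, rfl⟩
    have hw : FreeGroup.of x * w ω = w ω' * s := by
      simp only [w, hq]
      rw [mul_assoc (h ω'), ← c1 s hs]
      simp only [s]; group
    rw [hw]
    by_cases htriv : ∀ s : FreeGroup α, s • r (mkQ ω) = r (mkQ ω) → s = 1
    · rw [htriv s hs, mul_one]
    · have hbig := c3 htriv
      refine (hd_mul_of_norm_lt ?_).symm
      have n1 : s.norm ≤ M + 1 + M := by
        have a1 := FreeGroup.norm_mul_le ((h ω')⁻¹ * FreeGroup.of x) (h ω)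
        have a2 := FreeGroup.norm_mul_le (h ω')⁻¹ (FreeGroup.of x)
        rw [FreeGroup.norm_inv_eq, FreeGroup.norm_of] at a2
        have := hM ω hA
        have := hM ω' hA'
        simp only [s]
        omega
      have n2 : (u (mkQ ω)).norm ≤ M + (w ω').norm := by
        have a1 := FreeGroup.norm_mul_le (h ω')⁻¹ (w ω')
        simp only [w, inv_mul_cancel_left, FreeGroup.norm_inv_eq, hq] at a1 ⊢
        have := hM ω' hA'
        omega
      omega
  let Es : Finset ((_ : α) × Ω) := Finset.univ.sigma Ax
  let f : ((_ : α) × Ω) → Ω := fun e =>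
    if hd (w e.2) = some (e.1, false) then e.2 else FreeGroup.of e.1 • e.2
  have hf : ∀ e ∈ Es, f e ∈ A ∧
      ((hd (w (f e)) = some (e.1, false) ∧ e.2 = f e) ∨
        (hd (w (f e)) = some (e.1, true) ∧ e.2 = (FreeGroup.of e.1)⁻¹ • f e)) := by
    rintro ⟨x, ω⟩ he
    simp only [Es, Finset.mem_sigma, Finset.mem_univ, true_and] at he
    by_cases hc : hd (w ω) = some (x, false)
    · simp only [f, hc, if_true]
      exact ⟨hAx x he, Or.inl ⟨trivial, trivial⟩⟩
    · simp only [f, hc, if_false]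
      exact ⟨hx x ω he, Or.inr ⟨hedge x ω he hc, by simp⟩⟩
  have hinj : Set.InjOn f Es := by
    rintro ⟨x, ω⟩ he ⟨x', ω'⟩ he' heq
    have a := (hf _ he).2
    have b := (hf _ he').2
    rw [← heq] at b
    rcases a with ⟨a1, a2⟩ | ⟨a1, a2⟩ <;> rcases b with ⟨b1, b2⟩ | ⟨b1, b2⟩ <;>
      rw [a1] at b1 <;> simp only [Option.some.injEq, Prod.mk.injEq] at b1 a2 b2
    · obtain ⟨rfl, _⟩ := b1; rw [a2, b2]
    · exact absurd b1.2 (by simp)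
    · exact absurd b1.2 (by simp)
    · obtain ⟨rfl, _⟩ := b1; rw [a2, b2]
  have hdisj : Disjoint (Es.image f) Z := by
    rw [Finset.disjoint_left]
    intro y hy hyZ
    obtain ⟨e, he, rfl⟩ := Finset.mem_image.1 hy
    have := (hf e he).2
    rw [hwZ _ hyZ] at this
    simp [hd] at this
  have : (Es.image f ∪ Z).card ≤ A.card := by
    apply Finset.card_le_card
    apply Finset.union_subset _ hZA
    intro y hy
    obtain ⟨e, he, rfl⟩ := Finset.mem_image.1 hy
    exact (hf e he).1
  rw [Finset.card_union_of_disjoint hdisj, Finset.card_image_of_injOn hinj,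
    Finset.card_sigma] at this
  exact this

end

/-! ### The index inequality for actions of free groups -/

section IndexInequality

open scoped Pointwise

/-- Induction on a free group element along its reduced word, from the right: prefixes of the
inverse, so that every intermediate element has smaller norm. -/
theorem norm_induction {α : Type*} [DecidableEq α] {P : FreeGroup α → Prop} (h1 : P 1)
    (hmul : ∀ (x : α) (g : FreeGroup α), (FreeGroup.of x * g).norm = g.norm + 1 → P g →
      P (FreeGroup.of x * g))
    (hinv : ∀ (x : α) (g : FreeGroup α), ((FreeGroup.of x)⁻¹ * g).norm = g.norm + 1 → P g →
      P ((FreeGroup.of x)⁻¹ * g)) : ∀ g, P g := by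
  have key : ∀ (l : List (α × Bool)), FreeGroup.IsReduced l → P (FreeGroup.mk l) := by
    intro l
    induction l with
    | nil => intro _; exact h1
    | cons a l ih =>
      intro hr
      have hl : FreeGroup.IsReduced l := by
        unfold FreeGroup.IsReduced at *
        exact (List.isChain_cons.1 hr).2
      have n1 : (FreeGroup.mk l).norm = l.length := by
        unfold FreeGroup.norm
        rw [FreeGroup.toWord_mk, FreeGroup.isReduced_iff_reduce_eq.1 hl]
      have n2 : (FreeGroup.mk (a :: l)).norm = l.length + 1 := by
        unfold FreeGroup.norm
        rw [FreeGroup.toWord_mk, FreeGroup.isReduced_iff_reduce_eq.1 hr]; rfl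
      rcases a with ⟨x, b⟩
      cases b with
      | true =>
        have e : FreeGroup.mk ((x, true) :: l) = FreeGroup.of x * FreeGroup.mk l := rfl
        rw [e] at n2 ⊢
        exact hmul x _ (by omega) (ih hl)
      | false =>
        have e : FreeGroup.mk ((x, false) :: l) = (FreeGroup.of x)⁻¹ * FreeGroup.mk l := rfl
        rw [e] at n2 ⊢
        exact hinv x _ (by omega) (ih hl)
  intro g
  rw [← FreeGroup.mk_toWord (x := g)]
  exact key _ FreeGroup.isReduced_toWord

namespace Dendron

theorem smul_germ {G X : Type*} [Group G] [MulAction G X] {D : X → X → X → Prop}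
    (hD : ∀ (g : G) q a b, D q a b → D (g • q) (g • a) (g • b)) (g : G) (v y : X) :
    g • germ D v y = germ D (g • v) (g • y) := by
  unfold germ
  rw [Prod.smul_mk]
  congr 1
  ext z
  rw [Set.mem_smul_set_iff_inv_smul_mem]
  constructor
  · intro h
    have := hD g _ _ _ h
    rwa [smul_inv_smul] at this
  · intro h
    have := hD g⁻¹ _ _ _ h
    rwa [inv_smul_smul, inv_smul_smul] at this

/-- The index inequality: `F` is free of rank `n` and acts on `X` preserving directions, with
commutative stabilizers of germs. The points `P i` lie in distinct orbits, and the germs at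
`P (base k)` towards `pt k` have trivial stabilizers and lie in distinct orbits. Every finite
set of elements of the stabilizer of `P i` is contained in a subgroup of this stabilizer
generated by `S i`, with the bound below on the cardinality of `S i`.
The proof computes the Euler characteristics of the finite subtree spanned by a large finite
piece of the orbits of the points, and of its intersections with its translates. -/
theorem index_inequality {n : ℕ} (hn : 1 ≤ n) {X : Type*} [MulAction (FreeGroup (Fin n)) X]
    {D : X → X → X → Prop} (h : Dendron D)
    (hD : ∀ (g : FreeGroup (Fin n)) q a b, D q a b → D (g • q) (g • a) (g • b))
    (hstab : ∀ (v p : X) (g g' : FreeGroup (Fin n)), g • v = v → g' • v = v → D v (g • p) p →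
      D v (g' • p) p → g * g' = g' * g)
    {ι : Type*} [Fintype ι] [Nonempty ι] (P : ι → X)
    (hP : ∀ i j (g : FreeGroup (Fin n)), g • P i = P j → i = j)
    {κ : Type*} [Fintype κ] (base : κ → ι) (pt : κ → X) (hpt : ∀ k, pt k ≠ P (base k))
    (hpt' : ∀ k, ∃ (g : FreeGroup (Fin n)) (j : ι), pt k = g • P j)
    (hκ : ∀ k k' (g : FreeGroup (Fin n)), g • P (base k) = P (base k') →
      D (P (base k')) (g • pt k) (pt k') → k = k' ∧ g = 1)
    (Z : ι → Finset (FreeGroup (Fin n))) (hZ : ∀ i, ∀ z ∈ Z i, z • P i = P i) :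
    ∃ S : ι → Finset (FreeGroup (Fin n)),
      (∀ i, (Z i : Set (FreeGroup (Fin n))) ⊆ Subgroup.closure (S i : Set (FreeGroup (Fin n)))) ∧
      (∀ i, ∀ s ∈ S i, s • P i = P i) ∧
      ∑ i, (2 * ((S i).card : ℤ) - 2) + (Fintype.card κ : ℤ) ≤ 2 * (n : ℤ) - 2 := by
  classical
  have : Nonempty (Fin n) := ⟨⟨0, hn⟩⟩
  have : Nonempty X := ⟨P (Classical.arbitrary ι)⟩
  choose gk jk hgk using hpt'
  -- a bound for all the group elements involved
  obtain ⟨N, hN1, hN2, hN3⟩ : ∃ N : ℕ, 1 ≤ N ∧ (∀ k, (gk k).norm ≤ N) ∧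
      ∀ i, ∀ z ∈ Z i, z.norm ≤ N := by
    refine ⟨1 + (Finset.univ.sup fun k => (gk k).norm) +
      Finset.univ.sup (fun i => (Z i).sup fun z => z.norm), by omega, ?_, ?_⟩
    · intro k
      have := Finset.le_sup (f := fun k => (gk k).norm) (Finset.mem_univ k)
      omega
    · intro i z hz
      have h1 := Finset.le_sup (f := fun z : FreeGroup (Fin n) => z.norm) hz
      have h2 := Finset.le_sup (f := fun i => (Z i).sup fun z => z.norm) (Finset.mem_univ i)
      omega
  let ball : Finset (FreeGroup (Fin n)) := (finite_ball N).toFinset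
  have hball : ∀ g, g ∈ ball ↔ g.norm ≤ N := by intro g; simp [ball]
  let B : Finset X := (ball ×ˢ (Finset.univ : Finset ι)).image fun p => p.1 • P p.2
  have hB : ∀ v, v ∈ B ↔ ∃ g : FreeGroup (Fin n), g.norm ≤ N ∧ ∃ i, g • P i = v := by
    intro v
    simp [B, hball]
  let V := h.hull B
  have hBV : B ⊆ V := h.subset_hull B
  have hVmed : MedClosed D (V : Set X) := h.hull_medClosed B
  have hPB : ∀ i, P i ∈ B := fun i => (hB _).2 ⟨1, by simp, i, by simp⟩
  have hDiff : ∀ (g : FreeGroup (Fin n)) q a b, D (g • q) (g • a) (g • b) ↔ D q a b := by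
    intro g q a b
    refine ⟨fun hd => ?_, hD g q a b⟩
    simpa using hD g⁻¹ _ _ _ hd
  let Vx : Fin n → Finset X := fun x => V.filter fun v => FreeGroup.of x • v ∈ V
  have hVx : ∀ x v, v ∈ Vx x ↔ v ∈ V ∧ FreeGroup.of x • v ∈ V := by intro x v; simp [Vx]
  have hVxsub : ∀ x, Vx x ⊆ V := fun x => Finset.filter_subset _ _
  have hVxne : ∀ x, (Vx x).Nonempty := by
    intro x
    obtain ⟨i⟩ : Nonempty ι := inferInstance
    refine ⟨P i, (hVx _ _).2 ⟨hBV (hPB i), hBV ((hB _).2 ⟨FreeGroup.of x, ?_, i, rfl⟩)⟩⟩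
    rw [FreeGroup.norm_of]; exact hN1
  have hVxmed : ∀ x, MedClosed D (Vx x : Set X) := by
    intro x a ha b hb c hc m hm
    simp only [Finset.mem_coe, hVx] at ha hb hc ⊢
    refine ⟨hVmed a ha.1 b hb.1 c hc.1 m hm,
      hVmed _ ha.2 _ hb.2 _ hc.2 _ ⟨?_, ?_, ?_⟩⟩ <;> rw [hDiff]
    · exact hm.1
    · exact hm.2.1
    · exact hm.2.2
  -- the local contribution of a vertex
  let Φ : X → ℤ := fun v =>
    (∑ x : Fin n, if FreeGroup.of x • v ∈ V then (2 - ((germsAt D (Vx x) v).card : ℤ)) else 0)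
      - 2 + ((germsAt D V v).card : ℤ)
  have htotal : ∑ v ∈ V, Φ v = 2 * (n : ℤ) - 2 := by
    have t1 := h.sum_germsAt _ V rfl hVmed ⟨P (Classical.arbitrary ι), hBV (hPB _)⟩
    have t2 : ∀ x, ∑ v ∈ V,
        (if FreeGroup.of x • v ∈ V then (2 - ((germsAt D (Vx x) v).card : ℤ)) else 0) = 2 := by
      intro x
      have t3 := h.sum_germsAt _ (Vx x) rfl (hVxmed x) (hVxne x)
      rw [← Finset.sum_filter]
      change ∑ v ∈ Vx x, _ = _
      rw [Finset.sum_sub_distrib, Finset.sum_const, nsmul_eq_mul]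
      zify at t3
      linarith
    simp only [Φ]
    rw [Finset.sum_add_distrib, Finset.sum_sub_distrib, Finset.sum_comm,
      Finset.sum_congr rfl (fun x _ => t2 x)]
    simp only [Finset.sum_const, nsmul_eq_mul, Finset.card_univ, Fintype.card_fin]
    zify at t1
    linarith
  -- components of the graph
  let R : X → X → Prop := fun u v => u ∈ V ∧ v ∈ V ∧ ∃ x : Fin n, FreeGroup.of x • u = v
  let comp : X → Finset X := fun v => V.filter fun u => Relation.EqvGen R v u
  have hcompself : ∀ v ∈ V, v ∈ comp v := by
    intro v hv
    simp only [comp, Finset.mem_filter]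
    exact ⟨hv, Relation.EqvGen.refl _⟩
  have hcompeq : ∀ {u v}, Relation.EqvGen R v u → comp u = comp v := by
    intro u v huv
    ext w
    simp only [comp, Finset.mem_filter]
    exact ⟨fun hw => ⟨hw.1, huv.trans _ _ _ hw.2⟩, fun hw => ⟨hw.1, (huv.symm).trans _ _ _ hw.2⟩⟩
  have hcompiff : ∀ u ∈ V, ∀ v, comp u = comp v ↔ u ∈ comp v := by
    intro u hu v
    constructor
    · intro heq; rw [← heq]; exact hcompself u hu
    · intro hm
      exact hcompeq (Finset.mem_filter.1 hm).2
  have hcompsub : ∀ v, comp v ⊆ V := fun v => Finset.filter_subset _ _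
  have hclosed : ∀ v, ∀ u ∈ V, ∀ x : Fin n, FreeGroup.of x • u ∈ V →
      (u ∈ comp v ↔ FreeGroup.of x • u ∈ comp v) := by
    intro v u hu x hxu
    have hR : Relation.EqvGen R u (FreeGroup.of x • u) := Relation.EqvGen.rel _ _ ⟨hu, hxu, x, rfl⟩
    rw [← hcompiff u hu, ← hcompiff _ hxu, hcompeq hR]
  have hconn : ∀ v ∈ V, ∀ U ⊆ comp v, v ∈ U → (∀ u ∈ comp v, ∀ x : Fin n,
      FreeGroup.of x • u ∈ V → (u ∈ U ↔ FreeGroup.of x • u ∈ U)) → U = comp v := by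
    intro v hv U hU hvU hcl
    apply Finset.Subset.antisymm hU
    have : ∀ a b, Relation.EqvGen R a b → (a ∈ U ↔ b ∈ U) := by
      intro a b hab
      induction hab with
      | rel a b hr =>
        obtain ⟨ha, hb, x, rfl⟩ := hr
        by_cases hac : a ∈ comp v
        · exact hcl a hac x hb
        · have hbc : FreeGroup.of x • a ∉ comp v := by rwa [← hclosed v a ha x hb]
          exact ⟨fun h => absurd (hU h) hac, fun h => absurd (hU h) hbc⟩
      | refl => exact Iff.rfl
      | symm _ _ _ ih => exact ih.symm
      | trans _ _ _ _ _ ih1 ih2 => exact ih1.trans ih2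
    intro u hu
    exact (this v u (Finset.mem_filter.1 hu).2).1 hvU
  have horbit : ∀ a b, Relation.EqvGen R a b → ∃ g : FreeGroup (Fin n), g • a = b := by
    intro a b hab
    induction hab with
    | rel a b hr =>
      obtain ⟨_, _, x, hx⟩ := hr
      exact ⟨_, hx⟩
    | refl => exact ⟨1, one_smul _ _⟩
    | symm _ _ _ ih =>
      obtain ⟨g, hg⟩ := ih
      exact ⟨g⁻¹, by rw [← hg, inv_smul_smul]⟩
    | trans _ _ _ _ _ ih1 ih2 =>
      obtain ⟨g, hg⟩ := ih1
      obtain ⟨g', hg'⟩ := ih2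
      exact ⟨g' * g, by rw [mul_smul, hg, hg']⟩
  -- the orbit count for the germs based in one component
  have hgerms : ∀ v, ∀ Zs : Finset (X × Set X), (∀ z ∈ Zs, ∃ u ∈ comp v, z ∈ germsAt D V u) →
      (∀ z ∈ Zs, ∀ z' ∈ Zs, ∀ g : FreeGroup (Fin n), g • z = z' → z = z' ∧ g = 1) →
      (Zs.card : ℤ) ≤ ∑ u ∈ comp v, ((germsAt D V u).card -
        ∑ x : Fin n, if FreeGroup.of x • u ∈ V then ((germsAt D (Vx x) u).card : ℤ) else 0) := by
    intro v Zs hZs1 hZs2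
    have hdis : ∀ (W : Finset X) (C : Finset X),
        (C.biUnion (germsAt D W)).card = ∑ u ∈ C, (germsAt D W u).card := by
      intro W C
      apply Finset.card_biUnion
      intro a _ b _ hab
      rw [Function.onFun, Finset.disjoint_left]
      intro g hg hg'
      obtain ⟨y, _, _, rfl⟩ := mem_germsAt.1 hg
      obtain ⟨y', _, _, hy'⟩ := mem_germsAt.1 hg'
      exact hab (congrArg Prod.fst hy').symm
    have := orbit_count ((comp v).biUnion (germsAt D V))
      (fun x => ((comp v).filter fun u => FreeGroup.of x • u ∈ V).biUnion (germsAt D (Vx x)))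
      ?_ ?_ ?_ Zs ?_ hZs2
    · rw [hdis] at this
      simp only [hdis] at this
      zify at this
      rw [Finset.sum_sub_distrib, Finset.sum_comm]
      simp only [← Finset.sum_filter]
      linarith
    · intro x g hg
      simp only [Finset.mem_biUnion, Finset.mem_filter] at hg ⊢
      obtain ⟨u, hu, hgu⟩ := hg
      exact ⟨u, hu.1, germsAt_mono (hVxsub x) u hgu⟩
    · intro x g hg
      simp only [Finset.mem_biUnion, Finset.mem_filter] at hg ⊢
      obtain ⟨u, ⟨hu, hxu⟩, hgu⟩ := hg
      refine ⟨FreeGroup.of x • u, (hclosed v u (hcompsub v hu) x hxu).1 hu, ?_⟩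
      obtain ⟨y, hy, hyu, rfl⟩ := mem_germsAt.1 hgu
      rw [smul_germ hD, mem_germsAt]
      exact ⟨_, ((hVx _ _).1 hy).2, by simpa using hyu, rfl⟩
    · intro ω hω g g' hg hg'
      simp only [Finset.mem_biUnion] at hω
      obtain ⟨u, hu, hωu⟩ := hω
      obtain ⟨y, hy, hyu, rfl⟩ := mem_germsAt.1 hωu
      have key : ∀ g : FreeGroup (Fin n), g • germ D u y = germ D u y →
          g • u = u ∧ D u (g • y) y := by
        intro g hg
        rw [smul_germ hD] at hg
        have h1 : g • u = u := congrArg Prod.fst hg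
        rw [h1] at hg
        have h2 : g • y ≠ u := by
          intro he
          rw [← h1] at he
          exact hyu (MulAction.injective g he)
        exact ⟨h1, (h.germ_eq_iff h2).1 hg⟩
      obtain ⟨a1, a2⟩ := key g hg
      obtain ⟨b1, b2⟩ := key g' hg'
      exact hstab u y g g' a1 b1 a2 b2
    · intro z hz
      obtain ⟨u, hu, hzu⟩ := hZs1 z hz
      exact Finset.mem_biUnion.2 ⟨u, hu, hzu⟩
  -- the edges of one component
  let Ed : X → Finset (Fin n × X) := fun v =>
    (Finset.univ ×ˢ comp v).filter fun e => FreeGroup.of e.1 • e.2 ∈ V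
  have hEd : ∀ v e, e ∈ Ed v ↔ e.2 ∈ comp v ∧ FreeGroup.of e.1 • e.2 ∈ V := by
    intro v e; simp [Ed]
  have hEdsum : ∀ v (f : Fin n → X → ℤ), ∑ e ∈ Ed v, f e.1 e.2 =
      ∑ u ∈ comp v, ∑ x : Fin n, if FreeGroup.of x • u ∈ V then f x u else 0 := by
    intro v f
    simp only [Ed]
    rw [Finset.sum_filter, Finset.sum_product_right]
  have hEdcard : ∀ v, ((Ed v).card : ℤ) = ∑ u ∈ comp v, ∑ x : Fin n,
      if FreeGroup.of x • u ∈ V then (1 : ℤ) else 0 := by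
    intro v
    rw [← hEdsum v (fun _ _ => 1)]; simp
  have hΦ : ∀ v, ∑ u ∈ comp v, Φ u = 2 * (((Ed v).card : ℤ) - (comp v).card) +
      ∑ u ∈ comp v, ((germsAt D V u).card -
        ∑ x : Fin n, if FreeGroup.of x • u ∈ V then ((germsAt D (Vx x) u).card : ℤ) else 0) := by
    intro v
    have e1 : ∀ u, Φ u = 2 * (∑ x : Fin n, if FreeGroup.of x • u ∈ V then (1 : ℤ) else 0) - 2 * 1
        + ((germsAt D V u).card -
        ∑ x : Fin n, if FreeGroup.of x • u ∈ V then ((germsAt D (Vx x) u).card : ℤ) else 0) := by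
      intro u
      have : (∑ x : Fin n,
          if FreeGroup.of x • u ∈ V then (2 - ((germsAt D (Vx x) u).card : ℤ)) else 0) =
          2 * (∑ x : Fin n, if FreeGroup.of x • u ∈ V then (1 : ℤ) else 0) -
          ∑ x : Fin n, if FreeGroup.of x • u ∈ V then ((germsAt D (Vx x) u).card : ℤ) else 0 := by
        rw [Finset.mul_sum, ← Finset.sum_sub_distrib]
        refine Finset.sum_congr rfl fun x _ => ?_
        split_ifs <;> ring
      simp only [Φ, this]
      ring
    rw [Finset.sum_congr rfl (fun u _ => e1 u), Finset.sum_add_distrib, Finset.sum_sub_distrib,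
      ← Finset.mul_sum, ← hEdcard, ← Finset.mul_sum]
    simp
    ring
  have hspan : ∀ v ∈ V, ∀ U ⊆ comp v, v ∈ U → (∀ e ∈ Ed v, (Prod.snd e) ∈ U ↔
      (FreeGroup.of e.1 • e.2) ∈ U) → U = comp v := by
    intro v hv U hU hvU hcl
    exact hconn v hv U hU hvU fun u hu x hxu => hcl (x, u) ((hEd v _).2 ⟨hu, hxu⟩)
  have hEdt : ∀ v, ∀ e ∈ Ed v, FreeGroup.of e.1 • e.2 ∈ comp v := by
    intro v e he
    obtain ⟨h1, h2⟩ := (hEd v e).1 he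
    exact (hclosed v _ (hcompsub v h1) _ h2).1 h1
  have hreach : ∀ i (g : FreeGroup (Fin n)), g.norm ≤ N → g • P i ∈ comp (P i) := by
    intro i g
    induction g using norm_induction with
    | h1 => intro _; rw [one_smul]; exact hcompself _ (hBV (hPB i))
    | hmul x g hn ih =>
      intro hN
      rw [mul_smul]
      refine (hclosed _ _ (hBV ((hB _).2 ⟨g, by omega, i, rfl⟩)) x
        (hBV ((hB _).2 ⟨FreeGroup.of x * g, hN, i, mul_smul _ _ _⟩))).1 (ih (by omega))
    | hinv x g hn ih =>
      intro hN
      refine (hclosed _ _ (hBV ((hB _).2 ⟨_, hN, i, rfl⟩)) x ?_).2 ?_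
      · rw [mul_smul, smul_inv_smul]
        exact hBV ((hB _).2 ⟨g, by omega, i, rfl⟩)
      · rw [mul_smul, smul_inv_smul]
        exact ih (by omega)
  -- components without base points
  have hother : ∀ v ∈ V, (∀ i, P i ∉ comp v) → 0 ≤ ∑ u ∈ comp v, Φ u := by
    intro v hv hno
    have hNB : ∀ u ∈ comp v, u ∉ B := by
      intro u hu huB
      obtain ⟨g, hg, i, rfl⟩ := (hB u).1 huB
      apply hno i
      rw [← hcompiff _ (hBV (hPB i)), ← (hcompiff _ (hcompsub v hu) v).2 hu]
      exact ((hcompiff _ (hcompsub v hu) _).2 (hreach i g hg)).symm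
    have h3 : 3 ≤ (germsAt D V v).card :=
      h.three_le_germsAt hv (hNB v (hcompself v hv))
    rw [hΦ]
    by_cases hle : (comp v).card ≤ (Ed v).card
    · have := hgerms v ∅ (by simp) (by simp)
      simp only [Finset.card_empty, Nat.cast_zero] at this
      have hle' : ((comp v).card : ℤ) ≤ (Ed v).card := by exact_mod_cast hle
      linarith
    · obtain ⟨par, τ, _, h2, h4, _⟩ := exists_spanning (G := FreeGroup (Fin n))
        (κ := Fin n × X) (comp v) (Ed v) Prod.snd
        (fun e => FreeGroup.of e.1 • e.2) (fun e => FreeGroup.of e.1) v (hcompself v hv)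
        (fun e he => ((hEd v e).1 he).1) (hEdt v) (hspan v hv) (fun _ _ => True) trivial
        (fun _ _ _ _ => trivial) (fun _ _ _ _ => trivial)
      have hpinj : Set.InjOn par ((comp v).erase v) := by
        intro u hu u' hu' heq
        simp only [Finset.coe_erase, Set.mem_sdiff, Finset.mem_coe, Set.mem_singleton_iff]
          at hu hu'
        exact h4 u hu.1 hu.2 u' hu'.1 hu'.2 heq
      have hcT : (((comp v).erase v).image par).card + 1 = (comp v).card := by
        rw [Finset.card_image_of_injOn hpinj, Finset.card_erase_add_one (hcompself v hv)]
      have hTE : ((comp v).erase v).image par ⊆ Ed v := by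
        intro e he
        obtain ⟨u, hu, rfl⟩ := Finset.mem_image.1 he
        exact (h2 u (Finset.mem_of_mem_erase hu) (Finset.ne_of_mem_erase hu)).1
      have hTeq : ((comp v).erase v).image par = Ed v :=
        Finset.eq_of_subset_of_card_le hTE (by omega)
      have hsum : ∑ u ∈ comp v, ∑ x : Fin n,
          (if FreeGroup.of x • u ∈ V then ((germsAt D (Vx x) u).card : ℤ) else 0) ≤
          ∑ u ∈ (comp v).erase v, ((germsAt D V u).card : ℤ) := by
        rw [← hEdsum v (fun x u => ((germsAt D (Vx x) u).card : ℤ)), ← hTeq,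
          Finset.sum_image hpinj]
        refine Finset.sum_le_sum fun u hu => ?_
        obtain ⟨_, hinc, _⟩ := h2 u (Finset.mem_of_mem_erase hu) (Finset.ne_of_mem_erase hu)
        have : (germsAt D (Vx (par u).1) (par u).2).card ≤ (germsAt D V u).card := by
          rcases hinc with h' | h'
          · rw [h']
            exact Finset.card_le_card (germsAt_mono (hVxsub _) u)
          · refine Finset.card_le_card_of_injOn (fun g => FreeGroup.of (par u).1 • g) ?_ ?_
            · intro g hg
              obtain ⟨y, hy, hyu, rfl⟩ := mem_germsAt.1 hg
              show FreeGroup.of (par u).1 • germ D (par u).2 y ∈ germsAt D V u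
              have hne : FreeGroup.of (par u).1 • y ≠ u := by
                intro hc
                exact hyu (MulAction.injective (FreeGroup.of (par u).1) (hc.trans h'.symm))
              rw [smul_germ hD, h', mem_germsAt]
              exact ⟨_, ((hVx _ _).1 hy).2, hne, rfl⟩
            · exact fun a _ b _ hab => MulAction.injective _ hab
        exact_mod_cast this
      rw [Finset.sum_sub_distrib, ← Finset.add_sum_erase _ _ (hcompself v hv)]
      have e1 : ((Ed v).card : ℤ) + 1 = (comp v).card := by
        rw [← hTeq]; exact_mod_cast hcT
      have e2 : (3 : ℤ) ≤ (germsAt D V v).card := by exact_mod_cast h3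
      linarith
  -- components of the base points
  have hbase : ∀ i, ∃ S : Finset (FreeGroup (Fin n)),
      (Z i : Set (FreeGroup (Fin n))) ⊆ Subgroup.closure (S : Set (FreeGroup (Fin n))) ∧
      (∀ s ∈ S, s • P i = P i) ∧
      2 * (S.card : ℤ) - 2 + ((Finset.univ.filter fun k => base k = i).card : ℤ) ≤
        ∑ u ∈ comp (P i), Φ u := by
    intro i
    obtain ⟨S, τ, hτ1, hScard, hSmem, hSform, hτI⟩ := exists_loop_gens (G := FreeGroup (Fin n))
      (κ := Fin n × X) (comp (P i)) (Ed (P i)) Prod.snd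
      (fun e => FreeGroup.of e.1 • e.2) (fun e => FreeGroup.of e.1) (P i)
      (hcompself _ (hBV (hPB i))) (fun e he => ((hEd _ e).1 he).1) (hEdt _)
      (hspan _ (hBV (hPB i))) (fun u g => g • P i = u) (one_smul _ _)
      (fun e _ g hg => by rw [mul_smul, hg])
      (fun e _ g hg => by rw [mul_smul, hg, inv_smul_smul])
    have hpath : ∀ g : FreeGroup (Fin n), g.norm ≤ N →
        (τ (g • P i))⁻¹ * g ∈ Subgroup.closure (S : Set (FreeGroup (Fin n))) := by
      intro g
      induction g using norm_induction with
      | h1 => intro _; rw [one_smul, hτ1]; simp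
      | hmul x g hn ih =>
        intro hN
        have hg : g • P i ∈ comp (P i) := hreach i g (by omega)
        have he := hSmem (x, g • P i) ((hEd _ _).2 ⟨hg, by
          rw [← mul_smul]; exact hcompsub _ (hreach i _ hN)⟩)
        have := Subgroup.mul_mem _ he (ih (by omega))
        rw [mul_smul]
        convert this using 1
        group
      | hinv x g hn ih =>
        intro hN
        have hg : ((FreeGroup.of x)⁻¹ * g) • P i ∈ comp (P i) := hreach i _ hN
        have he := hSmem (x, ((FreeGroup.of x)⁻¹ * g) • P i) ((hEd _ _).2 ⟨hg, by
          rw [← mul_smul, mul_inv_cancel_left]; exact hcompsub _ (hreach i g (by omega))⟩)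
        have := Subgroup.mul_mem _ (Subgroup.inv_mem _ he) (ih (by omega))
        rw [← mul_smul (FreeGroup.of x), mul_inv_cancel_left] at this
        convert this using 1
        group
    refine ⟨S, ?_, ?_, ?_⟩
    · intro z hz
      have := hpath z (hN3 i z hz)
      rw [hZ i z hz, hτ1] at this
      simpa using this
    · intro g hg
      obtain ⟨e, he, rfl⟩ := hSform g hg
      have e1 := hτI _ ((hEd _ e).1 he).1
      have e2 := hτI _ (hEdt _ e he)
      rw [mul_smul, mul_smul, e1, inv_smul_eq_iff, e2]
    · have hne : ∀ k ∈ Finset.univ.filter (fun k => base k = i), pt k ≠ P i := by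
        intro k hk
        have : base k = i := by simpa using hk
        rw [← this]; exact hpt k
      have key : ∀ k ∈ Finset.univ.filter (fun k => base k = i),
          ∀ k' ∈ Finset.univ.filter (fun k => base k = i), ∀ g : FreeGroup (Fin n),
          g • germ D (P i) (pt k) = germ D (P i) (pt k') → k = k' ∧ g = 1 := by
        intro k hk k' hk' g hg
        have hb : base k = i := by simpa using hk
        have hb' : base k' = i := by simpa using hk'
        rw [smul_germ hD] at hg
        have h1 : g • P i = P i := congrArg Prod.fst hg
        rw [h1] at hg
        have h2 : g • pt k ≠ P i := by
          intro he
          rw [← h1] at he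
          exact hne k hk (MulAction.injective g he)
        apply hκ k k' g
        · rw [hb, hb', h1]
        · rw [hb']; exact (h.germ_eq_iff h2).1 hg
      have := hgerms (P i)
        ((Finset.univ.filter fun k => base k = i).image fun k => germ D (P i) (pt k)) ?_ ?_
      · rw [Finset.card_image_of_injOn] at this
        · rw [hΦ]
          have : (S.card : ℤ) + (comp (P i)).card ≤ (Ed (P i)).card + 1 := by
            exact_mod_cast hScard
          linarith
        · intro k hk k' hk' heq
          refine (key k hk k' hk' 1 ?_).1
          rw [one_smul]; exact heq
      · intro z hz
        obtain ⟨k, hk, rfl⟩ := Finset.mem_image.1 hz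
        refine ⟨P i, hcompself _ (hBV (hPB i)), mem_germsAt.2 ⟨pt k, ?_, hne k hk, rfl⟩⟩
        exact hBV ((hB _).2 ⟨gk k, hN2 k, jk k, (hgk k).symm⟩)
      · intro z hz z' hz' g hg
        obtain ⟨k, hk, rfl⟩ := Finset.mem_image.1 hz
        obtain ⟨k', hk', rfl⟩ := Finset.mem_image.1 hz'
        obtain ⟨rfl, hg1⟩ := key k hk k' hk' g hg
        exact ⟨rfl, hg1⟩
  choose S hS1 hS2 hS3 using hbase
  refine ⟨S, hS1, hS2, ?_⟩
  have hcard : (Fintype.card κ : ℤ) =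
      ∑ i, ((Finset.univ.filter fun k => base k = i).card : ℤ) := by
    have := Finset.card_eq_sum_card_fiberwise (f := base) (s := Finset.univ) (t := Finset.univ)
      (fun _ _ => Finset.mem_univ _)
    rw [Finset.card_univ] at this
    exact_mod_cast this
  rw [hcard, ← Finset.sum_add_distrib, ← htotal]
  refine (Finset.sum_le_sum fun i _ => hS3 i).trans ?_
  have hfib : ∑ v ∈ V, Φ v = ∑ C ∈ V.image comp, ∑ u ∈ C, Φ u := by
    rw [← Finset.sum_fiberwise_of_maps_to (g := comp) (t := V.image comp)
      (fun v hv => Finset.mem_image_of_mem _ hv)]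
    refine Finset.sum_congr rfl fun C hC => ?_
    obtain ⟨v, hv, rfl⟩ := Finset.mem_image.1 hC
    refine Finset.sum_congr ?_ fun _ _ => rfl
    ext u
    simp only [Finset.mem_filter]
    constructor
    · rintro ⟨hu, he⟩; exact (hcompiff u hu v).1 he
    · intro hu; exact ⟨hcompsub v hu, (hcompiff u (hcompsub v hu) v).2 hu⟩
  have hinj : Function.Injective fun i => comp (P i) := by
    intro i j hij
    have : P i ∈ comp (P j) := (hcompiff _ (hBV (hPB i)) _).1 hij
    obtain ⟨g, hg⟩ := horbit _ _ (Finset.mem_filter.1 this).2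
    exact (hP j i g hg).symm
  rw [hfib, ← Finset.sum_image (s := Finset.univ) (g := fun i => comp (P i))
    (f := fun C => ∑ u ∈ C, Φ u) (fun a _ b _ hab => hinj hab)]
  apply Finset.sum_le_sum_of_subset_of_nonneg
  · intro C hC
    obtain ⟨i, _, rfl⟩ := Finset.mem_image.1 hC
    exact Finset.mem_image_of_mem _ (hBV (hPB i))
  · intro C hC hC'
    obtain ⟨v, hv, rfl⟩ := Finset.mem_image.1 hC
    apply hother v hv
    intro i hi
    apply hC'
    refine Finset.mem_image.2 ⟨i, Finset.mem_univ _, ?_⟩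
    exact (hcompiff _ (hBV (hPB i)) v).2 hi

end Dendron

end IndexInequality

/-! ### The limit tree of a sequence of actions on the Cayley tree -/

/-- If `g` moves `q` by at most `R` and `g p`, `p` share their first `M` steps when seen from `q`,
then `g` translates the middle part of the segment `[q, p]` along itself. -/
theorem exists_shift {q p g : FreeGroup α} {R M : ℕ} (hR : dist1 q (g * q) ≤ R)
    (hM : M ≤ gp q (g * p) p) :
    ∃ τ : ℤ, |τ| ≤ R ∧ ∀ s t : ℕ, R < s → s + R ≤ M → (t : ℤ) = s + τ →
      g * geo q p s = geo q p t := by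
  have hL := dist1_mul g q p
  have h1 := dist1_tri (g * q) q (g * p)
  have h2 := dist1_tri q (g * q) (g * p)
  have h3 := dist1_comm q (g * q)
  refine ⟨(dist1 q (g * p) : ℤ) - dist1 q p, abs_le.2 ⟨by omega, by omega⟩, ?_⟩
  intro s t hs hsM ht
  have hML : M ≤ dist1 q p := hM.trans (gp_le_right _ _ _)
  have htM : t ≤ M := by omega
  have a1 := dist1_geo_left (q := q) (p := p) (s := s) (by omega)
  have a2 := dist1_geo_right (q := q) (p := p) (s := s) (by omega)
  have b1 := dist1_geo_left (q := q) (p := p) (s := t) (by omega)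
  have b2 := dist1_geo_right (q := q) (p := p) (s := t) (by omega)
  have c1 := dist1_mul g q (geo q p s)
  have c2 := dist1_mul g (geo q p s) p
  have d1 := two_gp (g * geo q p s) (g * q) (g * p)
  have d2 := two_gp (g * geo q p s) (g * q) q
  have d3 := two_gp (g * geo q p s) q (g * p)
  have d4 := gp_hyp (g * geo q p s) (g * q) q (g * p)
  have d5 := dist1_comm (g * geo q p s) (g * q)
  have d6 := dist1_comm (g * geo q p s) q
  have d7 := dist1_tri (g * q) q (g * geo q p s)
  have e1 := two_gp q (geo q p t) p
  have e2 := gp_hyp q (geo q p t) p (g * p)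
  have e3 := two_gp q (geo q p t) (g * p)
  have e4 := gp_comm q (g * p) p
  have e5 := dist1_tri q (geo q p t) (g * p)
  refine eq_of_on_geodesic (q := q) (p := g * p) ?_ ?_ ?_
  all_goals omega

/-- Two elements which move `q` by at most `R` and translate a long initial part of the segment
`[q, p]` along itself commute. -/
theorem comm_of_shift {q p g h : FreeGroup α} {R : ℕ} (hg : dist1 q (g * q) ≤ R)
    (hh : dist1 q (h * q) ≤ R) (hg' : 4 * R + 4 ≤ gp q (g * p) p)
    (hh' : 4 * R + 4 ≤ gp q (h * p) p) : g * h = h * g := by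
  obtain ⟨τ, hτ, H⟩ := exists_shift hg hg'
  obtain ⟨σ, hσ, K⟩ := exists_shift hh hh'
  rw [abs_le] at hτ hσ
  obtain ⟨a, ha⟩ : ∃ a : ℕ, (a : ℤ) = 2 * R + 2 + τ := ⟨(2 * R + 2 + τ).toNat, by omega⟩
  obtain ⟨b, hb⟩ : ∃ b : ℕ, (b : ℤ) = 2 * R + 2 + σ := ⟨(2 * R + 2 + σ).toNat, by omega⟩
  obtain ⟨c, hc⟩ : ∃ c : ℕ, (c : ℤ) = 2 * R + 2 + σ + τ :=
    ⟨(2 * R + 2 + σ + τ).toNat, by omega⟩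
  have e1 := H (2 * R + 2) a (by omega) (by omega) (by push_cast; omega)
  have e2 := K (2 * R + 2) b (by omega) (by omega) (by push_cast; omega)
  have e3 := H b c (by omega) (by omega) (by omega)
  have e4 := K a c (by omega) (by omega) (by omega)
  have : (g * h) * geo q p (2 * R + 2) = (h * g) * geo q p (2 * R + 2) := by
    rw [mul_assoc, e2, e3, mul_assoc, e1, e4]
  exact mul_right_cancel this

/-- Two sequences of points of the Cayley tree are at bounded distance along the ultrafilter. -/
def UBdd (p q : ℕ → FreeGroup α) : Prop := ∃ R, ∀ᶠ k in (hyperfilter ℕ : Filter ℕ),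
  dist1 (p k) (q k) ≤ R

theorem not_uBdd {p q : ℕ → FreeGroup α} :
    ¬ UBdd p q ↔ ∀ R, ∀ᶠ k in (hyperfilter ℕ : Filter ℕ), R ≤ dist1 (p k) (q k) := by
  unfold UBdd
  push Not
  exact ⟨fun h R => (h R).mono fun k hk => hk.le, fun h R => (h (R + 1)).mono fun k hk => hk⟩

/-- Sequences of points up to bounded distance. -/
def seqSetoid (α : Type*) [DecidableEq α] : Setoid (ℕ → FreeGroup α) where
  r := UBdd
  iseqv := by
    refine ⟨fun p => ⟨0, by simp [dist1_self]⟩, ?_, ?_⟩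
    · rintro p q ⟨R, h⟩
      exact ⟨R, h.mono fun k hk => by rwa [dist1_comm]⟩
    · rintro p q r ⟨R, h⟩ ⟨R', h'⟩
      refine ⟨R + R', ?_⟩
      filter_upwards [h, h'] with k h1 h2
      have := dist1_tri (p k) (q k) (r k)
      omega

/-- The limit tree of the actions of `F` on its Cayley tree twisted by the endomorphisms `Φ k`. -/
def Tinf (_ : ℕ → FreeGroup α →* FreeGroup α) : Type _ := Quotient (seqSetoid α)

/-- The point of the limit tree defined by a sequence. -/
def Tinf.mk (Φ : ℕ → FreeGroup α →* FreeGroup α) (p : ℕ → FreeGroup α) : Tinf Φ :=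
  Quotient.mk (seqSetoid α) p

variable {Φ : ℕ → FreeGroup α →* FreeGroup α}

theorem Tinf.mk_eq {p q : ℕ → FreeGroup α} : Tinf.mk Φ p = Tinf.mk Φ q ↔ UBdd p q :=
  Quotient.eq (r := seqSetoid α)

/-- The element `g` acts on the term of index `k` through `Φ k`. -/
instance : MulAction (FreeGroup α) (Tinf Φ) where
  smul g := Quotient.map (sa := seqSetoid α) (sb := seqSetoid α) (fun p k => Φ k g * p k) (by
    rintro p q ⟨R, h⟩
    exact ⟨R, h.mono fun k hk => by rwa [dist1_mul]⟩)
  one_smul := by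
    intro x
    induction x using Quotient.inductionOn
    exact congrArg (Tinf.mk Φ) (funext fun k => by simp)
  mul_smul := by
    intro g h x
    induction x using Quotient.inductionOn
    exact congrArg (Tinf.mk Φ) (funext fun k => by simp [mul_assoc])

theorem Tinf.smul_mk (g : FreeGroup α) (p : ℕ → FreeGroup α) :
    g • Tinf.mk Φ p = Tinf.mk Φ (fun k => Φ k g * p k) := rfl

/-- `p` and `p'` lie in the same direction from `q`: the Gromov products tend to infinity. -/
def Dseq (q p p' : ℕ → FreeGroup α) : Prop :=
  ∀ R, ∀ᶠ k in (hyperfilter ℕ : Filter ℕ), R ≤ gp (q k) (p k) (p' k)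

theorem Dseq_congr {q p r q' p' r' : ℕ → FreeGroup α} (h1 : UBdd q q') (h2 : UBdd p p')
    (h3 : UBdd r r') (h : Dseq q p r) : Dseq q' p' r' := by
  obtain ⟨A, hA⟩ := h1
  obtain ⟨B, hB⟩ := h2
  obtain ⟨C, hC⟩ := h3
  intro R
  filter_upwards [hA, hB, hC, h (R + A + B + C)] with k a b c d
  have e1 := two_gp (q k) (p k) (r k)
  have e2 := two_gp (q' k) (p' k) (r' k)
  have e3 := dist1_tri (q k) (q' k) (p k)
  have e4 := dist1_tri (q' k) (p' k) (p k)
  have e5 := dist1_tri (q k) (q' k) (r k)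
  have e6 := dist1_tri (q' k) (r' k) (r k)
  have e7 := dist1_tri (p' k) (p k) (r' k)
  have e8 := dist1_tri (p k) (r k) (r' k)
  have e9 := dist1_comm (p k) (p' k)
  have e10 := dist1_comm (r k) (r' k)
  omega

/-- The direction relation on the limit tree. -/
noncomputable def Dinf (Φ : ℕ → FreeGroup α →* FreeGroup α) (q p p' : Tinf Φ) : Prop :=
  Dseq (Quotient.out (s := seqSetoid α) q) (Quotient.out (s := seqSetoid α) p)
    (Quotient.out (s := seqSetoid α) p')

theorem Dinf_mk {q p r : ℕ → FreeGroup α} :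
    Dinf Φ (Tinf.mk Φ q) (Tinf.mk Φ p) (Tinf.mk Φ r) ↔ Dseq q p r := by
  have h (p : ℕ → FreeGroup α) : UBdd (Quotient.out (s := seqSetoid α) (Tinf.mk Φ p)) p :=
    Quotient.exact (s := seqSetoid α) (Quotient.out_eq _)
  have hsymm (p : ℕ → FreeGroup α) : UBdd p (Quotient.out (s := seqSetoid α) (Tinf.mk Φ p)) :=
    (seqSetoid α).symm (h p)
  exact ⟨Dseq_congr (h _) (h _) (h _), Dseq_congr (hsymm _) (hsymm _) (hsymm _)⟩

/-- The limit of the Cayley trees is again tree-like: the axioms follow from the `0`-hyperbolic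
inequality and the existence of medians, along the ultrafilter. -/
theorem Dinf_dendron : Dendron (Dinf Φ) where
  refl_iff := by
    intro q a
    induction q using Quotient.inductionOn with | _ q
    induction a using Quotient.inductionOn with | _ a
    refine Dinf_mk.trans (Iff.trans ?_ (not_congr (Tinf.mk_eq (Φ := Φ) (p := a) (q := q))).symm)
    rw [not_uBdd]
    have : ∀ k, gp (q k) (a k) (a k) = dist1 (a k) (q k) := by
      intro k
      have := two_gp (q k) (a k) (a k)
      have h1 := dist1_self (a k)
      have h2 := dist1_comm (a k) (q k)
      omega
    simp only [Dseq, this]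
  symm := by
    intro q a b h R
    exact (h R).mono fun k hk => by rwa [gp_comm]
  trans := by
    intro q a b c h h' R
    filter_upwards [h R, h' R] with k h1 h2
    exact (le_min h1 h2).trans (gp_hyp _ _ _ _)
  sep := by
    intro q q' a
    induction q using Quotient.inductionOn with | _ q
    induction q' using Quotient.inductionOn with | _ q'
    induction a using Quotient.inductionOn with | _ a
    intro hne
    have hne' := not_uBdd.1 ((not_congr (Tinf.mk_eq (Φ := Φ) (p := q) (q := q'))).1 hne)
    by_contra hcon
    push Not at hcon
    obtain ⟨h1, h2⟩ := hcon
    apply h2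
    refine Dinf_mk.2 ?_
    have h3 := (not_congr (Dinf_mk (Φ := Φ) (q := q) (p := a) (r := q'))).1 h1
    unfold Dseq at h3
    push Not at h3
    obtain ⟨R, hR'⟩ := h3
    intro M
    filter_upwards [hR', hne' (R + M)] with k e1 e2
    have e3 := two_gp (q k) (a k) (q' k)
    have e4 := two_gp (q' k) (a k) (q k)
    have e5 := dist1_comm (q k) (a k)
    have e6 := dist1_comm (q' k) (a k)
    have e7 := dist1_comm (q k) (q' k)
    omega
  med := by
    intro a b c
    induction a using Quotient.inductionOn with | _ a
    induction b using Quotient.inductionOn with | _ b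
    induction c using Quotient.inductionOn with | _ c
    choose m h1 h2 h3 using fun k => exists_median (a k) (b k) (c k)
    have key : ∀ {x y : ℕ → FreeGroup α}, (∀ k, gp (m k) (x k) (y k) = 0) →
        ¬ Dinf Φ (Tinf.mk Φ m) (Tinf.mk Φ x) (Tinf.mk Φ y) := by
      intro x y h hd
      obtain ⟨k, hk⟩ := (Dinf_mk.1 hd 1).exists
      rw [h] at hk
      omega
    exact ⟨Tinf.mk Φ m, key h1, key h2, key h3⟩

theorem Dinf_smul (g : FreeGroup α) (q a b : Tinf Φ) (h : Dinf Φ q a b) :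
    Dinf Φ (g • q) (g • a) (g • b) := by
  induction q using Quotient.inductionOn with | _ q
  induction a using Quotient.inductionOn with | _ a
  induction b using Quotient.inductionOn with | _ b
  refine Dinf_mk.2 fun R => ?_
  filter_upwards [Dinf_mk.1 h R] with k hk
  rwa [gp_mul]

/-- Germ stabilizers in the limit tree are commutative. -/
theorem Dinf_comm (hΦ : ∀ k, Function.Injective (Φ k)) (v p : Tinf Φ) (g g' : FreeGroup α)
    (hg : g • v = v) (hg' : g' • v = v) (h : Dinf Φ v (g • p) p) (h' : Dinf Φ v (g' • p) p) :
    g * g' = g' * g := by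
  induction v using Quotient.inductionOn with | _ v
  induction p using Quotient.inductionOn with | _ p
  obtain ⟨R, hR⟩ := (Tinf.mk_eq (Φ := Φ)).1 hg
  obtain ⟨R', hR'⟩ := (Tinf.mk_eq (Φ := Φ)).1 hg'
  obtain ⟨k, ⟨⟨h1, h2⟩, h3⟩, h4⟩ := (((hR.and hR').and
    (Dinf_mk.1 h (4 * (R + R') + 4))).and (Dinf_mk.1 h' (4 * (R + R') + 4))).exists
  apply hΦ k
  rw [map_mul, map_mul]
  rw [dist1_comm] at h1 h2
  exact comm_of_shift (R := R + R') (h1.trans (by omega)) (h2.trans (by omega)) h3 h4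

/-! ### Infinite words and attracting fixed words -/

theorem toWord_wordPrefix (W : InfWord α) (i : ℕ) :
    (wordPrefix W i).toWord = prefixList W i := by
  rw [wordPrefix, FreeGroup.toWord_mk]
  refine FreeGroup.IsReduced.reduce_eq ?_
  unfold FreeGroup.IsReduced prefixList
  rw [List.isChain_map, List.isChain_range]
  intro m hm h1
  have := W.2 m
  by_contra h2
  apply this
  refine Prod.ext h1.symm ?_
  simp only [linv]
  cases h3 : (W.1 m).2 <;> cases h4 : (W.1 (m+1)).2 <;> simp_all

theorem length_prefixList (W : InfWord α) (i : ℕ) : (prefixList W i).length = i := by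
  simp [prefixList]

theorem norm_wordPrefix (W : InfWord α) (i : ℕ) : (wordPrefix W i).norm = i := by
  rw [FreeGroup.norm, toWord_wordPrefix, length_prefixList]

theorem take_prefixList (W : InfWord α) {i j : ℕ} (h : i ≤ j) :
    (prefixList W j).take i = prefixList W i := by
  rw [prefixList, ← List.map_take, List.take_range, min_eq_left h, prefixList]

theorem le_wedgeF_iff (k : ℕ) (W : InfWord α) (g : FreeGroup α) :
    k ≤ wedgeF W g ↔ k ≤ g.norm ∧ g.toWord.take k = prefixList W k := by
  rw [wedgeF, le_cpl_iff, length_prefixList, FreeGroup.norm]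
  constructor
  · rintro ⟨h1, _, h2⟩
    rw [take_prefixList W h1] at h2
    exact ⟨h1, h2.symm⟩
  · rintro ⟨h1, h2⟩
    rw [take_prefixList W h1]
    exact ⟨h1, h1, h2.symm⟩

theorem wedgeF_le_norm (W : InfWord α) (g : FreeGroup α) : wedgeF W g ≤ g.norm :=
  ((le_wedgeF_iff _ W g).1 le_rfl).1

theorem wedgeF_wordPrefix (W : InfWord α) (i : ℕ) : wedgeF W (wordPrefix W i) = i := by
  refine le_antisymm ((wedgeF_le_norm _ _).trans_eq (norm_wordPrefix W i)) ?_
  rw [le_wedgeF_iff, norm_wordPrefix, toWord_wordPrefix, take_prefixList W le_rfl]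
  exact ⟨le_rfl, rfl⟩

theorem wedgeF_hyp (W : InfWord α) (g h : FreeGroup α) :
    min (wedgeF W g) (gp 1 g h) ≤ wedgeF W h := by
  obtain ⟨h1, h2⟩ := (le_wedgeF_iff _ W g).1 (min_le_left (wedgeF W g) (gp 1 g h))
  rw [gp_one] at h1 h2 ⊢
  obtain ⟨h3, h4, h5⟩ := (le_wedgeFF_iff _ g h).1 (min_le_right (wedgeF W g) (wedgeFF g h))
  exact (le_wedgeF_iff _ W h).2 ⟨h4, h5 ▸ h2⟩

theorem wedgeF_hyp' (W : InfWord α) (g h : FreeGroup α) :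
    min (wedgeF W g) (wedgeF W h) ≤ gp 1 g h := by
  obtain ⟨h1, h2⟩ := (le_wedgeF_iff _ W g).1 (min_le_left (wedgeF W g) (wedgeF W h))
  obtain ⟨h3, h4⟩ := (le_wedgeF_iff _ W h).1 (min_le_right (wedgeF W g) (wedgeF W h))
  rw [gp_one]
  exact (le_wedgeFF_iff _ g h).2 ⟨h1, h3, h2.trans h4.symm⟩

/-- `h · W = W'`, phrased through finite words close to `W` whose images are close to `W'`. -/
def Act (h : FreeGroup α) (W W' : InfWord α) : Prop :=
  ∀ R, ∃ g, R ≤ wedgeF W g ∧ R ≤ wedgeF W' (h * g)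

theorem gp_one_mul_le (h a b : FreeGroup α) : gp 1 a b ≤ gp 1 (h * a) (h * b) + h.norm := by
  have e1 := two_gp 1 a b
  have e2 := two_gp 1 (h * a) (h * b)
  have e3 := dist1_mul h a b
  have e4 := dist1_tri h 1 (h * a)
  have e5 := dist1_tri h 1 (h * b)
  have e6 : dist1 h (h * a) = dist1 1 a := by simpa using dist1_mul h 1 a
  have e7 : dist1 h (h * b) = dist1 1 b := by simpa using dist1_mul h 1 b
  have e8 := dist1_one h
  have e9 := dist1_comm h 1
  omega

theorem Act.le {h : FreeGroup α} {W W' : InfWord α} (H : Act h W W') (g : FreeGroup α) :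
    wedgeF W g ≤ wedgeF W' (h * g) + h.norm := by
  obtain ⟨y, h1, h2⟩ := H (wedgeF W g)
  have e1 := wedgeF_hyp' W y g
  have e2 := gp_one_mul_le h y g
  have e3 := wedgeF_hyp W' (h * y) (h * g)
  omega

theorem Act.of_le {h : FreeGroup α} {W W' : InfWord α} (K : ℕ)
    (H : ∀ g, wedgeF W g ≤ wedgeF W' (h * g) + K) : Act h W W' := by
  intro R
  have h1 := H (wordPrefix W (R + K))
  have h2 := wedgeF_wordPrefix W (R + K)
  exact ⟨wordPrefix W (R + K), by omega, by omega⟩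

theorem Act.convergesTo {h : FreeGroup α} {W W' : InfWord α} (H : Act h W W') :
    ConvergesTo (fun i => h * wordPrefix W i) W' := by
  refine tendsto_atTop.2 fun R => ?_
  filter_upwards [eventually_ge_atTop (R + h.norm)] with i hi
  have h1 := H.le (wordPrefix W i)
  have h2 := wedgeF_wordPrefix W i
  omega

theorem Act.mul {a b : FreeGroup α} {W W' W'' : InfWord α} (ha : Act a W' W'')
    (hb : Act b W W') : Act (a * b) W W'' := by
  refine Act.of_le (a.norm + b.norm) fun g => ?_
  have h1 := hb.le g
  have h2 := ha.le (b * g)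
  rw [← mul_assoc] at h2
  omega

theorem Act.one (W : InfWord α) : Act 1 W W := Act.of_le 0 fun g => by simp

theorem Act.pow {a : FreeGroup α} {W : InfWord α} (ha : Act a W W) (N : ℕ) :
    Act (a ^ N) W W := by
  induction N with
  | zero => rw [pow_zero]; exact Act.one W
  | succ N ih => rw [pow_succ]; exact ih.mul ha

theorem Act.inv {a : FreeGroup α} {W W' : InfWord α} (ha : Act a W W') : Act a⁻¹ W' W := by
  intro R
  obtain ⟨g, h1, h2⟩ := ha R
  exact ⟨a * g, h2, by simpa using h1⟩

theorem wedgeF_mul_right (W : InfWord α) (g c : FreeGroup α) :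
    wedgeF W g ≤ wedgeF W (g * c) + c.norm := by
  have h1 := wedgeF_hyp W g (g * c)
  have h2 := two_gp 1 g (g * c)
  have h3 : dist1 g (g * c) = c.norm := by simp [dist1]
  have h4 := dist1_tri 1 g (g * c)
  have h5 := dist1_tri 1 (g * c) g
  have h6 := dist1_comm g (g * c)
  have h7 := wedgeF_le_norm W g
  have h8 := dist1_one g
  omega

/-! #### Bounded cancellation -/

theorem exists_lipschitz [Finite α] (ψ : FreeGroup α →* FreeGroup α) :
    ∃ L, ∀ a b, dist1 (ψ a) (ψ b) ≤ L * dist1 a b := by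
  cases nonempty_fintype α
  refine ⟨∑ x : α, (ψ (FreeGroup.of x)).norm, fun a b => ?_⟩
  have key : ∀ g, (ψ g).norm ≤ (∑ x : α, (ψ (FreeGroup.of x)).norm) * g.norm := by
    intro g
    have hle (x : α) : (ψ (FreeGroup.of x)).norm ≤ ∑ x : α, (ψ (FreeGroup.of x)).norm :=
      Finset.single_le_sum (f := fun x => (ψ (FreeGroup.of x)).norm)
        (fun _ _ => Nat.zero_le _) (Finset.mem_univ x)
    induction g using norm_induction with
    | h1 => simp
    | hmul x g hn ih =>
      rw [map_mul, hn, mul_add_one]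
      have := FreeGroup.norm_mul_le (ψ (FreeGroup.of x)) (ψ g)
      have := hle x
      omega
    | hinv x g hn ih =>
      rw [map_mul, map_inv, hn, mul_add_one]
      have h1 := FreeGroup.norm_mul_le (ψ (FreeGroup.of x))⁻¹ (ψ g)
      rw [FreeGroup.norm_inv_eq] at h1
      have := hle x
      omega
  have := key (a⁻¹ * b)
  rwa [map_mul, map_inv] at this

theorem dist1_geo_geo {q p : FreeGroup α} {s t : ℕ} (hst : s ≤ t) (ht : t ≤ dist1 q p) :
    dist1 (geo q p s) (geo q p t) = t - s := by
  have a1 := dist1_geo_left (q := q) (p := p) (s := s) (by omega)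
  have a2 := dist1_geo_right (q := q) (p := p) (s := s) (by omega)
  have b1 := dist1_geo_left (q := q) (p := p) (s := t) (by omega)
  have b2 := dist1_geo_right (q := q) (p := p) (s := t) (by omega)
  have c1 := two_gp q (geo q p s) p
  have c2 := two_gp q p (geo q p t)
  have c3 := two_gp q (geo q p s) (geo q p t)
  have c4 := gp_hyp q (geo q p s) p (geo q p t)
  have c5 := gp_le_left q (geo q p s) (geo q p t)
  have c6 := dist1_comm p (geo q p t)
  omega

/-- The image of a geodesic passes near every point of the geodesic between the images of its
end points. -/
theorem exists_near {ψ : FreeGroup α →* FreeGroup α} {L : ℕ}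
    (hL : ∀ a b, dist1 (ψ a) (ψ b) ≤ L * dist1 a b) (q a : FreeGroup α) {T : ℕ}
    (hT : T ≤ dist1 (ψ q) (ψ a)) :
    ∃ s ≤ dist1 q a, dist1 (ψ (geo q a s)) (geo (ψ q) (ψ a) T) ≤ L := by
  classical
  have hend : geo q a (dist1 q a) = a := by
    have := dist1_geo_right (q := q) (p := a) (s := dist1 q a) le_rfl
    rw [← dist1_eq_zero]; omega
  have hex : ∃ s, s ≤ dist1 q a ∧ T ≤ gp (ψ q) (ψ (geo q a s)) (ψ a) := by
    refine ⟨dist1 q a, le_rfl, ?_⟩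
    rw [hend]
    have := two_gp (ψ q) (ψ a) (ψ a)
    have := dist1_self (ψ a)
    omega
  set c := geo (ψ q) (ψ a) T with hc
  have c1 : dist1 (ψ q) c = T := dist1_geo_left hT
  have c2 : T + dist1 c (ψ a) = dist1 (ψ q) (ψ a) := dist1_geo_right hT
  obtain ⟨hs1, hs2⟩ := Nat.find_spec hex
  refine ⟨Nat.find hex, hs1, ?_⟩
  set s := Nat.find hex with hs
  rcases Nat.eq_zero_or_pos s with h0 | hpos
  · have hg0 : geo q a 0 = q := by
      have := dist1_geo_left (q := q) (p := a) (s := 0) (Nat.zero_le _)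
      rw [dist1_comm] at this
      rwa [← dist1_eq_zero]
    rw [h0, hg0] at hs2 ⊢
    have := gp_le_left (ψ q) (ψ q) (ψ a)
    have := dist1_self (ψ q)
    omega
  · have hmin := Nat.find_min hex (m := s - 1) (by omega)
    have hlt : gp (ψ q) (ψ (geo q a (s - 1))) (ψ a) < T := by
      by_contra hcon
      exact hmin ⟨by omega, by omega⟩
    have hd := hL (geo q a (s - 1)) (geo q a s)
    rw [dist1_geo_geo (by omega) hs1, show s - (s - 1) = 1 by omega, mul_one] at hd
    generalize ψ (geo q a s) = y at *
    generalize ψ (geo q a (s - 1)) = z at *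
    have d1 := two_gp (ψ q) c (ψ a)
    have d2 := gp_hyp (ψ q) y (ψ a) c
    have d3 := gp_comm (ψ q) c (ψ a)
    have d4 := two_gp (ψ q) y c
    have d5 := gp_hyp (ψ q) z c (ψ a)
    have d6 := gp_hyp (ψ q) z y c
    have d7 := two_gp (ψ q) z y
    have d8 := two_gp (ψ q) z c
    have d9 := gp_le_right (ψ q) y c
    have d10 := dist1_tri z c y
    have d11 := gp_hyp (ψ q) z y (ψ a)
    have d12 := dist1_tri (ψ q) z c
    have d13 := dist1_tri z (ψ q) c
    have d14 := dist1_comm z (ψ q)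
    omega

/-- Bounded cancellation for injective endomorphisms. -/
theorem bounded_cancellation [Finite α] {ψ : FreeGroup α →* FreeGroup α}
    (hψ : Function.Injective ψ) :
    ∃ C, ∀ q a b, gp q a b = 0 → gp (ψ q) (ψ a) (ψ b) ≤ C := by
  obtain ⟨L, hL⟩ := exists_lipschitz ψ
  have hfin : (FreeGroup.norm '' {g : FreeGroup α | (ψ g).norm ≤ 2 * L}).Finite :=
    ((finite_ball (2 * L)).preimage hψ.injOn).image _
  obtain ⟨M, hM⟩ := hfin.bddAbove
  refine ⟨L * M + L, fun q a b h0 => ?_⟩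
  have hT1 := gp_le_left (ψ q) (ψ a) (ψ b)
  have hT2 := gp_le_right (ψ q) (ψ a) (ψ b)
  obtain ⟨s, hs, hs'⟩ := exists_near hL q a hT1
  obtain ⟨t, ht, ht'⟩ := exists_near hL q b hT2
  have hc : geo (ψ q) (ψ a) (gp (ψ q) (ψ a) (ψ b)) = geo (ψ q) (ψ b) (gp (ψ q) (ψ a) (ψ b)) := by
    unfold geo
    rw [((le_wedgeFF_iff _ _ _).1 (le_refl (gp (ψ q) (ψ a) (ψ b)))).2.2]
  have hc1 : dist1 (ψ q) (geo (ψ q) (ψ a) (gp (ψ q) (ψ a) (ψ b))) = _ := dist1_geo_left hT1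
  rw [← hc] at ht'
  generalize geo (ψ q) (ψ a) (gp (ψ q) (ψ a) (ψ b)) = c at *
  have e1 := dist1_tri (ψ (geo q a s)) c (ψ (geo q b t))
  rw [dist1_comm c] at e1
  have e2 : dist1 (geo q a s) (geo q b t) ≤ M := by
    refine hM ⟨(geo q a s)⁻¹ * geo q b t, ?_, rfl⟩
    rw [Set.mem_ofPred_eq, map_mul, map_inv]
    change dist1 _ _ ≤ _
    omega
  have a1 := dist1_geo_left hs
  have a2 := dist1_geo_right hs
  have b1 := dist1_geo_left ht
  have b2 := dist1_geo_right ht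
  have e3 := two_gp q (geo q a s) a
  have e4 := two_gp q (geo q b t) b
  have e5 := gp_hyp q a (geo q a s) (geo q b t)
  have e6 := gp_hyp q a (geo q b t) b
  have e7 := gp_comm q a (geo q a s)
  have e8 := two_gp q (geo q a s) (geo q b t)
  have e9 := hL q (geo q a s)
  have e12 := gp_le_left q (geo q a s) (geo q b t)
  have e13 := gp_le_right q (geo q a s) (geo q b t)
  have e10 : L * dist1 q (geo q a s) ≤ L * M := Nat.mul_le_mul_left _ (by omega)
  have e11 := dist1_tri (ψ q) (ψ (geo q a s)) c
  omega

/-- Near an attracting fixed word `W` of `ψ`, the map `ψ` strictly increases the length of the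
common prefix with `W`. -/
theorem exists_attracting_radius [Finite α] {ψ : FreeGroup α →* FreeGroup α}
    (hψ : Function.Injective ψ) {W : InfWord α} (hW : IsAttractingFixedWord ψ W) :
    ∃ i₀, ∀ g, i₀ ≤ wedgeF W g → wedgeF W g + 1 ≤ wedgeF W (ψ g) := by
  obtain ⟨C, hC⟩ := bounded_cancellation hψ
  obtain ⟨i₀, hi⟩ := (hW.2.eventually_ge_atTop ((C : ℤ) + 1)).exists_forall_of_atTop
  refine ⟨i₀, fun g hg => ?_⟩
  have h1 := hi _ hg
  set l := wedgeF W g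
  set x := wordPrefix W l
  have hx : x.norm = l := norm_wordPrefix W l
  have hx' : wedgeF W x = l := wedgeF_wordPrefix W l
  have h2 := wedgeF_hyp' W x g
  have h3 := gp_le_left 1 x g
  rw [dist1_one] at h3
  have h4 := two_gp 1 x g
  have h5 := two_gp x 1 g
  have h6 := dist1_comm 1 x
  have h7 := dist1_one x
  have h8 := hC x 1 g (by omega)
  rw [map_one] at h8
  have h9 := two_gp (ψ x) 1 (ψ g)
  have h10 := two_gp 1 (ψ x) (ψ g)
  have h11 := dist1_comm 1 (ψ x)
  have h12 := dist1_one (ψ x)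
  have h13 := wedgeF_le_norm W (ψ x)
  have h14 := wedgeF_hyp W (ψ x) (ψ g)
  omega

theorem wedgeF_iterate {ψ : FreeGroup α →* FreeGroup α} {W : InfWord α} {i₀ : ℕ}
    (hi : ∀ g, i₀ ≤ wedgeF W g → wedgeF W g + 1 ≤ wedgeF W (ψ g)) (g : FreeGroup α)
    (hg : i₀ ≤ wedgeF W g) (k : ℕ) : wedgeF W g + k ≤ wedgeF W (ψ^[k] g) := by
  induction k with
  | zero => simp
  | succ k ih =>
    rw [Function.iterate_succ_apply']
    have := hi _ (show i₀ ≤ wedgeF W (ψ^[k] g) by omega)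
    omega

/-- An element which stabilizes an attracting fixed word of `ψ` is not `ψ`-periodic, unless it is
trivial. -/
theorem eq_one_of_act [Finite α] {ψ : FreeGroup α →* FreeGroup α} {W : InfWord α} {i₀ : ℕ}
    (hi : ∀ g, i₀ ≤ wedgeF W g → wedgeF W g + 1 ≤ wedgeF W (ψ g)) {t : FreeGroup α}
    (ht : Act t W W) {p : ℕ} (hp : 0 < p) (htp : ψ^[p] t = t) : t = 1 := by
  by_contra hne
  have hno : ∀ u, ψ^[p] u = u → wedgeF W u < i₀ := by
    intro u hu
    by_contra hcon
    have := wedgeF_iterate hi u (by omega) p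
    rw [hu] at this
    omega
  obtain ⟨N, hN⟩ := exists_pow_norm_gt hne (2 * i₀)
  have hN' := hN N le_rfl
  have hfix : ψ^[p] (t ^ N) = t ^ N := by rw [iterate_map_pow, htp]
  have hfix' : ψ^[p] (t ^ N)⁻¹ = (t ^ N)⁻¹ := by rw [iterate_map_inv, hfix]
  have h1 := hno _ hfix
  have h2 := hno _ hfix'
  obtain ⟨g, h3, h4⟩ := ht.pow N ((t ^ N).norm + 1)
  generalize t ^ N = s at *
  have e1 := two_gp 1 s (s * g)
  have e2 := two_gp 1 s⁻¹ g
  have e3 : dist1 s (s * g) = dist1 1 g := by simpa using dist1_mul s 1 g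
  have e4 : dist1 s⁻¹ g = dist1 1 (s * g) := by simp [dist1]
  have e5 := dist1_one s
  have e6 := dist1_one s⁻¹
  rw [FreeGroup.norm_inv_eq] at e6
  have e7 := wedgeF_hyp W (s * g) s
  have e8 := wedgeF_hyp W g s⁻¹
  have e9 := gp_comm 1 s (s * g)
  have e10 := gp_comm 1 s⁻¹ g
  have e11 := gp_le_left 1 s (s * g)
  have e12 := gp_le_left 1 s⁻¹ g
  omega

/-! ### The points of the limit tree attached to an Inn-coset -/

section LimitPoints

set_option linter.unusedSectionVars false

/-- The iterates of an endomorphism. -/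
def iter (φ : FreeGroup α →* FreeGroup α) : ℕ → FreeGroup α →* FreeGroup α
  | 0 => MonoidHom.id _
  | k + 1 => φ.comp (iter φ k)

theorem iter_apply (φ : FreeGroup α →* FreeGroup α) (k : ℕ) (g : FreeGroup α) :
    iter φ k g = φ^[k] g := by
  induction k with
  | zero => rfl
  | succ k ih => rw [Function.iterate_succ_apply', ← ih]; rfl

/-- The sequence of endomorphisms `φ ^ k!`. -/
def facIter (φ : FreeGroup α →* FreeGroup α) (k : ℕ) : FreeGroup α →* FreeGroup α :=
  iter φ k.factorial

theorem facIter_injective {φ : FreeGroup α →* FreeGroup α} (hφ : Function.Injective φ) (k : ℕ) :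
    Function.Injective (facIter φ k) := by
  intro a b h
  unfold facIter at h
  rw [iter_apply, iter_apply] at h
  exact hφ.iterate _ h

/-- The element `m_k` with `(i_m ∘ φ) ^ k = i_{m_k} ∘ φ ^ k`. -/
def cocyc (φ : FreeGroup α →* FreeGroup α) (m : FreeGroup α) : ℕ → FreeGroup α
  | 0 => 1
  | k + 1 => m * φ (cocyc φ m k)

/-- The map `Y ↦ a φ(Y) b⁻¹`. -/
def tw {G : Type*} [Group G] (φ : G →* G) (a b Y : G) : G := a * φ Y * b⁻¹

theorem innerAut_apply {G : Type*} [Group G] (c g : G) : innerAut c g = c * g * c⁻¹ := rfl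

theorem tw_injective {φ : FreeGroup α →* FreeGroup α} (hφ : Function.Injective φ)
    (a b : FreeGroup α) : Function.Injective (tw φ a b) := by
  intro x y h
  unfold tw at h
  exact hφ (mul_left_cancel (mul_right_cancel h))

theorem tw_self (φ : FreeGroup α →* FreeGroup α) (a Y : FreeGroup α) :
    tw φ a a Y = ((innerAut a).comp φ) Y := by
  simp [tw, innerAut]

theorem tw_mul (φ : FreeGroup α →* FreeGroup α) (a b c X Y : FreeGroup α) :
    tw φ a c (X * Y) = tw φ a b X * tw φ b c Y := by
  simp [tw, mul_assoc]

theorem tw_iterate_mul (φ : FreeGroup α →* FreeGroup α) (a b c X Y : FreeGroup α) (k : ℕ) :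
    (tw φ a c)^[k] (X * Y) = (tw φ a b)^[k] X * (tw φ b c)^[k] Y := by
  induction k generalizing X Y with
  | zero => rfl
  | succ k ih => rw [Function.iterate_succ_apply, tw_mul φ a b c, ih]; rfl

/-- The iterates of `Y ↦ a * φ Y * b⁻¹` are of the same form for the powers of `φ`. -/
theorem tw_iterate (φ : FreeGroup α →* FreeGroup α) (a b : FreeGroup α) (k : ℕ) (g : FreeGroup α) :
    (tw φ a b)^[k] g = cocyc φ a k * iter φ k g * (cocyc φ b k)⁻¹ := by
  induction k with
  | zero => simp [cocyc, iter]
  | succ k ih =>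
    rw [Function.iterate_succ_apply', ih]
    simp [tw, cocyc, iter, mul_assoc]

/-- A point of the limit tree, whose stabilizer consists of the `g` which are periodic under
`i_m ∘ φ`. -/
def Pt (φ : FreeGroup α →* FreeGroup α) (m : FreeGroup α) : Tinf (facIter φ) :=
  Tinf.mk _ fun k => (cocyc φ m k.factorial)⁻¹

/-- The distance between the terms of index `k` of sequences representing `g • Pt φ b` and
`Pt φ a`. -/
theorem dist1_smul_Pt (φ : FreeGroup α →* FreeGroup α) (a b g : FreeGroup α) (k : ℕ) :
    dist1 (facIter φ k g * (cocyc φ b k.factorial)⁻¹) (cocyc φ a k.factorial)⁻¹ =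
      ((tw φ a b)^[k.factorial] g).norm := by
  rw [tw_iterate, dist1_comm]
  simp [dist1, facIter, mul_assoc]

/-- A periodic element moves `Pt φ b` to `Pt φ a`: its period divides `k!` for large `k`. -/
theorem smul_Pt_eq_of_periodic {φ : FreeGroup α →* FreeGroup α} {a b g : FreeGroup α} {p : ℕ}
    (hp : 0 < p) (h : (tw φ a b)^[p] g = g) : g • Pt φ b = Pt φ a := by
  refine Tinf.mk_eq.2 ⟨g.norm, ?_⟩
  have : ∀ᶠ k in (hyperfilter ℕ : Filter ℕ), p ≤ k :=
    Nat.hyperfilter_le_atTop (eventually_ge_atTop p)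
  filter_upwards [this] with k hk
  rw [dist1_smul_Pt]
  obtain ⟨c, hc⟩ := Nat.dvd_factorial hp hk
  rw [hc, Function.iterate_mul]
  exact le_of_eq (congrArg _ (Function.iterate_fixed h c))

/-- Conversely, an element which moves `Pt φ b` to `Pt φ a` has infinitely many iterates in a
fixed ball, hence is periodic because `tw φ a b` is injective. -/
theorem exists_periodic_of_smul_Pt [Finite α] {φ : FreeGroup α →* FreeGroup α}
    (hφ : Function.Injective φ) {a b g : FreeGroup α} (h : g • Pt φ b = Pt φ a) :
    ∃ p > 0, (tw φ a b)^[p] g = g := by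
  obtain ⟨R, hR⟩ := Tinf.mk_eq.1 h
  have hinf : {k : ℕ | dist1 (facIter φ k g * (cocyc φ b k.factorial)⁻¹)
      (cocyc φ a k.factorial)⁻¹ ≤ R}.Infinite := by
    intro hfin
    exact Filter.notMem_hyperfilter_of_finite hfin hR
  have hinf' : (Nat.factorial '' ({k : ℕ | dist1 (facIter φ k g * (cocyc φ b k.factorial)⁻¹)
      (cocyc φ a k.factorial)⁻¹ ≤ R} \ {0})).Infinite := by
    refine Set.Infinite.image ?_ (hinf.sdiff (Set.finite_singleton 0))
    rintro x ⟨_, hx⟩ y ⟨_, hy⟩ hxy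
    have hx0 : x ≠ 0 := hx
    have hy0 : y ≠ 0 := hy
    rcases lt_trichotomy x y with h | h | h
    · exact absurd hxy ((Nat.factorial_lt (Nat.pos_of_ne_zero hx0)).2 h).ne
    · exact h
    · exact absurd hxy ((Nat.factorial_lt (Nat.pos_of_ne_zero hy0)).2 h).ne'
  have hmaps : Set.MapsTo (fun N => (tw φ a b)^[N] g)
      (Nat.factorial '' ({k : ℕ | dist1 (facIter φ k g * (cocyc φ b k.factorial)⁻¹)
      (cocyc φ a k.factorial)⁻¹ ≤ R} \ {0})) {x | x.norm ≤ R} := by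
    rintro _ ⟨k, ⟨hk, _⟩, rfl⟩
    rw [Set.mem_ofPred_eq, dist1_smul_Pt] at hk
    exact hk
  obtain ⟨x, _, y, _, hlt, he⟩ := hinf'.exists_lt_map_eq_of_mapsTo hmaps (finite_ball R)
  refine ⟨y - x, by omega, ?_⟩
  apply (tw_injective hφ a b).iterate x
  rw [← Function.iterate_add_apply, he]
  congr 1; omega

/-- A direction at `Pt φ b` given by an attracting fixed word of `i_b ∘ φ` determines this word,
even up to the action of `F`. -/
theorem germ_attracting [Finite α] {φ : FreeGroup α →* FreeGroup α} (hφ : Function.Injective φ)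
    {a b h : FreeGroup α} (hh : h • Pt φ b = Pt φ a) {W W' : InfWord α} {i j : ℕ}
    (hi : ∀ g, i ≤ wedgeF W g → wedgeF W g + 1 ≤ wedgeF W (((innerAut b).comp φ) g))
    (hj : ∀ g, j ≤ wedgeF W' g → wedgeF W' g + 1 ≤ wedgeF W' (((innerAut a).comp φ) g))
    (hD : Dinf (facIter φ) (Pt φ a) (h • wordPrefix W i • Pt φ b) (wordPrefix W' j • Pt φ a)) :
    tw φ a b h = h ∧ Act h W W' := by
  obtain ⟨p, hp, hper⟩ := exists_periodic_of_smul_Pt hφ hh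
  have hself (c : FreeGroup α) : tw φ c c = ((innerAut c).comp φ) := funext fun Y => tw_self φ c Y
  -- points near `W` which are moved by `h` near `W'`
  have key : ∀ R, ∃ y, R ≤ wedgeF W y ∧ R ≤ wedgeF W' (h * y) := by
    intro R
    have hlarge : ∀ᶠ k in (hyperfilter ℕ : Filter ℕ), p + R ≤ k :=
      Nat.hyperfilter_le_atTop (eventually_ge_atTop _)
    rw [← mul_smul] at hD
    obtain ⟨k, hk, hk'⟩ := (hlarge.and (Dinf_mk.1 hD R)).exists
    have hRk : R ≤ k.factorial := by have := Nat.self_le_factorial k; omega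
    refine ⟨((innerAut b).comp φ)^[k.factorial] (wordPrefix W i), ?_, ?_⟩
    · have := wedgeF_iterate hi (wordPrefix W i) (wedgeF_wordPrefix W i).ge k.factorial
      omega
    · have h1 := wedgeF_iterate hj (wordPrefix W' j) (wedgeF_wordPrefix W' j).ge k.factorial
      have h2 : h * ((innerAut b).comp φ)^[k.factorial] (wordPrefix W i) =
          (tw φ a b)^[k.factorial] (h * wordPrefix W i) := by
        rw [tw_iterate_mul φ a b b, hself]
        obtain ⟨c, hc⟩ := Nat.dvd_factorial hp (show p ≤ k by omega)
        congr 1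
        rw [hc, Function.iterate_mul]
        exact (Function.iterate_fixed hper c).symm
      rw [h2]
      have h3 := wedgeF_hyp W' (((innerAut a).comp φ)^[k.factorial] (wordPrefix W' j))
        ((tw φ a b)^[k.factorial] (h * wordPrefix W i))
      have h4 : R ≤ gp 1 (((innerAut a).comp φ)^[k.factorial] (wordPrefix W' j))
        ((tw φ a b)^[k.factorial] (h * wordPrefix W i)) := by
        rw [← gp_mul (cocyc φ a k.factorial), mul_inv_cancel, gp_comm] at hk'
        rw [← hself, tw_iterate, tw_iterate]
        simpa only [facIter, mul_assoc] using hk'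
      omega
  have hact : Act h W W' := key
  have hact' : Act (tw φ a b h) W W' := by
    intro R
    obtain ⟨y, h1, h2⟩ := key (R + i + j + a.norm + b.norm)
    refine ⟨((innerAut b).comp φ) y, ?_, ?_⟩
    · have := hi y (by omega)
      omega
    · have h3 := hj (h * y) (by omega)
      have h4 := wedgeF_mul_right W' (((innerAut a).comp φ) (h * y)) (a * b⁻¹)
      have h5 := FreeGroup.norm_mul_le a b⁻¹
      rw [FreeGroup.norm_inv_eq] at h5
      have h6 : tw φ a b h * ((innerAut b).comp φ) y =
          ((innerAut a).comp φ) (h * y) * (a * b⁻¹) := by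
        rw [← tw_self, ← tw_self, ← tw_mul]
        simp [tw]
      rw [h6]
      omega
  have ht : Act (h⁻¹ * tw φ a b h) W W := hact.inv.mul hact'
  have hper' : ((innerAut b).comp φ)^[p] (h⁻¹ * tw φ a b h) = h⁻¹ * tw φ a b h := by
    have e1 := tw_iterate_mul φ a b b h (h⁻¹ * tw φ a b h) p
    rw [mul_inv_cancel_left, hper, hself, ← Function.iterate_succ_apply,
      Function.iterate_succ_apply', hper] at e1
    exact (eq_inv_mul_of_mul_eq e1.symm)
  have := eq_one_of_act hi ht hp hper'
  exact ⟨(inv_mul_eq_one.1 this).symm, hact⟩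

theorem similar_of_tw_eq {φ : FreeGroup α →* FreeGroup α} {a b h : FreeGroup α}
    (hh : tw φ a b h = h) : Similar ((innerAut b).comp φ) ((innerAut a).comp φ) := by
  refine ⟨h, ?_⟩
  ext x
  have e : h⁻¹ * a * φ h = b := by
    have : h * b = a * φ h := by
      conv_lhs => rw [← hh]
      simp [tw]
    rw [mul_assoc, ← this, inv_mul_cancel_left]
  simp only [MonoidHom.comp_apply, innerAut_apply, map_mul, map_inv]
  rw [← e]
  group

/-- A long prefix of an attracting word moves the point: its iterates grow without bound. -/
theorem wordPrefix_smul_Pt_ne {φ : FreeGroup α →* FreeGroup α} {b : FreeGroup α}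
    {W : InfWord α} {i : ℕ}
    (hi : ∀ g, i ≤ wedgeF W g → wedgeF W g + 1 ≤ wedgeF W (((innerAut b).comp φ) g)) :
    wordPrefix W i • Pt φ b ≠ Pt φ b := by
  intro h
  obtain ⟨R, hR⟩ := Tinf.mk_eq.1 h
  have hlarge : ∀ᶠ k in (hyperfilter ℕ : Filter ℕ), R + 1 ≤ k :=
    Nat.hyperfilter_le_atTop (eventually_ge_atTop _)
  obtain ⟨k, h1, h2⟩ := (hR.and hlarge).exists
  rw [dist1_smul_Pt] at h1
  have h3 := wedgeF_iterate hi (wordPrefix W i) (wedgeF_wordPrefix W i).ge k.factorial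
  have h4 := wedgeF_le_norm W (((innerAut b).comp φ)^[k.factorial] (wordPrefix W i))
  have h5 := Nat.self_le_factorial k
  have hself : tw φ b b = ((innerAut b).comp φ) := funext fun Y => tw_self φ b Y
  rw [hself] at h1
  omega

end LimitPoints

/-! ### Cuts of a graph -/

section Cuts

variable {V : Type*} {R : V → V → Prop}

/-- The edges of the graph `R` which leave the set `A`. -/
def bd (R : V → V → Prop) (A : Set V) : Set (V × V) := {e | R e.1 e.2 ∧ e.1 ∈ A ∧ e.2 ∉ A}

/-- The set `C` spans a connected subgraph: every proper nonempty part of `C` is joined to the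
rest of `C` by an edge. -/
def Conn (R : V → V → Prop) (C : Set V) : Prop :=
  ∀ A, (C ∩ A).Nonempty → (C \ A).Nonempty → ∃ x ∈ C ∩ A, ∃ y ∈ C \ A, R x y

/-- Only finitely many cuts of bounded size with both sides connected separate two given
vertices. -/
theorem finite_cuts (k : ℕ) : ∀ (R : V → V → Prop), (∀ x y, R x y → R y x) → ∀ p q : V,
    {C : Set V | Conn R C ∧ Conn R Cᶜ ∧ (bd R C).encard ≤ k ∧ p ∈ C ∧ q ∉ C}.Finite := by
  induction k with
  | zero =>
    intro R _ p q
    refine Set.Subsingleton.finite ?_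
    have key : ∀ C C' : Set V, Conn R C → bd R C' = ∅ → p ∈ C → p ∈ C' → C ⊆ C' := by
      intro C C' hC hC' hp hp'
      by_contra hcon
      obtain ⟨y, hy, hy'⟩ := Set.not_subset.1 hcon
      obtain ⟨a, ha, b, hb, hab⟩ := hC C' ⟨p, hp, hp'⟩ ⟨y, hy, hy'⟩
      have : (a, b) ∈ bd R C' := ⟨hab, ha.2, hb.2⟩
      rw [hC'] at this
      exact this
    rintro C ⟨h1, _, h3, h4, _⟩ C' ⟨h1', _, h3', h4', _⟩
    have e : bd R C = ∅ := by simpa using h3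
    have e' : bd R C' = ∅ := by simpa using h3'
    exact (key C C' h1 e' h4 h4').antisymm (key C' C h1' e h4' h4)
  | succ k ih =>
    intro R hsymm p q
    by_cases hpq : Relation.ReflTransGen R p q
    · induction hpq with
      | refl => exact Set.Finite.subset Set.finite_empty fun C hC => hC.2.2.2.2 hC.2.2.2.1
      | @tail x y _ hxy ihp =>
        -- the cuts containing the edge `(x, y)` become smaller after removing this edge
        let R' : V → V → Prop := fun a b => R a b ∧ (a, b) ≠ (x, y) ∧ (a, b) ≠ (y, x)
        have hfin := ih R' (by
          rintro a b ⟨h1, h2, h3⟩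
          refine ⟨hsymm _ _ h1, fun h => h3 ?_, fun h => h2 ?_⟩
          · rw [Prod.mk.injEq] at h ⊢; exact ⟨h.2, h.1⟩
          · rw [Prod.mk.injEq] at h ⊢; exact ⟨h.2, h.1⟩) x y
        refine (ihp.union hfin).subset ?_
        rintro C ⟨h1, h2, h3, h4, h5⟩
        by_cases hx : x ∈ C
        · right
          refine ⟨?_, ?_, ?_, hx, h5⟩
          · intro A hA hA'
            obtain ⟨a, ha, b, hb, hab⟩ := h1 A hA hA'
            refine ⟨a, ha, b, hb, hab, ?_, ?_⟩
            · rintro h; rw [Prod.mk.injEq] at h; exact h5 (h.2 ▸ hb.1)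
            · rintro h; rw [Prod.mk.injEq] at h; exact h5 (h.1 ▸ ha.1)
          · intro A hA hA'
            obtain ⟨a, ha, b, hb, hab⟩ := h2 A hA hA'
            refine ⟨a, ha, b, hb, hab, ?_, ?_⟩
            · rintro h; rw [Prod.mk.injEq] at h; exact ha.1 (h.1 ▸ hx)
            · rintro h; rw [Prod.mk.injEq] at h; exact hb.1 (h.2 ▸ hx)
          · have hmem : (x, y) ∈ bd R C := ⟨hxy, hx, h5⟩
            have hsub : bd R' C ⊆ bd R C \ {(x, y)} := fun e he => ⟨⟨he.1.1, he.2⟩, he.1.2.1⟩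
            have e1 := Set.encard_sdiff_singleton_add_one hmem
            have e2 := Set.encard_le_encard hsub
            have e3 : (bd R C \ {(x, y)}).encard + 1 ≤ (k : ℕ∞) + 1 := by
              rw [e1]; exact_mod_cast h3
            exact e2.trans ((ENat.add_le_add_iff_right (by simp)).1 e3)
        · left
          exact ⟨h1, h2, h3, h4, hx⟩
    · refine Set.Subsingleton.finite ?_
      have key : ∀ C, (Conn R C ∧ Conn R Cᶜ ∧ (bd R C).encard ≤ (k + 1 : ℕ) ∧ p ∈ C ∧ q ∉ C) →
          C = {z | Relation.ReflTransGen R p z} := by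
        rintro C ⟨h1, h2, _, h4, h5⟩
        ext z
        constructor
        · intro hz
          by_contra hcon
          obtain ⟨a, ha, b, hb, hab⟩ := h1 {z | Relation.ReflTransGen R p z}
            ⟨p, h4, Relation.ReflTransGen.refl⟩ ⟨z, hz, hcon⟩
          exact hb.2 (Relation.ReflTransGen.tail ha.2 hab)
        · intro hz
          by_contra hcon
          obtain ⟨a, ha, b, hb, hab⟩ := h2 {z | Relation.ReflTransGen R p z}
            ⟨z, hcon, hz⟩ ⟨q, h5, hpq⟩
          exact hb.2 (Relation.ReflTransGen.tail ha.2 hab)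
      intro C hC C' hC'
      rw [key C hC, key C' hC']

theorem bd_compl (hR : ∀ x y, R x y → R y x) (A : Set V) : bd R Aᶜ = Prod.swap '' bd R A := by
  ext ⟨x, y⟩
  simp only [bd, Set.mem_image, Set.mem_ofPred_eq, Set.mem_compl_iff, not_not, Prod.exists,
    Prod.swap_prod_mk, Prod.mk.injEq]
  constructor
  · rintro ⟨h1, h2, h3⟩
    exact ⟨y, x, ⟨hR _ _ h1, h3, h2⟩, rfl, rfl⟩
  · rintro ⟨a, b, ⟨h1, h2, h3⟩, rfl, rfl⟩
    exact ⟨hR _ _ h1, h3, h2⟩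

theorem ncard_bd_compl (hR : ∀ x y, R x y → R y x) (A : Set V) :
    (bd R Aᶜ).ncard = (bd R A).ncard := by
  rw [bd_compl hR, Set.ncard_image_of_injective _ Prod.swap_injective]

theorem finite_bd_compl (hR : ∀ x y, R x y → R y x) {A : Set V} (h : (bd R A).Finite) :
    (bd R Aᶜ).Finite := by
  rw [bd_compl hR]; exact h.image _

theorem bd_union_subset (A B : Set V) : bd R (A ∪ B) ⊆ bd R A ∪ bd R B := by
  rintro e ⟨h1, h2 | h2, h3⟩
  · exact Or.inl ⟨h1, h2, fun h => h3 (Or.inl h)⟩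
  · exact Or.inr ⟨h1, h2, fun h => h3 (Or.inr h)⟩

theorem bd_inter_subset (A B : Set V) : bd R (A ∩ B) ⊆ bd R A ∪ bd R B := by
  rintro e ⟨h1, h2, h3⟩
  by_cases h : e.2 ∈ A
  · exact Or.inr ⟨h1, h2.2, fun h' => h3 ⟨h, h'⟩⟩
  · exact Or.inl ⟨h1, h2.1, h⟩

/-- Submodularity of the size of the edge boundary. -/
theorem ncard_bd_submodular {A B : Set V} (hA : (bd R A).Finite) (hB : (bd R B).Finite) :
    (bd R (A ∩ B)).ncard + (bd R (A ∪ B)).ncard ≤ (bd R A).ncard + (bd R B).ncard := by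
  have h1 := (hA.union hB).subset (bd_inter_subset A B)
  have h2 := (hA.union hB).subset (bd_union_subset A B)
  rw [← Set.ncard_union_add_ncard_inter _ _ h1 h2, ← Set.ncard_union_add_ncard_inter _ _ hA hB]
  refine Nat.add_le_add (Set.ncard_le_ncard
    (Set.union_subset (bd_inter_subset A B) (bd_union_subset A B)) (hA.union hB))
    (Set.ncard_le_ncard ?_ (hA.inter_of_left _))
  rintro e ⟨⟨h1, h2, _⟩, ⟨_, _, h3⟩⟩
  exact ⟨⟨h1, h2.1, fun h => h3 (Or.inl h)⟩, ⟨h1, h2.2, fun h => h3 (Or.inr h)⟩⟩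

/-- Two sets cross if all four corners are nonempty. -/
def Crosses (A B : Set V) : Prop :=
  (A ∩ B).Nonempty ∧ (A ∩ Bᶜ).Nonempty ∧ (Aᶜ ∩ B).Nonempty ∧ (Aᶜ ∩ Bᶜ).Nonempty

theorem Crosses.symm {A B : Set V} (h : Crosses A B) : Crosses B A := by
  obtain ⟨h1, h2, h3, h4⟩ := h
  rw [Set.inter_comm] at h1 h2 h3 h4
  exact ⟨h1, h3, h2, h4⟩

theorem Crosses.compl_right {A B : Set V} (h : Crosses A B) : Crosses A Bᶜ := by
  obtain ⟨h1, h2, h3, h4⟩ := h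
  unfold Crosses
  rw [compl_compl]
  exact ⟨h2, h1, h4, h3⟩

/-- The cuts with at most `L` boundary edges and both sides connected. -/
def thin (R : V → V → Prop) (L : ℕ) : Set (Set V) :=
  {D | Conn R D ∧ Conn R Dᶜ ∧ (bd R D).encard ≤ L}

/-- Only finitely many thin cuts cross a given cut with finite boundary. -/
theorem finite_crossing (hR : ∀ x y, R x y → R y x) (L : ℕ) {A : Set V} (hA : (bd R A).Finite) :
    {D | D ∈ thin R L ∧ Crosses D A}.Finite := by
  refine (hA.biUnion fun e _ => hA.biUnion fun e' _ => finite_cuts L R hR e.1 e'.1).subset ?_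
  rintro D ⟨⟨h1, h2, h3⟩, c1, c2, c3, c4⟩
  obtain ⟨x, hx, y, hy, hxy⟩ := h1 A c1 c2
  obtain ⟨x', hx', y', hy', hxy'⟩ := h2 A c3 c4
  simp only [Set.mem_iUnion]
  exact ⟨(x, y), ⟨hxy, hx.2, hy.2⟩, (x', y'), ⟨hxy', hx'.2, hy'.2⟩, h1, h2, h3, hx.1, hx'.1⟩

/-- The number of thin cuts which cross `A`. -/
noncomputable def mu (R : V → V → Prop) (L : ℕ) (A : Set V) : ℕ :=
  {D | D ∈ thin R L ∧ Crosses D A}.ncard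

theorem mu_compl (L : ℕ) (A : Set V) : mu R L Aᶜ = mu R L A := by
  unfold mu
  congr 1
  ext D
  refine and_congr_right fun _ => ⟨fun h => ?_, fun h => h.compl_right⟩
  have := h.compl_right
  rwa [compl_compl] at this

/-- A crossing pair of cuts, the first one thin, crosses strictly more thin cuts in total than two
opposite corners do. -/
theorem mu_lt (hR : ∀ x y, R x y → R y x) {L : ℕ} {A B : Set V} (hA : A ∈ thin R L)
    (hAf : (bd R A).Finite) (hBf : (bd R B).Finite) (hc : Crosses A B) :
    mu R L (A ∩ B) + mu R L (A ∪ B) < mu R L A + mu R L B := by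
  have hX := finite_crossing hR L ((hAf.union hBf).subset (bd_inter_subset A B))
  have hY := finite_crossing hR L ((hAf.union hBf).subset (bd_union_subset A B))
  have hA' := finite_crossing hR L hAf
  have hB' := finite_crossing hR L hBf
  unfold mu
  rw [← Set.ncard_union_add_ncard_inter _ _ hX hY, ← Set.ncard_union_add_ncard_inter _ _ hA' hB']
  obtain ⟨c1, c2, c3, c4⟩ := id hc
  refine Nat.add_lt_add_of_lt_of_le (Set.ncard_lt_ncard ?_ (hA'.union hB'))
    (Set.ncard_le_ncard ?_ (hA'.inter_of_left _))
  · refine ⟨?_, fun h => ?_⟩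
    · rintro D (⟨hD, d1, d2, d3, d4⟩ | ⟨hD, d1, d2, d3, d4⟩)
      · by_contra hcon
        simp only [Set.mem_union, Set.mem_ofPred_eq, hD, true_and, not_or, Crosses] at hcon
        simp only [Set.Nonempty, Set.mem_inter_iff, Set.mem_compl_iff] at *
        grind
      · by_contra hcon
        simp only [Set.mem_union, Set.mem_ofPred_eq, hD, true_and, not_or, Crosses] at hcon
        simp only [Set.Nonempty, Set.mem_inter_iff, Set.mem_compl_iff, Set.mem_union] at *
        grind
    · have := h (show A ∈ _ from Or.inr ⟨hA, hc⟩)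
      rcases this with ⟨_, d1, d2, d3, d4⟩ | ⟨_, d1, d2, d3, d4⟩
      · obtain ⟨x, hx, hx'⟩ := d3
        exact hx hx'.1
      · obtain ⟨x, hx, hx'⟩ := d2
        exact hx' (Or.inl hx)
  · rintro D ⟨⟨hD, d1, d2, d3, d4⟩, ⟨_, e1, e2, e3, e4⟩⟩
    refine ⟨⟨hD, ?_, ?_, ?_, ?_⟩, hD, ?_, ?_, ?_, ?_⟩
    · exact d1.mono fun x hx => ⟨hx.1, hx.2.1⟩
    · exact e2.mono fun x hx => ⟨hx.1, fun h => hx.2 (Or.inl h)⟩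
    · exact d3.mono fun x hx => ⟨hx.1, hx.2.1⟩
    · exact e4.mono fun x hx => ⟨hx.1, fun h => hx.2 (Or.inl h)⟩
    · exact d1.mono fun x hx => ⟨hx.1, hx.2.2⟩
    · exact e2.mono fun x hx => ⟨hx.1, fun h => hx.2 (Or.inr h)⟩
    · exact d3.mono fun x hx => ⟨hx.1, hx.2.2⟩
    · exact e4.mono fun x hx => ⟨hx.1, fun h => hx.2 (Or.inr h)⟩

end Cuts

section Cuts

variable {V : Type*} {R : V → V → Prop}

/-- The Boolean algebra of sets generated by `S`. -/
inductive Gen (S : Set (Set V)) : Set V → Prop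
  | base {A : Set V} (h : A ∈ S) : Gen S A
  | empty : Gen S ∅
  | compl {A : Set V} (h : Gen S A) : Gen S Aᶜ
  | union {A B : Set V} (hA : Gen S A) (hB : Gen S B) : Gen S (A ∪ B)

theorem Gen.bind {S T : Set (Set V)} (hST : ∀ A ∈ S, Gen T A) {A : Set V} (h : Gen S A) :
    Gen T A := by
  induction h with
  | base h => exact hST _ h
  | empty => exact Gen.empty
  | compl _ ih => exact ih.compl
  | union _ _ ih1 ih2 => exact ih1.union ih2

theorem Gen.of_compl {S : Set (Set V)} {A : Set V} (h : Gen S Aᶜ) : Gen S A := by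
  have := h.compl
  rwa [compl_compl] at this

/-- The complexity of a cut: first the size of its boundary, then the number of thin cuts
which cross it. -/
noncomputable def cr (R : V → V → Prop) (L : ℕ) (A : Set V) : ℕ ×ₗ ℕ :=
  toLex ((bd R A).ncard, mu R L A)

/-- The sets with finite boundary which are less complex than `A`. -/
def Small (R : V → V → Prop) (L : ℕ) (A : Set V) : Set (Set V) :=
  {C | (bd R C).Finite ∧ cr R L C < cr R L A}

/-- The cuts with at most `L` boundary edges which are not generated by less complex cuts. -/
def good (R : V → V → Prop) (L : ℕ) : Set (Set V) :=
  {A | (bd R A).Finite ∧ (bd R A).ncard ≤ L ∧ ¬ Gen (Small R L A) A}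

theorem cr_compl (hR : ∀ x y, R x y → R y x) (L : ℕ) (A : Set V) : cr R L Aᶜ = cr R L A := by
  unfold cr
  rw [ncard_bd_compl hR, mu_compl]

theorem Small_compl (hR : ∀ x y, R x y → R y x) (L : ℕ) (A : Set V) :
    Small R L Aᶜ = Small R L A := by
  unfold Small
  rw [cr_compl hR]

theorem good_compl (hR : ∀ x y, R x y → R y x) {L : ℕ} {A : Set V} (h : A ∈ good R L) :
    Aᶜ ∈ good R L := by
  obtain ⟨h1, h2, h3⟩ := h
  refine ⟨finite_bd_compl hR h1, by rwa [ncard_bd_compl hR], fun h => h3 ?_⟩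
  rw [Small_compl hR] at h
  exact h.of_compl

/-- A good cut is connected: otherwise it would be generated by its pieces, which have smaller
boundaries. -/
theorem good_conn (hR : ∀ x y, R x y → R y x) (hV : Conn R Set.univ) {L : ℕ} {A : Set V}
    (h : A ∈ good R L) : Conn R A := by
  intro A' h1 h2
  by_contra hcon
  push Not at hcon
  have hb1 : bd R (A ∩ A') ⊆ bd R A := by
    rintro ⟨x, y⟩ ⟨e1, e2, e3⟩
    exact ⟨e1, e2.1, fun hy => hcon x e2 y ⟨hy, fun h => e3 ⟨hy, h⟩⟩ e1⟩
  have hb2 : bd R (A \ A') ⊆ bd R A := by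
    rintro ⟨x, y⟩ ⟨e1, e2, e3⟩
    exact ⟨e1, e2.1, fun hy => hcon y ⟨hy, by by_contra h; exact e3 ⟨hy, h⟩⟩ x e2 (hR _ _ e1)⟩
  have hn1 : (bd R (A ∩ A')).Nonempty := by
    obtain ⟨x, hx⟩ := h1
    obtain ⟨y, hy⟩ := h2
    obtain ⟨a, ha, b, hb, hab⟩ := hV (A ∩ A') ⟨x, trivial, hx⟩ ⟨y, trivial, fun h => hy.2 h.2⟩
    exact ⟨(a, b), hab, ha.2, hb.2⟩
  have hn2 : (bd R (A \ A')).Nonempty := by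
    obtain ⟨x, hx⟩ := h1
    obtain ⟨y, hy⟩ := h2
    obtain ⟨a, ha, b, hb, hab⟩ := hV (A \ A') ⟨y, trivial, hy⟩ ⟨x, trivial, fun h => h.2 hx.2⟩
    exact ⟨(a, b), hab, ha.2, hb.2⟩
  have hl1 : (bd R (A ∩ A')).ncard < (bd R A).ncard := by
    refine Set.ncard_lt_ncard ⟨hb1, fun h' => ?_⟩ h.1
    obtain ⟨e, he⟩ := hn2
    exact he.2.1.2 (h' (hb2 he)).2.1.2
  have hl2 : (bd R (A \ A')).ncard < (bd R A).ncard := by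
    refine Set.ncard_lt_ncard ⟨hb2, fun h' => ?_⟩ h.1
    obtain ⟨e, he⟩ := hn1
    exact (h' (hb1 he)).2.1.2 he.2.1.2
  refine h.2.2 ?_
  have : A = (A ∩ A') ∪ (A \ A') := (Set.inter_union_sdiff A A').symm
  have key : Gen (Small R L A) ((A ∩ A') ∪ (A \ A')) := by
    refine Gen.union (Gen.base ⟨h.1.subset hb1, ?_⟩) (Gen.base ⟨h.1.subset hb2, ?_⟩)
    · exact Prod.Lex.toLex_lt_toLex.2 (Or.inl hl1)
    · exact Prod.Lex.toLex_lt_toLex.2 (Or.inl hl2)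
  rwa [← this] at key

theorem good_thin (hR : ∀ x y, R x y → R y x) (hV : Conn R Set.univ) {L : ℕ} {A : Set V}
    (h : A ∈ good R L) : A ∈ thin R L := by
  refine ⟨good_conn hR hV h, good_conn hR hV (good_compl hR h), ?_⟩
  rw [← h.1.cast_ncard_eq]
  exact_mod_cast h.2.1

/-- Two opposite corners of a crossing pair of cuts cannot be at least as complex as the two cuts,
in either order, by submodularity of the boundary and of `mu`. -/
theorem not_cr_le (hR : ∀ x y, R x y → R y x) {L : ℕ} {A B : Set V} (hA : A ∈ thin R L)
    (hAf : (bd R A).Finite) (hBf : (bd R B).Finite) (hc : Crosses A B) :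
    ¬ (cr R L A ≤ cr R L (A ∩ B) ∧ cr R L B ≤ cr R L (Aᶜ ∩ Bᶜ)) ∧
    ¬ (cr R L B ≤ cr R L (A ∩ B) ∧ cr R L A ≤ cr R L (Aᶜ ∩ Bᶜ)) := by
  have h1 := mu_lt hR hA hAf hBf hc
  have h2 := ncard_bd_submodular hAf hBf
  rw [← Set.compl_union, cr_compl hR]
  simp only [cr, Prod.Lex.toLex_le_toLex]
  omega

/-- Good cuts do not cross. -/
theorem good_nested (hR : ∀ x y, R x y → R y x) (hV : Conn R Set.univ) {L : ℕ} {A B : Set V}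
    (hA : A ∈ good R L) (hB : B ∈ good R L) : ¬ Crosses A B := by
  wlog hle : cr R L A ≤ cr R L B generalizing A B
  · exact fun h => this hB hA (le_of_not_ge hle) h.symm
  intro hc
  have hsub : Small R L A ⊆ Small R L B := fun C hC => ⟨hC.1, hC.2.trans_le hle⟩
  have weak : ∀ {C}, ¬ Gen (Small R L B) C → ¬ Gen (Small R L A) C := fun h h' =>
    h (h'.bind fun D hD => Gen.base (hsub hD))
  have ge : ∀ {C D : Set V}, (bd R C).Finite → ¬ Gen (Small R L D) C → cr R L D ≤ cr R L C :=
    fun hf h => not_lt.1 fun hlt => h (Gen.base ⟨hf, hlt⟩)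
  have hA' := good_compl hR hA
  have hB' := good_compl hR hB
  have split : ∀ {S : Set (Set V)} {C C1 C2 : Set V}, ¬ Gen S C → C = C1 ∪ C2 →
      ¬ Gen S C1 ∨ ¬ Gen S C2 := by
    intro S C C1 C2 h e
    by_contra hcon
    push Not at hcon
    exact h (e ▸ hcon.1.union hcon.2)
  have f1 : (bd R (A ∩ B)).Finite := (hA.1.union hB.1).subset (bd_inter_subset _ _)
  have f2 : (bd R (A ∩ Bᶜ)).Finite := (hA.1.union hB'.1).subset (bd_inter_subset _ _)
  have f3 : (bd R (Aᶜ ∩ B)).Finite := (hA'.1.union hB.1).subset (bd_inter_subset _ _)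
  have f4 : (bd R (Aᶜ ∩ Bᶜ)).Finite := (hA'.1.union hB'.1).subset (bd_inter_subset _ _)
  have s1 : ¬ Gen (Small R L B) (A ∩ B) ∨ ¬ Gen (Small R L B) (Aᶜ ∩ B) :=
    split hB.2.2 (by rw [← Set.union_inter_distrib_right, Set.union_compl_self, Set.univ_inter])
  have s2 : ¬ Gen (Small R L B) (A ∩ Bᶜ) ∨ ¬ Gen (Small R L B) (Aᶜ ∩ Bᶜ) :=
    split (fun h => hB.2.2 h.of_compl)
      (by rw [← Set.union_inter_distrib_right, Set.union_compl_self, Set.univ_inter])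
  have w1 : ¬ Gen (Small R L A) (A ∩ B) ∨ ¬ Gen (Small R L A) (A ∩ Bᶜ) :=
    split hA.2.2 (by rw [← Set.inter_union_distrib_left, Set.union_compl_self, Set.inter_univ])
  have w2 : ¬ Gen (Small R L A) (Aᶜ ∩ B) ∨ ¬ Gen (Small R L A) (Aᶜ ∩ Bᶜ) :=
    split (fun h => hA.2.2 h.of_compl)
      (by rw [← Set.inter_union_distrib_left, Set.union_compl_self, Set.inter_univ])
  have hAt := good_thin hR hV hA
  have n1 := not_cr_le hR hAt hA.1 hB.1 hc
  have n2 := not_cr_le hR hAt hA.1 hB'.1 hc.compl_right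
  rw [compl_compl, cr_compl hR L B] at n2
  -- one of the two pairs of opposite corners consists of a corner which is not generated below
  -- `B` and a corner which is not generated below `A`
  rcases s1 with s1 | s3
  · by_cases w4 : Gen (Small R L A) (Aᶜ ∩ Bᶜ)
    · have s2' := s2.resolve_right fun h => weak h w4
      exact n2.2 ⟨ge f2 s2', ge f3 (w2.resolve_right (not_not.2 w4))⟩
    · exact n1.2 ⟨ge f1 s1, ge f4 w4⟩
  · by_cases w2' : Gen (Small R L A) (A ∩ Bᶜ)
    · have s4 := s2.resolve_left fun h => weak h w2'
      exact n1.1 ⟨ge f1 (w1.resolve_right (not_not.2 w2')), ge f4 s4⟩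
    · exact n2.1 ⟨ge f2 w2', ge f3 s3⟩

/-- Good cuts generate all cuts with at most `L` boundary edges. -/
theorem gen_good {L : ℕ} (A : Set V) (hf : (bd R A).Finite) (hL : (bd R A).ncard ≤ L) :
    Gen (good R L) A := by
  induction hc : cr R L A using WellFoundedLT.induction generalizing A with
  | _ c ih =>
    by_cases hG : Gen (Small R L A) A
    · refine hG.bind fun C hC => ih (cr R L C) (hc ▸ hC.2) C hC.1 ?_ rfl
      have := hC.2
      simp only [cr, Prod.Lex.toLex_lt_toLex] at this
      omega
    · exact Gen.base ⟨hf, hL, hG⟩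

theorem bd_image (e : V ≃ V) (he : ∀ x y, R (e x) (e y) ↔ R x y) (A : Set V) :
    bd R (e '' A) = Prod.map e e '' bd R A := by
  ext ⟨x, y⟩
  simp only [bd, Set.mem_image, Set.mem_ofPred_eq, Prod.exists, Prod.map_apply, Prod.mk.injEq]
  constructor
  · rintro ⟨h1, ⟨a, ha, rfl⟩, h3⟩
    refine ⟨a, e.symm y, ⟨?_, ha, fun h => h3 ⟨_, h, by simp⟩⟩, rfl, by simp⟩
    rw [← he]; simpa using h1
  · rintro ⟨a, b, ⟨h1, h2, h3⟩, rfl, rfl⟩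
    refine ⟨(he _ _).2 h1, ⟨a, h2, rfl⟩, ?_⟩
    rintro ⟨b', hb', h⟩
    exact h3 (e.injective h ▸ hb')

theorem Conn_image (e : V ≃ V) (he : ∀ x y, R (e x) (e y) ↔ R x y) {C : Set V} (h : Conn R C) :
    Conn R (e '' C) := by
  rintro A ⟨_, ⟨x, hx, rfl⟩, hxA⟩ ⟨_, ⟨y, hy, rfl⟩, hyA⟩
  obtain ⟨a, ha, b, hb, hab⟩ := h (e ⁻¹' A) ⟨x, hx, hxA⟩ ⟨y, hy, hyA⟩
  exact ⟨e a, ⟨⟨a, ha.1, rfl⟩, ha.2⟩, e b, ⟨⟨b, hb.1, rfl⟩, hb.2⟩, (he _ _).2 hab⟩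

theorem thin_image (e : V ≃ V) (he : ∀ x y, R (e x) (e y) ↔ R x y) {L : ℕ} {C : Set V}
    (h : C ∈ thin R L) : e '' C ∈ thin R L := by
  refine ⟨Conn_image e he h.1, ?_, ?_⟩
  · rw [← Set.image_compl_eq e.bijective]; exact Conn_image e he h.2.1
  · rw [bd_image e he, (e.injective.prodMap e.injective).encard_image]; exact h.2.2

theorem Crosses.image (e : V ≃ V) {A B : Set V} (h : Crosses A B) :
    Crosses (e '' A) (e '' B) := by
  unfold Crosses
  simp only [← Set.image_compl_eq e.bijective, ← Set.image_inter e.injective,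
    Set.image_nonempty]
  exact h

theorem mu_image (e : V ≃ V) (he : ∀ x y, R (e x) (e y) ↔ R x y) (L : ℕ) (A : Set V) :
    mu R L (e '' A) = mu R L A := by
  unfold mu
  have : {D | D ∈ thin R L ∧ Crosses D (e '' A)} =
      (fun D => e '' D) '' {D | D ∈ thin R L ∧ Crosses D A} := by
    have he' : ∀ x y, R (e.symm x) (e.symm y) ↔ R x y := fun x y => by
      rw [← he]; simp
    ext D
    constructor
    · rintro ⟨h1, h2⟩
      refine ⟨e.symm '' D, ⟨thin_image e.symm he' h1, ?_⟩, by simp⟩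
      have := h2.image e.symm
      simpa using this
    · rintro ⟨D, ⟨h1, h2⟩, rfl⟩
      exact ⟨thin_image e he h1, h2.image e⟩
  rw [this, Set.ncard_image_of_injective _ (Set.image_injective.2 e.injective)]

theorem cr_image (e : V ≃ V) (he : ∀ x y, R (e x) (e y) ↔ R x y) (L : ℕ) (A : Set V) :
    cr R L (e '' A) = cr R L A := by
  unfold cr
  rw [mu_image e he, bd_image e he,
    Set.ncard_image_of_injective _ (e.injective.prodMap e.injective)]

theorem Gen.image (e : V ≃ V) {S T : Set (Set V)} (hST : ∀ C ∈ S, e '' C ∈ T) {A : Set V}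
    (h : Gen S A) : Gen T (e '' A) := by
  induction h with
  | base h => exact Gen.base (hST _ h)
  | empty => rw [Set.image_empty]; exact Gen.empty
  | compl _ ih => rw [Set.image_compl_eq e.bijective]; exact ih.compl
  | union _ _ ih1 ih2 => rw [Set.image_union]; exact ih1.union ih2

/-- The family of good cuts is invariant under the automorphisms of the graph. -/
theorem good_image (e : V ≃ V) (he : ∀ x y, R (e x) (e y) ↔ R x y) {L : ℕ} {A : Set V}
    (h : A ∈ good R L) : e '' A ∈ good R L := by
  have hi := e.injective.prodMap e.injective
  have he' : ∀ x y, R (e.symm x) (e.symm y) ↔ R x y := fun x y => by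
    rw [← he]; simp
  refine ⟨?_, ?_, fun hG => h.2.2 ?_⟩
  · rw [bd_image e he]; exact h.1.image _
  · rw [bd_image e he, Set.ncard_image_of_injective _ hi]; exact h.2.1
  · have := hG.image e.symm (T := Small R L A) ?_
    · simpa using this
    · rintro C ⟨h1, h2⟩
      refine ⟨?_, ?_⟩
      · rw [bd_image _ he']; exact h1.image _
      · rw [cr_image _ he']; rwa [cr_image e he] at h2

/-- Two vertices are separated by finitely many good cuts. -/
theorem finite_good (hR : ∀ x y, R x y → R y x) (hV : Conn R Set.univ) (L : ℕ) (p q : V) :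
    {A | A ∈ good R L ∧ p ∈ A ∧ q ∉ A}.Finite := by
  refine (finite_cuts L R hR p q).subset ?_
  rintro A ⟨h1, h2, h3⟩
  obtain ⟨t1, t2, t3⟩ := good_thin hR hV h1
  exact ⟨t1, t2, t3, h2, h3⟩

theorem good_nonempty {L : ℕ} {A : Set V} (h : A ∈ good R L) : A.Nonempty := by
  rw [Set.nonempty_iff_ne_empty]
  rintro rfl
  exact h.2.2 Gen.empty

theorem good_ne_univ {L : ℕ} {A : Set V} (h : A ∈ good R L) : Aᶜ.Nonempty := by
  rw [Set.nonempty_iff_ne_empty]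
  intro h'
  exact h.2.2 (Gen.of_compl (h' ▸ Gen.empty))

end Cuts

/-! ### The tree of a nested family of cuts -/

section Ori

open scoped Pointwise

variable {V : Type*} {E : Set (Set V)}

/-- A family of nonempty proper subsets of `V`, closed under complements, no two of which cross,
and such that any two points are separated by finitely many of its members. -/
structure TreeSet (E : Set (Set V)) : Prop where
  compl : ∀ {A}, A ∈ E → Aᶜ ∈ E
  nested : ∀ {A B}, A ∈ E → B ∈ E → ¬ Crosses A B
  fin : ∀ p q, {A | A ∈ E ∧ p ∈ A ∧ q ∉ A}.Finite
  nonempty : ∀ {A}, A ∈ E → A.Nonempty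

/-- The vertices of the tree whose oriented edges are the elements of `E`: a vertex is recorded
by the set of the edges which point towards it. -/
def Ori (E : Set (Set V)) : Type _ :=
  {o : Set (Set V) // o ⊆ E ∧ (∀ A ∈ E, A ∈ o ↔ Aᶜ ∉ o) ∧ (∀ A ∈ o, ∀ B ∈ E, A ⊆ B → B ∈ o) ∧
    ∀ p, {A | A ∈ o ∧ p ∉ A}.Finite}

theorem TreeSet.cases (h : TreeSet E) {A B : Set V} (hA : A ∈ E) (hB : B ∈ E) :
    A ⊆ Bᶜ ∨ A ⊆ B ∨ B ⊆ A ∨ Aᶜ ⊆ B := by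
  have := h.nested hA hB
  by_contra hcon
  simp only [not_or, Set.not_subset] at hcon
  obtain ⟨⟨a, a1, a2⟩, ⟨b, b1, b2⟩, ⟨c, c1, c2⟩, ⟨d, d1, d2⟩⟩ := hcon
  exact this ⟨⟨a, a1, not_not.1 a2⟩, ⟨b, b1, b2⟩, ⟨c, c2, c1⟩, ⟨d, d1, d2⟩⟩

namespace Ori

theorem mem_E (o : Ori E) {A : Set V} (hA : A ∈ o.1) : A ∈ E := o.2.1 hA

theorem compl_notMem (o : Ori E) {A : Set V} (hA : A ∈ o.1) : Aᶜ ∉ o.1 :=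
  (o.2.2.1 A (o.2.1 hA)).1 hA

theorem mem_of_compl (o : Ori E) {A : Set V} (hA : A ∈ E) (h : Aᶜ ∉ o.1) : A ∈ o.1 :=
  (o.2.2.1 A hA).2 h

theorem compl_mem (hE : TreeSet E) (o : Ori E) {A : Set V} (hA : A ∈ E) (h : A ∉ o.1) :
    Aᶜ ∈ o.1 :=
  o.mem_of_compl (hE.compl hA) (by rwa [compl_compl])

theorem up (o : Ori E) {A B : Set V} (hA : A ∈ o.1) (hB : B ∈ E) (h : A ⊆ B) : B ∈ o.1 :=
  o.2.2.2.1 A hA B hB h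

theorem eq_of_subset (hE : TreeSet E) {o o' : Ori E} (h : o.1 ⊆ o'.1) : o = o' := by
  refine Subtype.ext (h.antisymm fun A hA => ?_)
  by_contra hcon
  exact o'.compl_notMem hA (h (o.compl_mem hE (o'.mem_E hA) hcon))

/-- `o₁` and `o₂` lie in the same direction from `o`. -/
def dir (o o₁ o₂ : Ori E) : Prop := ∃ A, A ∈ o₁.1 ∧ A ∈ o₂.1 ∧ A ∉ o.1

theorem exists_mem_of_ne (hE : TreeSet E) {o o' : Ori E} (h : o ≠ o') :
    ∃ A, A ∈ o.1 ∧ A ∉ o'.1 := by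
  by_contra hcon
  push Not at hcon
  exact h (eq_of_subset hE hcon)

/-- The vertices of the tree of a nested family form a `Dendron`. The median of three vertices
is given by majority vote. -/
theorem dendron (hE : TreeSet E) : Dendron (dir (E := E)) where
  refl_iff q a := by
    constructor
    · rintro ⟨A, h1, _, h3⟩ rfl
      exact h3 h1
    · intro h
      obtain ⟨A, h1, h2⟩ := exists_mem_of_ne hE h
      exact ⟨A, h1, h1, h2⟩
  symm := by
    rintro q a b ⟨A, h1, h2, h3⟩
    exact ⟨A, h2, h1, h3⟩
  trans := by
    rintro q a b c ⟨A, h1, h2, h3⟩ ⟨B, h4, h5, h6⟩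
    have hA := a.mem_E h1
    have hB := b.mem_E h4
    rcases hE.cases hA hB with h | h | h | h
    · exact absurd (b.up h2 (hE.compl hB) h) (b.compl_notMem h4)
    · exact ⟨B, a.up h1 hB h, h5, h6⟩
    · exact ⟨A, h1, c.up h5 hA h, h3⟩
    · exact absurd (q.up (q.compl_mem hE hA h3) hB h) h6
  sep := by
    intro q q' a hne
    obtain ⟨A, h1, h2⟩ := exists_mem_of_ne hE hne
    have hA := q.mem_E h1
    by_cases h : A ∈ a.1
    · exact Or.inr ⟨A, h, h1, h2⟩
    · exact Or.inl ⟨Aᶜ, a.compl_mem hE hA h, q'.compl_mem hE hA h2, q.compl_notMem h1⟩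
  med a b c := by
    refine ⟨⟨{A | A ∈ E ∧ (A ∈ a.1 ∧ A ∈ b.1 ∨ A ∈ b.1 ∧ A ∈ c.1 ∨ A ∈ a.1 ∧ A ∈ c.1)},
      fun A hA => hA.1, fun A hA => ?_, fun A hA B hB hAB => ⟨hB, ?_⟩, fun p => ?_⟩, ?_, ?_, ?_⟩
    · have h1 := a.2.2.1 A hA
      have h2 := b.2.2.1 A hA
      have h3 := c.2.2.1 A hA
      have h4 := hE.compl hA
      simp only [Set.mem_ofPred_eq, hA, h4, true_and]
      tauto
    · have h1 := fun h => a.up (A := A) h hB hAB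
      have h2 := fun h => b.up (A := A) h hB hAB
      have h3 := fun h => c.up (A := A) h hB hAB
      have := hA.2
      tauto
    · refine ((a.2.2.2.2 p).union (b.2.2.2.2 p)).subset ?_
      rintro A ⟨⟨_, h⟩, hp⟩
      simp only [Set.mem_union, Set.mem_ofPred_eq]
      tauto
    · rintro ⟨A, h1, h2, h3⟩
      exact h3 ⟨a.mem_E h1, Or.inl ⟨h1, h2⟩⟩
    · rintro ⟨A, h1, h2, h3⟩
      exact h3 ⟨b.mem_E h1, Or.inr (Or.inl ⟨h1, h2⟩)⟩
    · rintro ⟨A, h1, h2, h3⟩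
      exact h3 ⟨a.mem_E h1, Or.inr (Or.inr ⟨h1, h2⟩)⟩

theorem finite_diff (hE : TreeSet E) [Nonempty V] (o o' : Ori E) : (o.1 \ o'.1).Finite := by
  obtain ⟨p⟩ := ‹Nonempty V›
  refine ((o.2.2.2.2 p).union ((o'.2.2.2.2 p).image compl)).subset ?_
  rintro A ⟨h1, h2⟩
  by_cases hp : p ∈ A
  · exact Or.inr ⟨Aᶜ, ⟨o'.compl_mem hE (o.mem_E h1) h2, fun h => h hp⟩, compl_compl A⟩
  · exact Or.inl ⟨h1, hp⟩

theorem ne_compl (hE : TreeSet E) {B : Set V} (hB : B ∈ E) : B ≠ Bᶜ := by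
  intro h
  obtain ⟨x, hx⟩ := hE.nonempty hB
  exact (h ▸ hx : x ∈ Bᶜ) hx

/-- The vertex towards which the edge `B` points. -/
def head (hE : TreeSet E) {B : Set V} (hB : B ∈ E) : Ori E :=
  ⟨{C | C ∈ E ∧ (B ⊆ C ∨ Cᶜ ⊆ B ∧ Cᶜ ≠ B)}, fun C hC => hC.1, by
    intro C hC
    have hCc := hE.compl hC
    simp only [Set.mem_ofPred_eq, hC, hCc, true_and, compl_compl]
    obtain ⟨x, hx⟩ := hE.nonempty hB
    obtain ⟨y, hy⟩ := hE.nonempty (hE.compl hB)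
    constructor
    · rintro (h | ⟨h, h'⟩) (h1 | ⟨h1, h1'⟩)
      · exact h1 hx (h hx)
      · exact h1' (h1.antisymm h)
      · exact h' (h.antisymm h1)
      · by_cases hyC : y ∈ C
        · exact hy (h1 hyC)
        · exact hy (h hyC)
    · intro hn
      rw [not_or, not_and, not_not] at hn
      rcases hE.cases hB hC with h | h | h | h
      · exact absurd h hn.1
      · exact Or.inl h
      · exact Or.inl (hn.2 h).ge
      · have h2 : Cᶜ ⊆ B := Set.compl_subset_comm.1 h
        refine Or.inr ⟨h2, fun e => hn.1 e.ge⟩, by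
    rintro A ⟨hA, h⟩ C hC hAC
    refine ⟨hC, ?_⟩
    rcases h with h | ⟨h, h'⟩
    · exact Or.inl (h.trans hAC)
    · have h2 : Cᶜ ⊆ Aᶜ := Set.compl_subset_compl.2 hAC
      exact Or.inr ⟨h2.trans h, fun e => h' (h.antisymm (e.ge.trans h2))⟩, by
    intro p
    obtain ⟨x, hx⟩ := hE.nonempty hB
    obtain ⟨y, hy⟩ := hE.nonempty (hE.compl hB)
    refine ((hE.fin x p).union (hE.fin y p)).subset ?_
    rintro C ⟨⟨hC, h | ⟨h, _⟩⟩, hp⟩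
    · exact Or.inl ⟨hC, h hx, hp⟩
    · exact Or.inr ⟨hC, by by_contra hyC; exact hy (h hyC), hp⟩⟩

theorem mem_head (hE : TreeSet E) {B C : Set V} (hB : B ∈ E) :
    C ∈ (head hE hB).1 ↔ C ∈ E ∧ (B ⊆ C ∨ Cᶜ ⊆ B ∧ Cᶜ ≠ B) := Iff.rfl

theorem self_mem_head (hE : TreeSet E) {B : Set V} (hB : B ∈ E) : B ∈ (head hE hB).1 :=
  ⟨hB, Or.inl le_rfl⟩

/-- The two endpoints of an edge differ only in the direction of this edge. -/
theorem eq_of_mem_head (hE : TreeSet E) {B C : Set V} (hB : B ∈ E) (h : C ∈ (head hE hB).1)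
    (h' : C ∉ (head hE (hE.compl hB)).1) : C = B := by
  obtain ⟨hC, h⟩ := h
  rw [mem_head] at h'
  simp only [hC, true_and, not_or, not_and, not_not] at h'
  rcases h with h | ⟨h, h1⟩
  · exact compl_injective (h'.2 (Set.compl_subset_compl.2 h))
  · exact absurd (Set.compl_subset_comm.1 h) h'.1

theorem head_compl_ne (hE : TreeSet E) {B : Set V} (hB : B ∈ E) :
    head hE (hE.compl hB) ≠ head hE hB := by
  intro h
  have h1 := self_mem_head hE hB
  rw [← h] at h1
  have h2 := compl_notMem _ h1
  exact h2 (self_mem_head hE (hE.compl hB))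

/-- A vertex `o` is the head of the last edge on every path which ends at `o`. -/
theorem eq_head (hE : TreeSet E) {o o' : Ori E} {B : Set V} (hB : B ∈ E)
    (h : Minimal (fun A => A ∈ o.1 \ o'.1) B) : o = head hE hB := by
  refine (eq_of_subset hE ?_).symm
  rintro C ⟨hC, h1 | ⟨h1, h2⟩⟩
  · exact o.up h.prop.1 hC h1
  · by_contra hcon
    have h3 := o.compl_mem hE hC hcon
    have h4 : Cᶜ ∉ o'.1 := fun h4 => h.prop.2 (o'.up h4 hB h1)
    exact h2 (h1.antisymm (h.le_of_le ⟨h3, h4⟩ h1))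

/-- The edges between two vertices, oriented towards the first one, form a chain. -/
theorem chain (hE : TreeSet E) {o o' : Ori E} {A B : Set V} (hA : A ∈ o.1 \ o'.1)
    (hB : B ∈ o.1 \ o'.1) : A ⊆ B ∨ B ⊆ A := by
  have hA' := o.mem_E hA.1
  have hB' := o.mem_E hB.1
  rcases hE.cases hA' hB' with h | h | h | h
  · exact absurd (o.up hA.1 (hE.compl hB') h) (o.compl_notMem hB.1)
  · exact Or.inl h
  · exact Or.inr h
  · exact absurd (o'.up (o'.compl_mem hE hA' hA.2) hB' h) hB.2

/-- The permutations of `V` which preserve the family `E`. -/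
abbrev Aut (E : Set (Set V)) : Subgroup (Equiv.Perm V) := MulAction.stabilizer (Equiv.Perm V) E

theorem smul_mem (e : Aut E) {A : Set V} (hA : A ∈ E) : e • A ∈ E := by
  have : e.1 • E = E := e.2
  exact this.subset ⟨A, hA, rfl⟩

theorem smul_compl (e : Aut E) (A : Set V) : e • Aᶜ = (e • A)ᶜ := Set.smul_set_compl

/-- The bijections of `V` preserving `E` act on the vertices of the tree. -/
instance : MulAction (Aut E) (Ori E) where
  smul e o := ⟨e • o.1, by
      rintro _ ⟨A, hA, rfl⟩
      exact smul_mem e (o.mem_E hA), by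
      intro A hA
      have := o.2.2.1 (e⁻¹ • A) (smul_mem _ hA)
      rw [Set.mem_smul_set_iff_inv_smul_mem, Set.mem_smul_set_iff_inv_smul_mem, smul_compl]
      exact this, by
      intro A hA B hB hAB
      rw [Set.mem_smul_set_iff_inv_smul_mem] at hA ⊢
      exact o.up hA (smul_mem _ hB) (Set.smul_set_mono hAB), by
      intro p
      refine ((o.2.2.2.2 (e⁻¹ • p)).image (fun A => e • A)).subset ?_
      rintro A ⟨hA, hp⟩
      rw [Set.mem_smul_set_iff_inv_smul_mem] at hA
      refine ⟨e⁻¹ • A, ⟨hA, fun h => hp (Set.smul_mem_smul_set_iff.1 h)⟩, smul_inv_smul _ _⟩⟩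
  one_smul o := Subtype.ext (one_smul _ o.1)
  mul_smul e e' o := Subtype.ext (mul_smul e e' o.1)

theorem mem_smul_iff (e : Aut E) (o : Ori E) {A : Set V} : A ∈ (e • o).1 ↔ e⁻¹ • A ∈ o.1 :=
  Set.mem_smul_set_iff_inv_smul_mem

theorem smul_mem_smul (e : Aut E) {o : Ori E} {A : Set V} (h : A ∈ o.1) : e • A ∈ (e • o).1 := by
  rw [mem_smul_iff, inv_smul_smul]; exact h

theorem smul_head (hE : TreeSet E) (e : Aut E) {B : Set V} (hB : B ∈ E) :
    e • head hE hB = head hE (smul_mem e hB) := by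
  refine eq_of_subset hE ?_
  intro C hC
  rw [mem_smul_iff] at hC
  obtain ⟨h1, h2⟩ := hC
  have h3 := smul_mem e h1
  rw [smul_inv_smul] at h3
  refine ⟨h3, ?_⟩
  rw [← smul_compl, Set.subset_smul_set_iff, inv_inv, ← Set.subset_smul_set_iff] at h2
  refine h2.imp id fun h => ⟨h.1, fun h' => h.2 ?_⟩
  rw [h', inv_smul_smul]

theorem head_congr (hE : TreeSet E) {B C : Set V} (hB : B ∈ E) (hC : C ∈ E) (h : B = C) :
    head hE hB = head hE hC := by
  subst h; rfl

theorem dir_smul (e : Aut E) {o o₁ o₂ : Ori E} (h : dir o o₁ o₂) :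
    dir (e • o) (e • o₁) (e • o₂) := by
  obtain ⟨A, h1, h2, h3⟩ := h
  refine ⟨e • A, smul_mem_smul e h1, smul_mem_smul e h2, fun h => h3 ?_⟩
  rwa [mem_smul_iff, inv_smul_smul] at h

theorem eq_of_periodic {e : Aut E} {A : Set V} {n : ℕ} (hn : 0 < n) (hper : e ^ n • A = A)
    (h : A ⊆ e • A ∨ e • A ⊆ A) : e • A = A := by
  have hmono : Monotone (fun A : Set V => e • A) := fun A B hAB => Set.smul_set_mono hAB
  have hit : (fun A : Set V => e • A)^[n] A = A := by rw [smul_iterate_apply]; exact hper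
  rcases h with h | h
  · have : e • A ⊆ (fun A : Set V => e • A)^[n] A := hmono.monotone_iterate_of_le_map h hn
    rw [hit] at this
    exact Set.Subset.antisymm this h
  · have : (fun A : Set V => e • A)^[n] A ⊆ e • A := hmono.antitone_iterate_of_map_le h hn
    rw [hit] at this
    exact Set.Subset.antisymm h this

/-- If `e` fixes two vertices, it fixes all edges between them. -/
theorem smul_eq_of_fixed (hE : TreeSet E) [Nonempty V] {e : Aut E} {o o' : Ori E}
    (ho : e • o = o) (ho' : e • o' = o') {A : Set V} (hA : A ∈ o.1 \ o'.1) : e • A = A := by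
  have hmem : ∀ k : ℕ, e ^ k • A ∈ o.1 \ o'.1 := by
    intro k
    induction k with
    | zero => rwa [pow_zero, one_smul]
    | succ k ih =>
      rw [pow_succ', mul_smul]
      constructor
      · rw [← ho]; exact smul_mem_smul e ih.1
      · rw [← ho', mem_smul_iff, inv_smul_smul]; exact ih.2
  obtain ⟨i, -, j, -, hij, he⟩ := Set.infinite_univ.exists_ne_map_eq_of_mapsTo
    (fun k _ => hmem k) (finite_diff hE o o')
  wlog hlt : i < j generalizing i j
  · exact this j i hij.symm he.symm (by omega)
  have hper : e ^ (j - i) • A = A := by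
    have h1 : e ^ j = e ^ i * e ^ (j - i) := by rw [← pow_add]; congr 1; omega
    rw [h1, mul_smul] at he
    exact (smul_left_cancel _ he).symm
  refine eq_of_periodic (by omega) hper ?_
  have h1 := hmem 1
  rw [pow_one] at h1
  exact chain hE hA h1

end Ori

end Ori

/-- Representatives for the classes which meet `S`, when finitely many classes suffice. -/
theorem exists_reps {X : Type*} (r : Setoid X) (S : Set X) (F : Set X) (hF : F.Finite)
    (hSF : ∀ x ∈ S, ∃ y ∈ F, r x y) :
    ∃ K : Finset X, (∀ x ∈ K, x ∈ S) ∧ (∀ x ∈ S, ∃ y ∈ K, r x y) ∧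
      ∀ x ∈ K, ∀ y ∈ K, r x y → x = y := by
  classical
  obtain ⟨s, hs, hbij⟩ := Set.exists_subset_bijOn S (Quotient.mk r)
  have hfin : s.Finite := by
    refine Set.Finite.of_finite_image ?_ hbij.injOn
    rw [hbij.image_eq]
    refine (hF.image (Quotient.mk r)).subset ?_
    rintro _ ⟨x, hx, rfl⟩
    obtain ⟨y, hy, hxy⟩ := hSF x hx
    exact ⟨y, hy, (Quotient.sound hxy).symm⟩
  refine ⟨hfin.toFinset, fun x hx => hs (hfin.mem_toFinset.1 hx), fun x hx => ?_,
    fun x hx y hy h => ?_⟩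
  · obtain ⟨y, hy, hxy⟩ := hbij.surjOn ⟨x, hx, rfl⟩
    exact ⟨y, hfin.mem_toFinset.2 hy, r.symm' (Quotient.exact hxy)⟩
  · exact hbij.injOn (hfin.mem_toFinset.1 hx) (hfin.mem_toFinset.1 hy) (Quotient.sound h)

namespace Ori

open scoped Pointwise

variable {V : Type*} {E : Set (Set V)}

/-- Induction over the vertices fixed by `σ`: they are joined by edges fixed by `σ`. -/
theorem induct [Nonempty V] (hE : TreeSet E) {σ : Aut E} (P : Ori E → Prop) {o' : Ori E}
    (ho' : σ • o' = o')
    (hP : P o') (step : ∀ B (hB : B ∈ E), σ • B = B → P (head hE (hE.compl hB)) → P (head hE hB)) :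
    ∀ o : Ori E, σ • o = o → P o := by
  intro o ho
  induction hn : (o.1 \ o'.1).ncard using Nat.strong_induction_on generalizing o with
  | _ n ih =>
    by_cases hoo : o = o'
    · rwa [hoo]
    have hf := finite_diff hE o o'
    obtain ⟨B, hB⟩ := hf.exists_minimal (exists_mem_of_ne hE hoo)
    have hBE := o.mem_E hB.prop.1
    have hhead := eq_head hE hBE hB
    have hσB := smul_eq_of_fixed hE ho ho' hB.prop
    rw [hhead]
    refine step B hBE hσB (ih _ ?_ _ ?_ rfl)
    · rw [← hn]
      refine Set.ncard_lt_ncard ⟨?_, fun h => ?_⟩ hf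
      · rintro C ⟨h1, h2⟩
        refine ⟨?_, h2⟩
        by_contra hC
        rw [hhead] at hC
        rw [head_congr hE hBE (hE.compl (hE.compl hBE)) (compl_compl B).symm] at hC
        rw [eq_of_mem_head hE _ h1 hC] at h2
        exact h2 (o'.compl_mem hE hBE hB.prop.2)
      · exact compl_notMem _ (h hB.prop).1 (self_mem_head hE _)
    · rw [smul_head]
      exact head_congr hE _ _ (by rw [smul_compl, hσB])

variable {H : Type*} [Group H] (L : H →* Aut E)

theorem smul_edge_free (hE : TreeSet E) (hfree : ∀ h (o : Ori E), L h • o = o → h = 1) {h : H}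
    {A : Set V} (hA : A ∈ E) (he : L h • A = A) : h = 1 := by
  refine hfree h (head hE hA) ?_
  rw [smul_head]
  exact head_congr hE _ _ he

theorem smul_edge_ne_compl (hE : TreeSet E) (hfree : ∀ h (o : Ori E), L h • o = o → h = 1)
    (htf : ∀ h : H, h * h = 1 → h = 1) {h : H} {A : Set V} (hA : A ∈ E) : L h • A ≠ Aᶜ := by
  intro he
  have h1 : L (h * h) • A = A := by
    rw [map_mul, mul_smul, he, smul_compl, he, compl_compl]
  have h2 := htf h (smul_edge_free L hE hfree hA h1)
  rw [h2, map_one, one_smul] at he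
  exact ne_compl hE hA he

/-- An element which maps one vertex fixed by `σ` to another one commutes with `σ`. -/
theorem comm_of_fixed (hfree : ∀ h (o : Ori E), L h • o = o → h = 1) {σ : Aut E}
    (hcomm : ∀ h, ∃ x, (L h)⁻¹ * σ * L h * σ⁻¹ = L x) {o : Ori E} (ho : σ • o = o) {h : H}
    (hh : σ • L h • o = L h • o) : h ∈ (Subgroup.centralizer {σ}).comap L := by
  obtain ⟨x, hx⟩ := hcomm h
  have h1 : L x • o = o := by
    rw [← hx, mul_smul, mul_smul, mul_smul, inv_smul_eq_iff.2 ho.symm, hh, inv_smul_smul]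
  rw [hfree x o h1, map_one] at hx
  rw [Subgroup.mem_comap, Subgroup.mem_centralizer_singleton_iff]
  rw [mul_inv_eq_one, mul_assoc, inv_mul_eq_iff_eq_mul] at hx
  exact hx.symm

/-- The centralizer of `σ` acts freely on the subtree fixed by `σ`. The sets `K` and `C` represent
the orbits of its unoriented edges and of its vertices, and the centralizer is the fundamental
group of the quotient graph, generated by the `|K| - |C| + 1` edges outside a spanning tree. -/
theorem centralizer_gens [Nonempty V] (hE : TreeSet E)
    (hfree : ∀ h (o : Ori E), L h • o = o → h = 1)
    (K₀ : Set (Set V)) (hK₀ : K₀.Finite)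
    (hK₀' : ∀ A ∈ E, ∃ u, L u • A ∈ K₀) {σ : Aut E}
    (hcomm : ∀ h, ∃ x, (L h)⁻¹ * σ * L h * σ⁻¹ = L x) {B₀ : Set V} (hB₀ : B₀ ∈ E)
    (hσB₀ : σ • B₀ = B₀) :
    ∃ (K : Finset (Set V)) (C : Finset (Ori E)) (S : Finset H),
      (∀ A ∈ K, A ∈ E ∧ σ • A = A) ∧
      (∀ A ∈ K, ∀ B ∈ K, ∀ h, L h • A = B ∨ L h • A = Bᶜ → A = B) ∧
      (∀ v ∈ C, σ • v = v) ∧ (∀ v ∈ C, ∀ w ∈ C, ∀ h, L h • v = w → v = w) ∧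
      (∀ o, σ • o = o → ∃ h, L h • o ∈ C) ∧ S.card + C.card ≤ K.card + 1 ∧
      Subgroup.closure (S : Set H) = (Subgroup.centralizer {σ}).comap L := by
  classical
  let r : Setoid (Set V) :=
    { r := fun A B => ∃ h, L h • A = B ∨ L h • A = Bᶜ
      iseqv := by
        refine ⟨fun A => ⟨1, Or.inl (by simp)⟩, ?_, ?_⟩
        · rintro A B ⟨h, e | e⟩
          · exact ⟨h⁻¹, Or.inl (by rw [← e, map_inv, inv_smul_smul])⟩
          · refine ⟨h⁻¹, Or.inr ?_⟩
            rw [map_inv, inv_smul_eq_iff, smul_compl, e, compl_compl]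
        · rintro A B C ⟨h, e⟩ ⟨h', e'⟩
          refine ⟨h' * h, ?_⟩
          rw [map_mul, mul_smul]
          rcases e with e | e <;> rcases e' with e' | e' <;> simp [e, smul_compl, e'] }
  obtain ⟨K, hK1, hK2, hK3⟩ := exists_reps r {A | A ∈ E ∧ σ • A = A} K₀ hK₀ (by
    rintro A ⟨hA, -⟩
    obtain ⟨u, hu⟩ := hK₀' A hA
    exact ⟨_, hu, u, Or.inl rfl⟩)
  let r' : Setoid (Ori E) :=
    { r := fun o o' => ∃ h, L h • o = o'
      iseqv := by
        refine ⟨fun o => ⟨1, by simp⟩, ?_, ?_⟩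
        · rintro o o' ⟨h, rfl⟩
          exact ⟨h⁻¹, by simp⟩
        · rintro o o' o'' ⟨h, rfl⟩ ⟨h', rfl⟩
          exact ⟨h' * h, by rw [map_mul, mul_smul]⟩ }
  let hdE : Set V → Ori E := fun B => if h : B ∈ E then head hE h else head hE hB₀
  have hdE_eq : ∀ {B} (hB : B ∈ E), hdE B = head hE hB := fun hB => dif_pos hB
  have hhσ : ∀ {B} (hB : B ∈ E), σ • B = B → σ • head hE hB = head hE hB := by
    intro B hB h
    rw [smul_head]
    exact head_congr hE _ _ h
  have hcσ : ∀ {B : Set V}, σ • B = B → σ • Bᶜ = Bᶜ := fun h => by rw [smul_compl, h]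
  obtain ⟨C, hC1, hC2, hC3⟩ := exists_reps r' {o | σ • o = o}
    (hdE '' K ∪ (fun B => hdE Bᶜ) '' K)
    ((K.finite_toSet.image _).union (K.finite_toSet.image _)) (by
    intro o ho
    have hex : ∃ B, ∃ hB : B ∈ E, σ • B = B ∧ o = head hE hB := by
      refine induct hE (σ := σ) (fun o => ∃ B, ∃ hB : B ∈ E, σ • B = B ∧ o = head hE hB)
        (hhσ hB₀ hσB₀) ⟨B₀, hB₀, hσB₀, rfl⟩ (fun B hB h _ => ⟨B, hB, h, rfl⟩) o ho
    obtain ⟨B, hB, hσB, rfl⟩ := hex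
    obtain ⟨B₁, hB₁, h, e⟩ := hK2 B ⟨hB, hσB⟩
    have hB₁E := (hK1 _ hB₁).1
    rcases e with e | e
    · refine ⟨hdE B₁, Or.inl ⟨B₁, hB₁, rfl⟩, h, ?_⟩
      rw [smul_head, hdE_eq hB₁E]
      exact head_congr hE _ _ e
    · refine ⟨hdE B₁ᶜ, Or.inr ⟨B₁, hB₁, rfl⟩, h, ?_⟩
      rw [smul_head, hdE_eq (hE.compl hB₁E)]
      exact head_congr hE _ _ e)
  have hρ : ∀ o : Ori E, ∃ h, σ • o = o → L h • o ∈ C := by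
    intro o
    by_cases ho : σ • o = o
    · obtain ⟨y, hy, h, rfl⟩ := hC2 o ho
      exact ⟨h, fun _ => hy⟩
    · exact ⟨1, fun h => absurd h ho⟩
  choose ρ hρ using hρ
  let rep : Ori E → Ori E := fun o => L (ρ o) • o
  have hrep : ∀ o, σ • o = o → rep o ∈ C := hρ
  have rep_smul : ∀ o h, σ • o = o → σ • L h • o = L h • o → rep (L h • o) = rep o := by
    intro o h ho hh
    refine (hC3 _ (hrep _ ho) _ (hrep _ hh) ⟨ρ (L h • o) * h * (ρ o)⁻¹, ?_⟩).symm
    simp [rep, mul_smul]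
  have rep_self : ∀ v ∈ C, rep v = v := by
    intro v hv
    exact (hC3 _ hv _ (hrep _ (hC1 v hv)) ⟨ρ v, rfl⟩).symm
  have hρcomm : ∀ o, σ • o = o → ρ o ∈ (Subgroup.centralizer {σ}).comap L := fun o ho =>
    comm_of_fixed L hfree hcomm ho (hC1 _ (hrep o ho))
  have hKσ : ∀ B ∈ K, σ • hdE B = hdE B ∧ σ • hdE Bᶜ = hdE Bᶜ := by
    intro B hB
    obtain ⟨h1, h2⟩ := hK1 B hB
    rw [hdE_eq h1, hdE_eq (hE.compl h1)]
    exact ⟨hhσ _ h2, hhσ _ (hcσ h2)⟩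
  have heq : ∀ {o : Ori E} {x y : H}, L x • o = L y • o → x = y := by
    intro o x y h
    refine inv_mul_eq_one.1 (hfree (x⁻¹ * y) o ?_)
    rw [map_mul, mul_smul, ← h, map_inv, inv_smul_smul]
  -- translating an edge to its representative
  have hedge : ∀ B (hB : B ∈ E), σ • B = B → ∃ B₁ ∈ K, ∃ h : H,
      (L h • head hE hB = hdE B₁ ∧ L h • head hE (hE.compl hB) = hdE B₁ᶜ) ∨
      (L h • head hE hB = hdE B₁ᶜ ∧ L h • head hE (hE.compl hB) = hdE B₁) := by
    intro B hB hσB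
    obtain ⟨B₁, hB₁, h, e⟩ := hK2 B ⟨hB, hσB⟩
    have hB₁E := (hK1 _ hB₁).1
    refine ⟨B₁, hB₁, h, ?_⟩
    rw [hdE_eq hB₁E, hdE_eq (hE.compl hB₁E), smul_head, smul_head]
    rcases e with e | e
    · exact Or.inl ⟨head_congr hE _ _ e, head_congr hE _ _ (by rw [smul_compl, e])⟩
    · exact Or.inr ⟨head_congr hE _ _ e, head_congr hE _ _ (by rw [smul_compl, e, compl_compl])⟩
  have hroot := hrep _ (hhσ hB₀ hσB₀)
  have hHmul := fun {x y : H} (hx : x ∈ (Subgroup.centralizer {σ}).comap L)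
    (hy : y ∈ (Subgroup.centralizer {σ}).comap L) => Subgroup.mul_mem _ hx hy
  obtain ⟨S, τ, hτ, hcard, hS1, hS2, hS3⟩ := exists_loop_gens (G := H) C K
    (fun B => rep (hdE Bᶜ)) (fun B => rep (hdE B)) (fun B => ρ (hdE B) * (ρ (hdE Bᶜ))⁻¹)
    (rep (head hE hB₀)) hroot (fun B hB => hrep _ (hKσ B hB).2) (fun B hB => hrep _ (hKσ B hB).1)
    (by
      intro U hU hrU hclosed
      refine hU.antisymm fun v hv => ?_
      rw [← rep_self v hv]
      refine induct hE (σ := σ) (fun o => rep o ∈ U) (hhσ hB₀ hσB₀) hrU ?_ v (hC1 v hv)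
      intro B hB hσB hBU
      obtain ⟨B₁, hB₁, h, e⟩ := hedge B hB hσB
      have k1 := rep_smul (head hE hB) h (hhσ hB hσB)
      have k2 := rep_smul (head hE (hE.compl hB)) h (hhσ _ (hcσ hσB))
      have k3 := hclosed B₁ hB₁
      have k4 := hKσ B₁ hB₁
      rcases e with ⟨e, e'⟩ | ⟨e, e'⟩
      · rw [e] at k1
        rw [e'] at k2
        rw [← k1 k4.1, ← k3, k2 k4.2]
        exact hBU
      · rw [e] at k1
        rw [e'] at k2
        rw [← k1 k4.2, k3, k2 k4.1]
        exact hBU)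
    (fun _ g => g ∈ (Subgroup.centralizer {σ}).comap L) (Subgroup.one_mem _)
    (fun B hB g hg => hHmul (hHmul (hρcomm _ (hKσ B hB).1)
      (Subgroup.inv_mem _ (hρcomm _ (hKσ B hB).2))) hg)
    (fun B hB g hg => hHmul (Subgroup.inv_mem _ (hHmul (hρcomm _ (hKσ B hB).1)
      (Subgroup.inv_mem _ (hρcomm _ (hKσ B hB).2)))) hg)
  refine ⟨K, C, S, hK1, fun A hA B hB h e => hK3 A hA B hB ⟨h, e⟩, hC1,
    fun v hv w hw h e => hC3 v hv w hw ⟨h, e⟩, fun o ho => ⟨ρ o, hρ o ho⟩, hcard, le_antisymm ?_ ?_⟩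
  · rw [Subgroup.closure_le]
    intro g hg
    obtain ⟨B, hB, rfl⟩ := hS2 g hg
    exact hHmul (hHmul (Subgroup.inv_mem _ (hS3 _ (hrep _ (hKσ B hB).1)))
      (hHmul (hρcomm _ (hKσ B hB).1) (Subgroup.inv_mem _ (hρcomm _ (hKσ B hB).2))))
      (hS3 _ (hrep _ (hKσ B hB).2))
  · intro h hh
    have hrσ := hC1 _ hroot
    have hσh : σ • L h • rep (head hE hB₀) = L h • rep (head hE hB₀) := by
      have := Subgroup.mem_centralizer_singleton_iff.1 (Subgroup.mem_comap.1 hh)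
      rw [← mul_smul, ← this, mul_smul, hrσ]
    have key := induct hE (σ := σ)
      (fun o => ∃ h' ∈ Subgroup.closure (S : Set H), ∃ u ∈ C, o = L (h' * (τ u)⁻¹) • u) hrσ
      ⟨1, Subgroup.one_mem _, _, hroot, by simp [hτ]⟩ ?_ _ hσh
    · obtain ⟨h', hh', u, hu, e⟩ := key
      have hur : rep (head hE hB₀) = u := by
        refine hC3 _ hroot _ hu ⟨(h' * (τ u)⁻¹)⁻¹ * h, ?_⟩
        rw [map_mul, mul_smul, e, map_inv, inv_smul_smul]
      rw [hur] at e hτ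
      have := heq e
      rw [hτ, inv_one, mul_one] at this
      rwa [this]
    · rintro B hB hσB ⟨h', hh', u, hu, e⟩
      obtain ⟨B₁, hB₁, g, e1⟩ := hedge B hB hσB
      have k1 := hKσ B₁ hB₁
      have k2 := hS1 B₁ hB₁
      -- `x` maps the starting point of the edge to its representative, `y` the end point
      have fin : ∀ (x y : H) (z w : Ori E), z ∈ C → w ∈ C → L x • head hE (hE.compl hB) = z →
          L y • head hE hB = w → (τ z)⁻¹ * x * y⁻¹ * τ w ∈ Subgroup.closure (S : Set H) →
          ∃ h' ∈ Subgroup.closure (S : Set H), ∃ u ∈ C, head hE hB = L (h' * (τ u)⁻¹) • u := by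
        intro x y z w hz hw hx hy hmem
        have hzu : u = z := by
          refine hC3 _ hu _ hz ⟨x * (h' * (τ u)⁻¹), ?_⟩
          rw [map_mul, mul_smul, ← e, hx]
        subst hzu
        rw [← hx, ← mul_smul, ← map_mul] at e
        have hx1 : h' * (τ u)⁻¹ * x = 1 := by
          have e2 : L 1 • head hE (hE.compl hB) = L (h' * (τ u)⁻¹ * x) • head hE (hE.compl hB) := by
            rw [map_one, one_smul, ← hx] at *
            exact e
          exact (heq e2).symm
        refine ⟨h' * ((τ u)⁻¹ * x * y⁻¹ * τ w), Subgroup.mul_mem _ hh' hmem, w, hw, ?_⟩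
        have : h' * ((τ u)⁻¹ * x * y⁻¹ * τ w) * (τ w)⁻¹ = (h' * (τ u)⁻¹ * x) * y⁻¹ := by group
        rw [this, hx1, one_mul, ← hy, map_inv, inv_smul_smul]
      rcases e1 with ⟨e1, e2⟩ | ⟨e1, e2⟩
      · refine fin (ρ (hdE B₁ᶜ) * g) (ρ (hdE B₁) * g) (rep (hdE B₁ᶜ)) (rep (hdE B₁))
          (hrep _ k1.2) (hrep _ k1.1) (by rw [map_mul, mul_smul, e2]) (by rw [map_mul, mul_smul, e1]) ?_
        have := Subgroup.inv_mem _ k2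
        convert this using 1
        group
      · refine fin (ρ (hdE B₁) * g) (ρ (hdE B₁ᶜ) * g) (rep (hdE B₁)) (rep (hdE B₁ᶜ))
          (hrep _ k1.1) (hrep _ k1.2) (by rw [map_mul, mul_smul, e2]) (by rw [map_mul, mul_smul, e1]) ?_
        convert k2 using 1
        group

end Ori

theorem sq_eq_one {α : Type*} [Finite α] [DecidableEq α] {h : FreeGroup α} (hh : h * h = 1) :
    h = 1 := by
  by_contra hne
  obtain ⟨N, hN⟩ := exists_pow_norm_gt hne 0
  have := hN (2 * N) (by omega)
  rw [pow_mul, pow_two, hh, one_pow, FreeGroup.norm_one] at this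
  omega

namespace Ori

open scoped Pointwise

variable {V : Type*} {E : Set (Set V)}

/-- If a free group acts freely on the tree of `E`, then the centralizers of the given
automorphisms `σ i` satisfy the index inequality. -/
theorem tree_index [Nonempty V] (hE : TreeSet E) {r : ℕ} (hr : 1 ≤ r)
    (L : FreeGroup (Fin r) →* Aut E)
    (hfree : ∀ h (o : Ori E), L h • o = o → h = 1) (K₀ : Set (Set V)) (hK₀ : K₀.Finite)
    (hK₀' : ∀ A ∈ E, ∃ u, L u • A ∈ K₀) {ι : Type*} [Fintype ι] [Nonempty ι] (σ : ι → Aut E)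
    (hcos : ∀ i j h, ∃ x, (L h)⁻¹ * σ j * L h * (σ i)⁻¹ = L x)
    (hsim : ∀ i j h, σ j * L h = L h * σ i → i = j) (hne : ∀ i, ∃ B ∈ E, σ i • B = B) :
    ∃ S : ι → Finset (FreeGroup (Fin r)),
      (∀ i, Subgroup.closure (S i : Set (FreeGroup (Fin r))) =
        (Subgroup.centralizer {σ i}).comap L) ∧
      ∑ i, (2 * ((S i).card : ℤ) - 2) ≤ 2 * (r : ℤ) - 2 := by
  classical
  choose B₀ hB₀ hσB₀ using hne
  choose K C S hK1 hK2 hC1 hC2 hC3 hcard hS using fun i =>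
    centralizer_gens L hE hfree K₀ hK₀ hK₀' (hcos i i) (hB₀ i) (hσB₀ i)
  refine ⟨S, hS, ?_⟩
  let _ : MulAction (FreeGroup (Fin r)) (Ori E) := MulAction.compHom (Ori E) L
  have hsmul : ∀ (g : FreeGroup (Fin r)) (o : Ori E), g • o = L g • o := fun g o => rfl
  -- a translate of a vertex fixed by `σ i` is fixed by `σ j` only if `i = j`
  have hij : ∀ i j (g : FreeGroup (Fin r)) (o : Ori E), σ i • o = o → σ j • L g • o = L g • o →
      i = j := by
    intro i j g o hi hj
    obtain ⟨x, hx⟩ := hcos i j g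
    have h1 : L x • o = o := by
      rw [← hx, mul_smul, mul_smul, mul_smul, inv_smul_eq_iff.2 hi.symm, hj, inv_smul_smul]
    rw [hfree x o h1, map_one, mul_inv_eq_one, mul_assoc, inv_mul_eq_iff_eq_mul] at hx
    exact hsim i j g hx
  let P : (Σ i, {v // v ∈ C i}) → Ori E := fun v => v.2.1
  have hP : ∀ v w (g : FreeGroup (Fin r)), g • P v = P w → v = w := by
    rintro ⟨i, v, hv⟩ ⟨j, w, hw⟩ g (hg : L g • v = w)
    obtain rfl := hij i j g v (hC1 i v hv) (by rw [hg]; exact hC1 j w hw)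
    obtain rfl := hC2 i v hv w hw g hg
    rfl
  -- the two orientations of an edge
  let ed : (Σ i, {A // A ∈ K i} × Bool) → Set V := fun k => if k.2.2 then k.2.1.1 else k.2.1.1ᶜ
  have hed : ∀ k, ed k ∈ E := by
    rintro ⟨i, ⟨A, hA⟩, _ | _⟩
    · exact hE.compl (hK1 i A hA).1
    · exact (hK1 i A hA).1
  have hσed : ∀ k, σ k.1 • ed k = ed k := by
    rintro ⟨i, ⟨A, hA⟩, _ | _⟩
    · change σ i • Aᶜ = Aᶜ
      rw [smul_compl, (hK1 i A hA).2]
    · exact (hK1 i A hA).2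
  have hσh : ∀ k, σ k.1 • head hE (hed k) = head hE (hed k) := by
    intro k
    rw [smul_head]
    exact head_congr hE _ _ (hσed k)
  have hσh' : ∀ k, σ k.1 • head hE (hE.compl (hed k)) = head hE (hE.compl (hed k)) := by
    intro k
    rw [smul_head]
    exact head_congr hE _ _ (by rw [smul_compl, hσed k])
  choose ρ hρ using fun k => hC3 k.1 _ (hσh k)
  have : Nonempty (Σ i, {v // v ∈ C i}) := by
    obtain ⟨i⟩ := ‹Nonempty ι›
    obtain ⟨h, hh⟩ := hC3 i (head hE (hB₀ i)) (by
      rw [smul_head]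
      exact head_congr hE _ _ (hσB₀ i))
    exact ⟨⟨i, _, hh⟩⟩
  obtain ⟨S', -, -, hle⟩ := Dendron.index_inequality hr (dendron hE)
    (fun g q a b h => dir_smul (L g) h)
    (fun v p g g' h1 h2 _ _ => by rw [hfree g v h1, hfree g' v h2]) P hP
    (fun k => (⟨k.1, _, hρ k⟩ : Σ i, {v // v ∈ C i}))
    (fun k => L (ρ k) • head hE (hE.compl (hed k)))
    (fun k h => head_compl_ne hE (hed k) (smul_left_cancel _ h))
    (fun k => by
      obtain ⟨h, hh⟩ := hC3 k.1 _ (hσh' k)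
      refine ⟨ρ k * h⁻¹, ⟨k.1, _, hh⟩, ?_⟩
      change _ = L (ρ k * h⁻¹) • L h • head hE (hE.compl (hed k))
      rw [map_mul, map_inv, mul_smul, inv_smul_smul])
    (by
      intro k k' g h1 h2
      have hii := congrArg Sigma.fst (hP _ _ g h1)
      change k.1 = k'.1 at hii
      change L g • L (ρ k) • head hE (hed k) = L (ρ k') • head hE (hed k') at h1
      change dir (L (ρ k') • head hE (hed k')) (L g • L (ρ k) • head hE (hE.compl (hed k)))
        (L (ρ k') • head hE (hE.compl (hed k'))) at h2
      have h3 : L ((ρ k')⁻¹ * g * ρ k) • ed k = ed k' := by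
        obtain ⟨A, a1, a2, a3⟩ := h2
        have b1 := a3
        rw [← h1] at b1
        rw [mem_smul_iff] at a2 a3
        rw [mem_smul_iff, mem_smul_iff] at a1 b1
        have e1 := eq_of_mem_head hE (hE.compl (hed k')) a2
          (by rwa [head_congr hE _ (hed k') (compl_compl _)])
        have e2 := eq_of_mem_head hE (hE.compl (hed k)) a1
          (by rwa [head_congr hE _ (hed k) (compl_compl _)])
        rw [inv_smul_eq_iff] at e1 e2
        rw [inv_smul_eq_iff, e1, smul_compl, smul_compl, smul_compl] at e2
        have e3 := compl_injective e2
        rw [map_mul, map_mul, map_inv, mul_smul, mul_smul, ← e3, inv_smul_smul]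
      have key : (ρ k')⁻¹ * g * ρ k = 1 → k = k' → k = k' ∧ g = 1 := by
        rintro e rfl
        refine ⟨rfl, ?_⟩
        rwa [mul_assoc, inv_mul_eq_one, eq_comm, mul_eq_right] at e
      obtain ⟨i, ⟨A, hA⟩, ε⟩ := k
      obtain ⟨i', ⟨A', hA'⟩, ε'⟩ := k'
      change i = i' at hii
      subst hii
      have hAE := (hK1 i A hA).1
      generalize (ρ ⟨i, ⟨A', hA'⟩, ε'⟩)⁻¹ * g * ρ ⟨i, ⟨A, hA⟩, ε⟩ = x at h3 key
      have hnc : ∀ {h} {B : Set V}, B ∈ E → L h • B ≠ Bᶜ := fun hB =>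
        smul_edge_ne_compl L hE hfree (fun h => sq_eq_one) hB
      have hst : ∀ {h} {B : Set V}, B ∈ E → L h • B = B → h = 1 := fun hB h =>
        smul_edge_free L hE hfree hB h
      have hAA : A = A' := by
        refine hK2 i A hA A' hA' x ?_
        rcases ε with _ | _ <;> rcases ε' with _ | _
        · change L x • Aᶜ = A'ᶜ at h3
          rw [smul_compl] at h3
          exact Or.inl (compl_injective h3)
        · change L x • Aᶜ = A' at h3
          rw [smul_compl] at h3
          exact Or.inr (by rw [← h3, compl_compl])
        · exact Or.inr h3
        · exact Or.inl h3
      subst hAA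
      rcases ε with _ | _ <;> rcases ε' with _ | _
      · exact key (hst (hE.compl hAE) h3) rfl
      · change L x • Aᶜ = A at h3
        rw [smul_compl] at h3
        exact absurd (compl_eq_comm.1 h3).symm (hnc hAE)
      · exact absurd h3 (hnc hAE)
      · exact key (hst hAE h3) rfl)
    (fun _ => ∅) (fun _ z hz => absurd hz (Finset.notMem_empty z))
  have h1 : -2 * (Fintype.card (Σ i, {v // v ∈ C i}) : ℤ) ≤ ∑ v, (2 * ((S' v).card : ℤ) - 2) := by
    have : ∑ v : (Σ i, {v // v ∈ C i}), (-2 : ℤ) ≤ ∑ v, (2 * ((S' v).card : ℤ) - 2) :=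
      Finset.sum_le_sum fun v _ => by omega
    rw [Finset.sum_const, Finset.card_univ, nsmul_eq_mul] at this
    linarith
  have h2 : (Fintype.card (Σ i, {v // v ∈ C i}) : ℤ) = ∑ i, ((C i).card : ℤ) := by
    rw [Fintype.card_sigma]
    simp
  have h3 : (Fintype.card (Σ i, {A // A ∈ K i} × Bool) : ℤ) = ∑ i, 2 * ((K i).card : ℤ) := by
    rw [Fintype.card_sigma]
    simp [mul_comm]
  have h4 : ∑ i, (2 * ((S i).card : ℤ) - 2) ≤ ∑ i, (2 * ((K i).card : ℤ) - 2 * ((C i).card : ℤ)) :=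
    Finset.sum_le_sum fun i _ => by have := hcard i; omega
  have h5 : ∑ i, (2 * ((K i).card : ℤ) - 2 * ((C i).card : ℤ)) =
      ∑ i, 2 * ((K i).card : ℤ) - 2 * ∑ i, ((C i).card : ℤ) := by
    rw [Finset.sum_sub_distrib, ← Finset.mul_sum Finset.univ (fun i => ((C i).card : ℤ))]
  linarith

end Ori

/-! ### Cuts of a free group -/

section FreeCuts

set_option linter.unusedSectionVars false

variable {α : Type*} [DecidableEq α]

open FreeGroup.reduceCyclically in
/-- The two ends of the cyclic group generated by `h` are separated by a cut, which consists of
the words starting with a given letter, translated by some `u`. -/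
theorem exists_end_cut [Finite α] {h : FreeGroup α} (hh : h ≠ 1) :
    ∃ (u : FreeGroup α) (x : α × Bool), (∀ᶠ n : ℕ in atTop, hd (u⁻¹ * h ^ n) = some x) ∧
      ∀ᶠ n : ℕ in atTop, hd (u⁻¹ * (h⁻¹) ^ n) ≠ some x := by
  set l := FreeGroup.reduceCyclically h.toWord with hl
  set u := FreeGroup.mk (FreeGroup.reduceCyclically.conjugator h.toWord) with hu
  have hred : FreeGroup.IsReduced h.toWord := FreeGroup.isReduced_toWord
  have hcyc : FreeGroup.IsCyclicallyReduced l := isCyclicallyReduced hred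
  have hconj : u * FreeGroup.mk l * u⁻¹ = h := by
    rw [hu, FreeGroup.inv_mk, FreeGroup.mul_mk, FreeGroup.mul_mk, conj_conjugator_reduceCyclically,
      FreeGroup.mk_toWord]
  have hl0 : l ≠ [] := by
    intro h0
    rw [h0] at hconj
    apply hh
    rw [← hconj, ← FreeGroup.one_eq_mk, mul_one, mul_inv_cancel]
  set c := FreeGroup.mk l with hc
  have hc1 : c ≠ 1 := by
    intro h0
    rw [h0, mul_one, mul_inv_cancel] at hconj
    exact hh hconj.symm
  have hcw : c.toWord = l := by
    rw [hc, FreeGroup.toWord_mk]; exact FreeGroup.isReduced_iff_reduce_eq.1 hcyc.isReduced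
  have hpow : ∀ n : ℕ, (c ^ n).toWord = (List.replicate n l).flatten := by
    intro n
    rw [FreeGroup.toWord_pow, hcw]
    exact FreeGroup.isReduced_iff_reduce_eq.1 (hcyc.flatten_replicate n).isReduced
  obtain ⟨x, t, hxt⟩ := List.exists_cons_of_ne_nil hl0
  obtain ⟨N, hN⟩ := exists_pow_norm_gt hc1 u⁻¹.norm
  refine ⟨u, x, ?_, ?_⟩
  · filter_upwards [eventually_ge_atTop (max N 1)] with n hn
    have e : u⁻¹ * h ^ n = c ^ n * u⁻¹ := by
      rw [← hconj, conj_pow, ← mul_assoc, ← mul_assoc, inv_mul_cancel, one_mul]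
    rw [e, hd_mul_of_norm_lt (hN n (by omega)), hd, hpow,
      List.head?_flatten_replicate (by omega), hxt]
    rfl
  · filter_upwards [eventually_ge_atTop (max N 1)] with n hn
    have e : u⁻¹ * (h⁻¹) ^ n = (c ^ n)⁻¹ * u⁻¹ := by
      rw [inv_pow, ← hconj, conj_pow, mul_inv_rev, mul_inv_rev, inv_inv, ← mul_assoc, ← mul_assoc,
        inv_mul_cancel, one_mul]
    rw [e, hd_mul_of_norm_lt (by
      rw [FreeGroup.norm_inv_eq (x := c ^ n)]; exact hN n (by omega)), hd,
      FreeGroup.toWord_inv, FreeGroup.invRev, List.head?_reverse, List.getLast?_map, hpow,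
      List.getLast?_flatten_replicate (by omega)]
    intro hcon
    rw [Option.map_eq_some_iff] at hcon
    obtain ⟨a, ha, hax⟩ := hcon
    have := hcyc.2 a ha x (by rw [hxt]; rfl) (by rw [← hax])
    rw [← hax] at this
    simp at this

variable {R : FreeGroup α → FreeGroup α → Prop}

/-- A set with finite boundary is almost invariant under right multiplication. -/
theorem almost_invariant (hR : ∀ x y, R x y → R y x) (hgen : ∀ p x, R p (p * FreeGroup.of x))
    {C : Set (FreeGroup α)} (hC : (bd R C).Finite) (g : FreeGroup α) :
    {p | p ∈ C ∧ p * g ∉ C}.Finite := by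
  have hgen' : ∀ p x, R p (p * (FreeGroup.of x)⁻¹) := fun p x => hR _ _ (by
    have := hgen (p * (FreeGroup.of x)⁻¹) x
    rwa [inv_mul_cancel_right] at this)
  have step : ∀ s : FreeGroup α, (∀ p, R p (p * s)) → ∀ g, {p | p ∈ C ∧ p * g ∉ C}.Finite →
      {p | p ∈ C ∧ p * (s * g) ∉ C}.Finite := by
    intro s hs g hg
    have h1 : {p | (p, p * s) ∈ bd R C}.Finite :=
      hC.preimage (fun a _ b _ hab => (Prod.mk.inj hab).1)
    have h2 : {p | p * s ∈ {p | p ∈ C ∧ p * g ∉ C}}.Finite :=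
      hg.preimage (fun a _ b _ hab => mul_right_cancel hab)
    refine (h1.union h2).subset ?_
    rintro p ⟨hp, hp'⟩
    by_cases hps : p * s ∈ C
    · exact Or.inr ⟨hps, by rwa [mul_assoc]⟩
    · exact Or.inl ⟨hs p, hp, hps⟩
  induction g using norm_induction with
  | h1 => exact Set.finite_empty.subset fun p hp => hp.2 (by rw [mul_one]; exact hp.1)
  | hmul x g _ ih => exact step _ (fun p => hgen p x) g ih
  | hinv x g _ ih => exact step _ (fun p => hgen' p x) g ih

/-- Sets with finite boundary are almost invariant under right translations, so far away points
`f n` and `f n * g` lie on the same side. -/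
theorem almost_invariant_seq (hR : ∀ x y, R x y → R y x)
    (hgen : ∀ p x, R p (p * FreeGroup.of x)) {C : Set (FreeGroup α)} (hC : (bd R C).Finite)
    {f : ℕ → FreeGroup α} (hf : Function.Injective f) (g : FreeGroup α) :
    ∀ᶠ n in atTop, (f n ∈ C ↔ f n * g ∈ C) := by
  have h1 := almost_invariant hR hgen hC g
  have h2 := almost_invariant hR hgen (finite_bd_compl hR hC) g
  have h3 := (h1.union h2).preimage (f := f) hf.injOn
  rw [← Nat.cofinite_eq_atTop]
  filter_upwards [h3.compl_mem_cofinite] with n hn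
  by_contra hcon
  apply hn
  by_cases hc : f n ∈ C
  · exact Or.inl ⟨hc, fun h => hcon (iff_of_true hc h)⟩
  · exact Or.inr ⟨hc, fun h => hcon (iff_of_false hc h)⟩

theorem pow_injective {h : FreeGroup α} (hh : h ≠ 1) : Function.Injective fun n : ℕ => h ^ n := by
  rw [injective_pow_iff_not_isOfFinOrder, isOfFinOrder_iff_pow_eq_one]
  rintro ⟨n, hn, h1⟩
  exact hh ((pow_eq_one_iff_left (by omega)).1 h1)

/-- The powers of `h` end up on one side of a set with finite boundary. -/
theorem eventually_side (hR : ∀ x y, R x y → R y x)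
    (hgen : ∀ p x, R p (p * FreeGroup.of x)) {C : Set (FreeGroup α)} (hC : (bd R C).Finite)
    {h : FreeGroup α} (hh : h ≠ 1) :
    (∀ᶠ n : ℕ in atTop, h ^ n ∈ C) ∨ ∀ᶠ n : ℕ in atTop, h ^ n ∉ C := by
  obtain ⟨N, hN⟩ := eventually_atTop.1 (almost_invariant_seq hR hgen hC (pow_injective hh) h)
  have key : ∀ k, h ^ (N + k) ∈ C ↔ h ^ N ∈ C := by
    intro k
    induction k with
    | zero => rfl
    | succ k ih => rw [← ih, hN (N + k) (by omega), ← pow_succ]; rfl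
  by_cases hc : h ^ N ∈ C
  · left
    filter_upwards [eventually_ge_atTop N] with n hn
    obtain ⟨k, rfl⟩ := Nat.exists_eq_add_of_le hn
    exact (key k).2 hc
  · right
    filter_upwards [eventually_ge_atTop N] with n hn
    obtain ⟨k, rfl⟩ := Nat.exists_eq_add_of_le hn
    exact fun h => hc ((key k).1 h)

/-- The set `B` separates the two ends of the cyclic group generated by `h`. -/
def Sep (h : FreeGroup α) (B : Set (FreeGroup α)) : Prop :=
  (∀ᶠ n : ℕ in atTop, h ^ n ∈ B) ∧ ∀ᶠ n : ℕ in atTop, (h⁻¹) ^ n ∉ B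

theorem Sep.compl {h : FreeGroup α} {B : Set (FreeGroup α)} (hB : Sep h B) : Sep h⁻¹ Bᶜ := by
  refine ⟨hB.2, ?_⟩
  filter_upwards [hB.1] with n hn
  rw [inv_inv]
  exact fun h => h hn

/-- If the sets `{w | hd w = some x}` have at most `L` boundary edges, then the ends of `⟨h⟩` are
separated by one of the sets in `good R L`. -/
theorem exists_sep [Finite α] (hR : ∀ x y, R x y → R y x)
    (hgen : ∀ p x, R p (p * FreeGroup.of x)) (hmul : ∀ g p q, R (g * p) (g * q) ↔ R p q) {L : ℕ}
    (hfin : ∀ x : α × Bool, (bd R {w | hd w = some x}).Finite)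
    (hL : ∀ x : α × Bool, (bd R {w | hd w = some x}).ncard ≤ L) {h : FreeGroup α} (hh : h ≠ 1) :
    ∃ B ∈ good R L, Sep h B := by
  have hh' : h⁻¹ ≠ 1 := inv_ne_one.2 hh
  by_contra hcon
  push Not at hcon
  -- then no set generated by `good R L` separates the two ends
  have key : ∀ C, Gen (good R L) C → ∀ᶠ n : ℕ in atTop, (h ^ n ∈ C ↔ (h⁻¹) ^ n ∈ C) := by
    intro C hC
    induction hC with
    | @base C hC =>
      rcases eventually_side hR hgen hC.1 hh with h1 | h1 <;>
        rcases eventually_side hR hgen hC.1 hh' with h2 | h2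
      · filter_upwards [h1, h2] with n h1 h2 using iff_of_true h1 h2
      · exact absurd ⟨h1, h2⟩ (hcon C hC)
      · exact absurd ⟨h1, by filter_upwards [h2] with n h2 using fun h => h h2⟩
          (hcon Cᶜ (good_compl hR hC))
      · filter_upwards [h1, h2] with n h1 h2 using iff_of_false h1 h2
    | empty => exact Eventually.of_forall fun n => Iff.rfl
    | compl _ ih => filter_upwards [ih] with n hn using not_congr hn
    | union _ _ ih1 ih2 => filter_upwards [ih1, ih2] with n h1 h2 using or_congr h1 h2
  obtain ⟨u, x, h1, h2⟩ := exists_end_cut hh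
  have hbd := bd_image (R := R) (Equiv.mulLeft u) (hmul u) {w | hd w = some x}
  have hA := gen_good (R := R) (L := L) (Equiv.mulLeft u '' {w | hd w = some x})
    (by rw [hbd]; exact (hfin x).image _)
    (by rw [hbd]; exact (Set.ncard_image_le (hfin x)).trans (hL x))
  obtain ⟨n, e1, e2, e3⟩ := ((key _ hA).and (h1.and h2)).exists
  have hmem : ∀ p, p ∈ Equiv.mulLeft u '' {w | hd w = some x} ↔ hd (u⁻¹ * p) = some x := by
    intro p
    rw [Equiv.image_eq_preimage_symm]
    rfl
  rw [hmem, hmem] at e1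
  exact e3 (e1.1 e2)

end FreeCuts

section FreeTree

open scoped Pointwise

variable {r : ℕ} {E : Set (Set (FreeGroup (Fin r)))}

/-- An element `h` does not fix a vertex towards which points an edge separating the two ends
of `h`: infinitely many translates of this edge would lie between that vertex and a point. -/
theorem not_fixed_of_sep_of_mem (L : FreeGroup (Fin r) →* Ori.Aut E)
    (hL : ∀ g (A : Set (FreeGroup (Fin r))) p, p ∈ L g • A ↔ g⁻¹ * p ∈ A) {h : FreeGroup (Fin r)}
    {B : Set (FreeGroup (Fin r))} (hs : Sep h B) {o : Ori E} (ho : L h • o = o) (hB : B ∈ o.1) :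
    False := by
  have hmem : ∀ k : ℕ, L (h ^ k) • B ∈ o.1 := by
    intro k
    induction k with
    | zero => rw [pow_zero, map_one, one_smul]; exact hB
    | succ k ih =>
      have := Ori.smul_mem_smul (L h) ih
      rwa [ho, smul_smul, ← map_mul, ← pow_succ'] at this
  obtain ⟨N, hN⟩ := eventually_atTop.1 hs.1
  obtain ⟨M, hM⟩ := eventually_atTop.1 hs.2
  have hinj : Function.Injective fun k : ℕ => L (h ^ k) • B := by
    apply Function.Injective.of_lt_imp_ne
    intro a b hab heq
    obtain ⟨d, rfl⟩ := Nat.exists_eq_add_of_lt hab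
    -- membership of powers of `h` in `B` is periodic
    have hper : ∀ z : ℤ, h ^ z ∈ B ↔ h ^ (z - (d + 1)) ∈ B := by
      intro z
      have h1 := hL (h ^ a) B (h ^ (a + z))
      have h2 := hL (h ^ (a + d + 1)) B (h ^ (a + z))
      rw [heq, h2] at h1
      rw [← zpow_natCast, ← zpow_natCast, ← zpow_neg, ← zpow_neg, ← zpow_add, ← zpow_add] at h1
      convert h1.symm using 3
      · omega
      · push_cast; ring
    have hper' : ∀ (j : ℕ) (z : ℤ), h ^ z ∈ B ↔ h ^ (z - j * (d + 1)) ∈ B := by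
      intro j
      induction j with
      | zero => intro z; simp
      | succ j ih =>
        intro z
        rw [hper z, ih]
        have : z - (d + 1) - j * (d + 1) = z - ((j + 1 : ℕ) : ℤ) * (d + 1) := by push_cast; ring
        rw [this]
    have h1 := (hper' (N + M) N).1 (by rw [zpow_natCast]; exact hN N le_rfl)
    have h2 := hM (M + (N + M) * d) (by omega)
    apply h2
    rw [← zpow_natCast, inv_zpow']
    convert h1 using 2
    push_cast; ring
  have hfin := o.2.2.2.2 1
  have hinf : {k : ℕ | M ≤ k}.Infinite := Set.infinite_of_not_bddAbove (by
    rintro ⟨b, hb⟩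
    have := hb (show max M (b + 1) ∈ {k : ℕ | M ≤ k} from le_max_left M (b + 1))
    omega)
  refine hinf ((hfin.preimage hinj.injOn).subset ?_)
  intro k hk
  refine ⟨hmem k, ?_⟩
  rw [hL, mul_one, ← inv_pow]
  exact hM k hk

/-- An element whose ends are separated by an edge of the tree fixes no vertex. -/
theorem not_fixed_of_sep (hE : TreeSet E) (L : FreeGroup (Fin r) →* Ori.Aut E)
    (hL : ∀ g (A : Set (FreeGroup (Fin r))) p, p ∈ L g • A ↔ g⁻¹ * p ∈ A) {h : FreeGroup (Fin r)}
    {B : Set (FreeGroup (Fin r))} (hB : B ∈ E) (hs : Sep h B) {o : Ori E} (ho : L h • o = o) :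
    False := by
  by_cases hBo : B ∈ o.1
  · exact not_fixed_of_sep_of_mem L hL hs ho hBo
  · refine not_fixed_of_sep_of_mem L hL hs.compl (o := o) ?_ (o.compl_mem hE hB hBo)
    rw [map_inv, inv_smul_eq_iff, ho]

/-- An automorphism of finite order which moves the powers of `h` by a bounded amount fixes the
edges separating the ends of `h`. -/
theorem smul_eq_of_sep (hE : TreeSet E) {R : FreeGroup (Fin r) → FreeGroup (Fin r) → Prop}
    (hR : ∀ x y, R x y → R y x) (hgen : ∀ p x, R p (p * FreeGroup.of x))
    (hfin : ∀ A ∈ E, (bd R A).Finite) {h : FreeGroup (Fin r)} (hh : h ≠ 1) (e : Ori.Aut E)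
    (he : ∀ p (A : Set (FreeGroup (Fin r))), e.1 p ∈ e • A ↔ p ∈ A) (m : FreeGroup (Fin r))
    (hm : ∀ n : ℕ, e.1 (h ^ n) = h ^ n * m) (hm' : ∀ n : ℕ, e.1 ((h⁻¹) ^ n) = (h⁻¹) ^ n * m)
    {N : ℕ} (hN : 0 < N) (hper : e ^ N = 1) {B : Set (FreeGroup (Fin r))} (hB : B ∈ E)
    (hs : Sep h B) : e • B = B := by
  have heB := Ori.smul_mem e hB
  have h1 : ∀ᶠ n : ℕ in atTop, h ^ n ∈ e • B := by
    filter_upwards [hs.1, almost_invariant_seq hR hgen (hfin _ heB) (pow_injective hh) m]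
      with n h1 h2
    rw [h2, ← hm]
    exact (he _ _).2 h1
  have h2 : ∀ᶠ n : ℕ in atTop, (h⁻¹) ^ n ∉ e • B := by
    filter_upwards [hs.2, almost_invariant_seq hR hgen (hfin _ heB)
      (pow_injective (inv_ne_one.2 hh)) m] with n h1 h2
    rw [h2, ← hm', he]
    exact h1
  obtain ⟨n, e1, e2⟩ := (h1.and hs.1).exists
  obtain ⟨n', e1', e2'⟩ := (h2.and hs.2).exists
  apply Ori.eq_of_periodic hN (by rw [hper, one_smul])
  rcases hE.cases hB heB with hc | hc | hc | hc
  · exact absurd e1 (hc e2)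
  · exact Or.inl hc
  · exact Or.inr hc
  · exact absurd (hc e2') e1'

end FreeTree

section FreeGraph

variable {α : Type*} [DecidableEq α] {R : FreeGroup α → FreeGroup α → Prop}

theorem conn_univ (hR : ∀ x y, R x y → R y x) (hgen : ∀ p x, R p (p * FreeGroup.of x)) :
    Conn R Set.univ := by
  rintro A ⟨a, -, ha⟩ ⟨b, -, hb⟩
  by_contra hcon
  push Not at hcon
  have step : ∀ p q, R p q → p ∈ A → q ∈ A := by
    intro p q hpq hp
    by_contra hq
    exact hcon p ⟨trivial, hp⟩ q ⟨trivial, hq⟩ hpq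
  have key : ∀ g : FreeGroup α, ∀ p ∈ A, p * g ∈ A := by
    intro g
    induction g using norm_induction with
    | h1 => intro p hp; rwa [mul_one]
    | hmul x g _ ih => intro p hp; rw [← mul_assoc]; exact ih _ (step _ _ (hgen p x) hp)
    | hinv x g _ ih =>
      intro p hp
      rw [← mul_assoc]
      refine ih _ (step _ _ (hR _ _ ?_) hp)
      have := hgen (p * (FreeGroup.of x)⁻¹) x
      rwa [inv_mul_cancel_right] at this
  have := key (a⁻¹ * b) a ha
  rw [mul_inv_cancel_left] at this
  exact hb this

/-- The set of the words which start with a given letter has a finite boundary. -/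
theorem finite_bd_hd [Finite α] (hmul : ∀ g p q, R (g * p) (g * q) ↔ R p q)
    (hG : {s | R 1 s}.Finite) (x : α × Bool) : (bd R {w | hd w = some x}).Finite := by
  have : (⋃ s ∈ {s | R 1 s}, (fun p => (p, p * s)) '' {p | p.norm ≤ s.norm}).Finite :=
    hG.biUnion fun s _ => (finite_ball s.norm).image _
  refine this.subset ?_
  rintro ⟨p, q⟩ ⟨h1, h2, h3⟩
  simp only [Set.mem_ofPred_eq] at h1 h2 h3
  have h4 : R 1 (p⁻¹ * q) := by
    have := hmul p⁻¹ p q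
    rw [inv_mul_cancel] at this
    exact this.2 h1
  refine Set.mem_biUnion (x := p⁻¹ * q) h4 ⟨p, ?_, ?_⟩
  · by_contra hlt
    have := hd_mul_of_norm_lt (w := p) (s := p⁻¹ * q) (by
      rw [Set.mem_ofPred_eq] at hlt; omega)
    rw [mul_inv_cancel_left] at this
    exact h3 (this.trans h2)
  · simp

end FreeGraph

section LemmaA

open scoped Pointwise

variable {r : ℕ}

/-- The statement of `index_of_finite_order` when a Cayley graph `R` invariant under all the
bijections `p ↦ nn i * α p` is given. -/
theorem index_of_graph (hr : 1 ≤ r) (R : FreeGroup (Fin r) → FreeGroup (Fin r) → Prop)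
    (hR : ∀ x y, R x y → R y x) (hgen : ∀ p x, R p (p * FreeGroup.of x))
    (hmul : ∀ g p q, R (g * p) (g * q) ↔ R p q) (hG : {s | R 1 s}.Finite)
    (α : FreeGroup (Fin r) →* FreeGroup (Fin r)) {ι : Type*} [Fintype ι] [Nonempty ι]
    (nn : ι → FreeGroup (Fin r)) (σ : ι → Equiv.Perm (FreeGroup (Fin r)))
    (hσ : ∀ i p, σ i p = nn i * α p) (hσR : ∀ i x y, R (σ i x) (σ i y) ↔ R x y)
    (hper : ∀ i, ∃ N > 0, σ i ^ N = 1)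
    (hsim : ∀ i j u, nn j * α u = u * nn i → i = j)
    (hfix : ∀ i, ∃ h ≠ 1, nn i * α h = h * nn i) :
    ∃ S : ι → Finset (FreeGroup (Fin r)),
      (∀ i h, h ∈ Subgroup.closure (S i : Set (FreeGroup (Fin r))) ↔ nn i * α h = h * nn i) ∧
      ∑ i, (2 * ((S i).card : ℤ) - 2) ≤ 2 * (r : ℤ) - 2 := by
  classical
  have hV := conn_univ hR hgen
  -- a bound for the boundaries of the sets of words starting with a given letter
  obtain ⟨k, hk⟩ : ∃ k : ℕ, ∀ x : Fin r × Bool, (bd R {w | hd w = some x}).ncard ≤ k :=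
    ⟨Finset.univ.sup fun x : Fin r × Bool => (bd R {w | hd w = some x}).ncard,
      fun x => Finset.le_sup (f := fun x : Fin r × Bool => (bd R {w | hd w = some x}).ncard)
        (Finset.mem_univ x)⟩
  have hbd := finite_bd_hd hmul hG
  have hE : TreeSet (good R k) :=
    { compl := good_compl hR
      nested := good_nested hR hV
      fin := finite_good hR hV k
      nonempty := good_nonempty }
  -- automorphisms of the graph act on the tree
  have haut : ∀ e : Equiv.Perm (FreeGroup (Fin r)), (∀ x y, R (e x) (e y) ↔ R x y) →
      e ∈ Ori.Aut (good R k) := by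
    intro e he
    have he' : ∀ x y, R (e.symm x) (e.symm y) ↔ R x y := by
      intro x y
      rw [← he, Equiv.apply_symm_apply, Equiv.apply_symm_apply]
    rw [MulAction.mem_stabilizer_iff]
    apply Set.Subset.antisymm
    · rintro _ ⟨A, hA, rfl⟩
      exact good_image e he hA
    · intro A hA
      refine ⟨e.symm '' A, good_image e.symm he' hA, ?_⟩
      change e '' (e.symm '' A) = A
      rw [Equiv.image_symm_image]
  let L : FreeGroup (Fin r) →* Ori.Aut (good R k) :=
    (MulAction.toPermHom (FreeGroup (Fin r)) (FreeGroup (Fin r))).codRestrict _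
      fun g => haut _ (hmul g)
  have hLp : ∀ g p, (L g).1 p = g * p := fun g p => rfl
  have hmemS : ∀ (e : Ori.Aut (good R k)) (A : Set (FreeGroup (Fin r))) p,
      e.1 p ∈ e • A ↔ p ∈ A := fun e A p => Set.smul_mem_smul_set_iff (a := e.1)
  have hL : ∀ g (A : Set (FreeGroup (Fin r))) p, p ∈ L g • A ↔ g⁻¹ * p ∈ A := by
    intro g A p
    rw [← hmemS (L g) A (g⁻¹ * p), hLp, mul_inv_cancel_left]
  have hsep : ∀ {h : FreeGroup (Fin r)}, h ≠ 1 → ∃ B ∈ good R k, Sep h B := fun hh =>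
    exists_sep hR hgen hmul hbd hk hh
  have hfree : ∀ h (o : Ori (good R k)), L h • o = o → h = 1 := by
    intro h o ho
    by_contra hh
    obtain ⟨B, hB, hs⟩ := hsep hh
    exact not_fixed_of_sep hE L hL hB hs ho
  let τ : ι → Ori.Aut (good R k) := fun i => ⟨σ i, haut _ (hσR i)⟩
  have hτp : ∀ i p, (τ i).1 p = nn i * α p := hσ
  have hcomm : ∀ i h, τ i * L h = L h * τ i ↔ nn i * α h = h * nn i := by
    intro i h
    constructor
    · intro he
      have := congrArg (fun e : Ori.Aut (good R k) => e.1 1) he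
      change (τ i).1 ((L h).1 1) = (L h).1 ((τ i).1 1) at this
      simpa only [hτp, hLp, mul_one, map_one] using this
    · intro he
      apply Subtype.ext
      ext1 p
      change (τ i).1 ((L h).1 p) = (L h).1 ((τ i).1 p)
      rw [hτp, hLp, hLp, hτp, map_mul, ← mul_assoc, he, mul_assoc]
  obtain ⟨S, hS, hsum⟩ := Ori.tree_index hE hr L hfree
    (⋃ s ∈ {s | R 1 s}, {A | A ∈ good R k ∧ 1 ∈ A ∧ s ∉ A})
    (hG.biUnion fun s _ => finite_good hR hV k 1 s) (by
      intro A hA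
      obtain ⟨a, ha⟩ := good_nonempty hA
      obtain ⟨b, hb⟩ := good_ne_univ hA
      obtain ⟨x, hx, y, hy, hxy⟩ := hV A ⟨a, trivial, ha⟩ ⟨b, trivial, hb⟩
      refine ⟨x⁻¹, Set.mem_biUnion (x := x⁻¹ * y) ?_ ⟨Ori.smul_mem _ hA, ?_, ?_⟩⟩
      · have := hmul x⁻¹ x y
        rw [inv_mul_cancel] at this
        exact this.2 hxy
      · rw [hL, inv_inv, mul_one]; exact hx.2
      · rw [hL, inv_inv, mul_inv_cancel_left]; exact hy.2) τ (by
      intro i j h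
      refine ⟨h⁻¹ * nn j * α h * (nn i)⁻¹, ?_⟩
      rw [mul_inv_eq_iff_eq_mul, mul_assoc, inv_mul_eq_iff_eq_mul]
      apply Subtype.ext
      ext1 p
      change (τ j).1 ((L h).1 p) = (L h).1 ((L _).1 ((τ i).1 p))
      rw [hτp, hLp, hLp, hLp, hτp, map_mul]
      group) (by
      intro i j h he
      apply hsim i j h
      have := congrArg (fun e : Ori.Aut (good R k) => e.1 1) he
      change (τ j).1 ((L h).1 1) = (L h).1 ((τ i).1 1) at this
      simpa only [hτp, hLp, mul_one, map_one] using this) (by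
      intro i
      obtain ⟨h, hh, hfx⟩ := hfix i
      obtain ⟨B, hB, hs⟩ := hsep hh
      obtain ⟨N, hN, hper⟩ := hper i
      have hpow : ∀ n : ℕ, nn i * α (h ^ n) = h ^ n * nn i := by
        intro n
        have h1 : SemiconjBy (nn i) (α h) h := hfx
        rw [map_pow]
        exact (h1.pow_right n).eq
      have hpow' : ∀ n : ℕ, nn i * α ((h⁻¹) ^ n) = (h⁻¹) ^ n * nn i := by
        intro n
        have h1 : SemiconjBy (nn i) (α h) h := hfx
        rw [map_pow, map_inv]
        exact (h1.inv_right.pow_right n).eq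
      refine ⟨B, hB, smul_eq_of_sep hE hR hgen (fun A hA => hA.1) hh (τ i)
        (fun p A => hmemS (τ i) A p) (nn i) (fun n => (hτp i _).trans (hpow n))
        (fun n => (hτp i _).trans (hpow' n)) hN (Subtype.ext hper) hB hs⟩)
  refine ⟨S, fun i h => ?_, hsum⟩
  rw [hS, Subgroup.mem_comap, Subgroup.mem_centralizer_singleton_iff]
  rw [← hcomm i h]
  exact eq_comm

/-- **The index inequality for twisted fixed subgroups of a finite order automorphism.** If the
bijections `p ↦ nn i * α p` have finite order and the elements `nn i` lie in distinct twisted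
conjugacy classes, then the nontrivial fixed subgroups of `p ↦ nn i * α p * (nn i)⁻¹` satisfy the
index inequality. -/
theorem index_of_finite_order (hr : 1 ≤ r) (α : FreeGroup (Fin r) →* FreeGroup (Fin r))
    {ι : Type*} [Fintype ι] [Nonempty ι] (nn : ι → FreeGroup (Fin r))
    (hper : ∀ i, ∃ N > 0, ∀ p, (fun p => nn i * α p)^[N] p = p)
    (hsim : ∀ i j u, nn j * α u = u * nn i → i = j)
    (hfix : ∀ i, ∃ h ≠ 1, nn i * α h = h * nn i) :
    ∃ S : ι → Finset (FreeGroup (Fin r)),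
      (∀ i h, h ∈ Subgroup.closure (S i : Set (FreeGroup (Fin r))) ↔ nn i * α h = h * nn i) ∧
      ∑ i, (2 * ((S i).card : ℤ) - 2) ≤ 2 * (r : ℤ) - 2 := by
  classical
  -- `α` has finite order
  obtain ⟨M, hM, hαM⟩ : ∃ M > 0, ∀ p, α^[M] p = p := by
    obtain ⟨i⟩ := ‹Nonempty ι›
    obtain ⟨N, hN, hp⟩ := hper i
    have key : ∀ m : ℕ, ∃ c, ∀ p, (fun p => nn i * α p)^[m] p = c * α^[m] p := by
      intro m
      induction m with
      | zero => exact ⟨1, fun p => (one_mul _).symm⟩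
      | succ m ih =>
        obtain ⟨c, hc⟩ := ih
        refine ⟨nn i * α c, fun p => ?_⟩
        rw [Function.iterate_succ_apply', Function.iterate_succ_apply', hc, map_mul, mul_assoc]
    obtain ⟨c, hc⟩ := key N
    have hc1 : c = 1 := by
      have := hc 1
      rw [hp, iterate_map_one, mul_one] at this
      exact this.symm
    refine ⟨N, hN, fun p => ?_⟩
    have := hc p
    rw [hp, hc1, one_mul] at this
    exact this.symm
  have hαi : ∀ p, α (α^[M - 1] p) = p := by
    intro p
    rw [← Function.iterate_succ_apply' α, Nat.succ_eq_add_one, Nat.sub_add_cancel hM]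
    exact hαM p
  have hαi' : ∀ p, α^[M - 1] (α p) = p := by
    intro p
    rw [← Function.iterate_succ_apply α, Nat.succ_eq_add_one, Nat.sub_add_cancel hM]
    exact hαM p
  let σ : ι → Equiv.Perm (FreeGroup (Fin r)) := fun i =>
    { toFun := fun p => nn i * α p
      invFun := fun p => α^[M - 1] ((nn i)⁻¹ * p)
      left_inv := fun p => by simp only [inv_mul_cancel_left, hαi']
      right_inv := fun p => by simp only [hαi, mul_inv_cancel_left] }
  -- a finite symmetric generating set which is invariant under `α`
  let G : Set (FreeGroup (Fin r)) :=
    ⋃ k ∈ Finset.range M, ⋃ x : Fin r,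
      {α^[k] (FreeGroup.of x), (α^[k] (FreeGroup.of x))⁻¹}
  have hGm : ∀ s, s ∈ G ↔ ∃ k < M, ∃ x : Fin r,
      s = α^[k] (FreeGroup.of x) ∨ s = (α^[k] (FreeGroup.of x))⁻¹ := by
    intro s
    simp [G]
  have hGfin : G.Finite :=
    Set.Finite.biUnion (Finset.finite_toSet _) fun k _ => Set.finite_iUnion fun x => by simp
  have hGinv : ∀ s ∈ G, s⁻¹ ∈ G := by
    intro s hs
    obtain ⟨k, hk, x, h | h⟩ := (hGm s).1 hs
    · exact (hGm _).2 ⟨k, hk, x, Or.inr (by rw [h])⟩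
    · exact (hGm _).2 ⟨k, hk, x, Or.inl (by rw [h, inv_inv])⟩
  have hGα : ∀ s ∈ G, α s ∈ G := by
    intro s hs
    have key : ∀ k < M, ∀ x : Fin r, ∃ k' < M,
        α (α^[k] (FreeGroup.of x)) = α^[k'] (FreeGroup.of x) := by
      intro k hk x
      rw [← Function.iterate_succ_apply' α]
      rcases Nat.lt_or_ge (k + 1) M with h | h
      · exact ⟨k + 1, h, rfl⟩
      · refine ⟨0, hM, ?_⟩
        obtain rfl : M = k + 1 := by omega
        exact hαM _
    obtain ⟨k, hk, x, h⟩ := (hGm s).1 hs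
    obtain ⟨k', hk', e⟩ := key k hk x
    refine (hGm _).2 ⟨k', hk', x, h.imp (fun h => by rw [h, e]) (fun h => ?_)⟩
    rw [h, map_inv, e]
  have hGα' : ∀ s, α s ∈ G → s ∈ G := by
    have key : ∀ (m : ℕ) s, s ∈ G → α^[m] s ∈ G := by
      intro m
      induction m with
      | zero => exact fun s hs => hs
      | succ m ih => exact fun s hs => ih _ (hGα s hs)
    intro s hs
    rw [← hαi' s]
    exact key _ _ hs
  refine index_of_graph hr (fun p q => p⁻¹ * q ∈ G) ?_ ?_ ?_ ?_ α nn σ (fun i p => rfl) ?_ ?_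
    hsim hfix
  · intro x y h
    have := hGinv _ h
    rwa [mul_inv_rev, inv_inv] at this
  · intro p x
    rw [inv_mul_cancel_left]
    exact (hGm _).2 ⟨0, hM, x, Or.inl rfl⟩
  · intro g p q
    rw [mul_inv_rev, mul_assoc, inv_mul_cancel_left]
  · simpa using hGfin
  · intro i x y
    change (nn i * α x)⁻¹ * (nn i * α y) ∈ G ↔ _
    rw [mul_inv_rev, mul_assoc, inv_mul_cancel_left, ← map_inv, ← map_mul]
    exact ⟨hGα' _, hGα _⟩
  · intro i
    obtain ⟨N, hN, hp⟩ := hper i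
    refine ⟨N, hN, ?_⟩
    ext1 p
    rw [Equiv.Perm.coe_pow]
    exact hp p

end LemmaA

/-! ### Ranks of the stabilizers -/

section Ranks

/-- Elements of a basis cannot be generated by fewer elements. -/
theorem card_le_of_of_mem_closure {X : Type*} (T : Finset X) (S : Finset (FreeGroup X))
    (h : ∀ x ∈ T, FreeGroup.of x ∈ Subgroup.closure (S : Set (FreeGroup X))) :
    T.card ≤ S.card := by
  classical
  let f : FreeGroup X →* Multiplicative (X →₀ ℚ) :=
    FreeGroup.lift fun x => Multiplicative.ofAdd (Finsupp.single x 1)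
  let w : Finset (X →₀ ℚ) := S.image fun s => Multiplicative.toAdd (f s)
  have hspan : ∀ g ∈ Subgroup.closure (S : Set (FreeGroup X)),
      Multiplicative.toAdd (f g) ∈ Submodule.span ℚ (w : Set (X →₀ ℚ)) := by
    intro g hg
    induction hg using Subgroup.closure_induction with
    | mem s hs => exact Submodule.subset_span (Finset.mem_image_of_mem _ hs)
    | one => rw [map_one]; exact Submodule.zero_mem _
    | mul a b _ _ iha ihb => rw [map_mul]; exact Submodule.add_mem _ iha ihb
    | inv a _ iha => rw [map_inv]; exact Submodule.neg_mem _ iha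
  have hli : LinearIndependent ℚ fun x : T => (Finsupp.single (x : X) (1 : ℚ)) :=
    (Finsupp.linearIndependent_single_one ℚ X).comp _ Subtype.val_injective
  have := linearIndependent_le_span_aux' _ hli (w : Set (X →₀ ℚ)) (by
    rintro _ ⟨x, rfl⟩
    have := hspan _ (h x.1 x.2)
    simpa [f] using this)
  rw [Fintype.card_coe] at this
  refine this.trans ?_
  simp only [Finset.coe_sort_coe, Fintype.card_coe]
  exact Finset.card_image_le

/-- Variant of `card_le_of_of_mem_closure` for a free subgroup, given by an injective
homomorphism. -/
theorem card_le_of_mem_closure {X G : Type*} [Group G] {ρ : FreeGroup X →* G}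
    (hρ : Function.Injective ρ) (T : Finset X) (S : Finset G) (hS : ∀ s ∈ S, ∃ p, ρ p = s)
    (h : ∀ x ∈ T, ρ (FreeGroup.of x) ∈ Subgroup.closure (S : Set G)) : T.card ≤ S.card := by
  classical
  have hS' : ((S.preimage ρ hρ.injOn).image ρ) = S := by
    ext s
    simp only [Finset.mem_image, Finset.mem_preimage]
    constructor
    · rintro ⟨p, hp, rfl⟩; exact hp
    · intro hs
      obtain ⟨p, rfl⟩ := hS s hs
      exact ⟨p, hs, rfl⟩
  refine (card_le_of_of_mem_closure T (S.preimage ρ hρ.injOn) fun x hx => ?_).trans ?_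
  · have h1 := h x hx
    rw [← hS', Finset.coe_image, ← MonoidHom.map_closure] at h1
    obtain ⟨p, hp, hpx⟩ := h1
    rwa [← hρ hpx]
  · conv_rhs => rw [← hS']
    rw [Finset.card_image_of_injective _ hρ]

/-- A subgroup whose finite subsets all lie in subgroups of it with at most `n` generators is free
of finite rank. -/
theorem exists_basis {n : ℕ} (H : Subgroup (FreeGroup (Fin n)))
    (hH : ∀ Z : Finset (FreeGroup (Fin n)), (∀ z ∈ Z, z ∈ H) →
      ∃ S : Finset (FreeGroup (Fin n)),
        (Z : Set (FreeGroup (Fin n))) ⊆ Subgroup.closure (S : Set (FreeGroup (Fin n))) ∧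
        (∀ s ∈ S, s ∈ H) ∧ S.card ≤ n) :
    ∃ (r : ℕ) (ρ : FreeGroup (Fin r) →* FreeGroup (Fin n)), Function.Injective ρ ∧
      ∀ g, (∃ p, ρ p = g) ↔ g ∈ H := by
  classical
  have : IsFreeGroup H := subgroupIsFreeOfIsFree H
  let e := IsFreeGroup.toFreeGroup H
  let ρ₀ : FreeGroup (IsFreeGroup.Generators H) →* FreeGroup (Fin n) :=
    H.subtype.comp e.symm.toMonoidHom
  have hρ₀ : Function.Injective ρ₀ := Subtype.val_injective.comp e.symm.injective
  have hrange : ∀ g, (∃ p, ρ₀ p = g) ↔ g ∈ H := by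
    intro g
    constructor
    · rintro ⟨p, rfl⟩; exact (e.symm p).2
    · intro hg
      exact ⟨e ⟨g, hg⟩, congrArg Subtype.val (e.symm_apply_apply ⟨g, hg⟩)⟩
  have hcard : ∀ T : Finset (IsFreeGroup.Generators H), T.card ≤ n := by
    intro T
    obtain ⟨S, hS1, hS2, hS3⟩ := hH (T.image fun x => ρ₀ (FreeGroup.of x)) (by
      intro z hz
      obtain ⟨x, -, rfl⟩ := Finset.mem_image.1 hz
      exact (hrange _).1 ⟨_, rfl⟩)
    refine (card_le_of_mem_closure hρ₀ T S (fun s hs => (hrange s).2 (hS2 s hs)) ?_).trans hS3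
    intro x hx
    exact hS1 (Finset.mem_coe.2 (Finset.mem_image_of_mem _ hx))
  have hfin : Finite (IsFreeGroup.Generators H) := by
    by_contra hinf
    rw [not_finite_iff_infinite] at hinf
    obtain ⟨T, hT⟩ := Infinite.exists_subset_card_eq (IsFreeGroup.Generators H) (n + 1)
    have := hcard T
    omega
  obtain ⟨r, ⟨f⟩⟩ := Finite.exists_equiv_fin (IsFreeGroup.Generators H)
  let f' := FreeGroup.freeGroupCongr f.symm
  refine ⟨r, ρ₀.comp f'.toMonoidHom, hρ₀.comp f'.injective, fun g => ?_⟩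
  rw [← hrange]
  constructor
  · rintro ⟨p, hp⟩; exact ⟨_, hp⟩
  · rintro ⟨p, hp⟩
    refine ⟨f'.symm p, ?_⟩
    rw [← hp]
    exact congrArg ρ₀ (f'.apply_symm_apply p)

/-- The stabilizer of a point `Pt φ m` is free of finite rank. -/
theorem exists_basis_stabilizer {n : ℕ} (hn : 1 ≤ n)
    {φ : FreeGroup (Fin n) →* FreeGroup (Fin n)} (hφ : Function.Injective φ)
    (m : FreeGroup (Fin n)) :
    ∃ (r : ℕ) (ρ : FreeGroup (Fin r) →* FreeGroup (Fin n)), Function.Injective ρ ∧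
      ∀ g, (∃ p, ρ p = g) ↔ g • Pt φ m = Pt φ m := by
  refine exists_basis (MulAction.stabilizer (FreeGroup (Fin n)) (Pt φ m)) fun Z hZ => ?_
  obtain ⟨S, h1, h2, h3⟩ := Dendron.index_inequality hn (Dinf_dendron (Φ := facIter φ))
    (fun g q a b => Dinf_smul g q a b) (Dinf_comm (facIter_injective hφ)) (ι := Unit)
    (fun _ => Pt φ m) (fun _ _ _ _ => rfl) (κ := Empty) Empty.elim Empty.elim
    (fun k => k.elim) (fun k => k.elim) (fun k => k.elim) (fun _ => Z)
    (fun _ z hz => MulAction.mem_stabilizer_iff.1 (hZ z hz))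
  refine ⟨S (), h1 (), fun s hs => MulAction.mem_stabilizer_iff.2 (h2 () s hs), ?_⟩
  simp at h3
  omega

end Ranks

section FixedSubgroups

variable {n : ℕ} {φ : FreeGroup (Fin n) →* FreeGroup (Fin n)}

/-- The map `tw φ a b` preserves the set of the elements moving `Pt φ b` to `Pt φ a`. -/
theorem smul_tw_Pt (hφ : Function.Injective φ) {a b g : FreeGroup (Fin n)}
    (h : g • Pt φ b = Pt φ a) : tw φ a b g • Pt φ b = Pt φ a := by
  obtain ⟨p, hp, hper⟩ := exists_periodic_of_smul_Pt hφ h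
  refine smul_Pt_eq_of_periodic hp ?_
  rw [← Function.iterate_succ_apply, Function.iterate_succ_apply', hper]

/-- Change of base point: elements which move the points of `a`, `b` to the point of `m`
turn twisted fixed points for `a`, `b` into solutions of a twisted equation in the stabilizer
of the point of `m`. -/
theorem mul_tw_eq_iff (φ : FreeGroup (Fin n) →* FreeGroup (Fin n))
    (m a b h h' g : FreeGroup (Fin n)) :
    (h' * (tw φ m b h')⁻¹) * tw φ m m (h' * g * h⁻¹) = (h' * g * h⁻¹) * (h * (tw φ m a h)⁻¹) ↔
      tw φ b a g = g := by
  have e1 : (h' * (tw φ m b h')⁻¹) * tw φ m m (h' * g * h⁻¹) =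
      h' * (b * φ g) * (φ h)⁻¹ * m⁻¹ := by
    simp only [tw, map_mul, map_inv]; group
  have e2 : (h' * g * h⁻¹) * (h * (tw φ m a h)⁻¹) = h' * (g * a) * (φ h)⁻¹ * m⁻¹ := by
    simp only [tw]; group
  rw [e1, e2, mul_left_inj, mul_left_inj, mul_right_inj, tw, mul_inv_eq_iff_eq_mul]

/-- The index inequality for the fixed subgroups of the endomorphisms `Y ↦ m' i * φ Y * (m' i)⁻¹`
whose points lie in the orbit of the point belonging to `m`. -/
theorem index_of_class (hφ : Function.Injective φ) {m : FreeGroup (Fin n)} {r : ℕ}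
    {ρ : FreeGroup (Fin r) →* FreeGroup (Fin n)} (hρ : Function.Injective ρ)
    (hH : ∀ g, (∃ p, ρ p = g) ↔ g • Pt φ m = Pt φ m)
    {ι : Type*} [Fintype ι] [Nonempty ι] (m' h : ι → FreeGroup (Fin n))
    (hh : ∀ i, h i • Pt φ (m' i) = Pt φ m)
    (hsim : ∀ i j g, tw φ (m' j) (m' i) g = g → i = j)
    (hne : ∀ i, ∃ g ≠ 1, tw φ (m' i) (m' i) g = g) :
    ∃ S : ι → Finset (FreeGroup (Fin n)),
      (∀ i, Subgroup.closure (S i : Set (FreeGroup (Fin n))) =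
        fixedSubgroup ((innerAut (m' i)).comp φ)) ∧
      ∑ i, (2 * ((S i).card : ℤ) - 2) ≤ 2 * (r : ℤ) - 2 := by
  classical
  have hψ : ∀ g, g • Pt φ m = Pt φ m → tw φ m m g • Pt φ m = Pt φ m := fun g => smul_tw_Pt hφ
  -- the restriction of `tw φ m m` to the stabilizer
  choose β hβ using fun x => (hH _).2 (hψ (ρ (FreeGroup.of x)) ((hH _).1 ⟨_, rfl⟩))
  let α : FreeGroup (Fin r) →* FreeGroup (Fin r) := FreeGroup.lift β
  have hα : ∀ p, ρ (α p) = tw φ m m (ρ p) := by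
    have : ρ.comp α = ((innerAut m).comp φ).comp ρ := by
      ext x
      change ρ (α (FreeGroup.of x)) = ((innerAut m).comp φ) (ρ (FreeGroup.of x))
      rw [← tw_self, ← hβ]
      simp [α]
    intro p
    rw [tw_self]
    exact DFunLike.congr_fun this p
  have hα' : ∀ N p, ρ (α^[N] p) = (tw φ m m)^[N] (ρ p) := by
    intro N
    induction N with
    | zero => intro p; rfl
    | succ N ih => intro p; rw [Function.iterate_succ_apply', hα, ih, Function.iterate_succ_apply']
  have hαper : ∀ p, ∃ N > 0, α^[N] p = p := by
    intro p
    obtain ⟨N, hN, hp⟩ := exists_periodic_of_smul_Pt hφ ((hH (ρ p)).1 ⟨_, rfl⟩)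
    exact ⟨N, hN, hρ (by rw [hα', hp])⟩
  -- `α` has finite order, since its domain is finitely generated
  obtain ⟨M, hM, hαM⟩ : ∃ M > 0, ∀ p, α^[M] p = p := by
    choose N hN hNp using fun x : Fin r => hαper (FreeGroup.of x)
    refine ⟨∏ x, N x, Finset.prod_pos fun x _ => hN x, ?_⟩
    have : iter α (∏ x, N x) = MonoidHom.id _ := by
      ext x
      change iter α (∏ x, N x) (FreeGroup.of x) = FreeGroup.of x
      rw [iter_apply]
      have : Function.IsPeriodicPt α (N x) (FreeGroup.of x) := hNp x
      exact this.trans_dvd (Finset.dvd_prod_of_mem N (Finset.mem_univ x))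
    intro p
    rw [← iter_apply, this]
    rfl
  choose nn hnn using fun i => (hH (h i * (tw φ m (m' i) (h i))⁻¹)).2 (by
    rw [mul_smul, inv_smul_eq_iff.2 (smul_tw_Pt hφ (hh i)).symm, hh])
  -- twisted conjugation by `h i` relates `nn i * α p` to the map `tw φ (m' i) m`
  have hiff : ∀ i j p, nn j * α p = p * nn i ↔
      tw φ (m' j) (m' i) ((h j)⁻¹ * ρ p * h i) = (h j)⁻¹ * ρ p * h i := by
    intro i j p
    rw [← mul_tw_eq_iff φ m (m' i) (m' j) (h i) (h j), ← hnn, ← hnn]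
    have e : h j * ((h j)⁻¹ * ρ p * h i) * (h i)⁻¹ = ρ p := by group
    rw [e, ← hα, ← map_mul, ← map_mul]
    exact hρ.eq_iff.symm
  obtain ⟨S', hS', hsum⟩ : ∃ S : ι → Finset (FreeGroup (Fin r)),
      (∀ i p, p ∈ Subgroup.closure (S i : Set (FreeGroup (Fin r))) ↔ nn i * α p = p * nn i) ∧
      ∑ i, (2 * ((S i).card : ℤ) - 2) ≤ 2 * (r : ℤ) - 2 := by
    have hconj : ∀ i g, tw φ (m' i) (m' i) g = g → ∃ p, ρ p = h i * g * (h i)⁻¹ := by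
      intro i g hg
      rw [hH, mul_smul, mul_smul, inv_smul_eq_iff.2 (hh i).symm,
        smul_Pt_eq_of_periodic (p := 1) one_pos hg, hh]
    refine index_of_finite_order ?_ α nn ?_ ?_ ?_
    · -- the free group contains a nontrivial element
      obtain ⟨i⟩ := ‹Nonempty ι›
      obtain ⟨g, hg, hfg⟩ := hne i
      obtain ⟨p, hp⟩ := hconj i g hfg
      by_contra hr
      obtain rfl : r = 0 := by omega
      rw [Subsingleton.elim p 1, map_one, eq_comm, mul_inv_eq_one] at hp
      exact hg (mul_eq_left.1 hp)
    · intro i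
      have key : ∀ (k : ℕ) p, (fun p => nn i * α p)^[k] p =
          (fun p => nn i * α p)^[k] 1 * α^[k] p := by
        intro k
        induction k with
        | zero => intro p; exact (one_mul p).symm
        | succ k ih =>
          intro p
          rw [Function.iterate_succ_apply', ih, Function.iterate_succ_apply',
            Function.iterate_succ_apply', map_mul, mul_assoc]
      -- the orbit of `1` is periodic since it corresponds to an orbit of `tw φ (m' i) m`
      obtain ⟨N, hN, hp⟩ : ∃ N > 0, (fun p => nn i * α p)^[N] 1 = 1 := by
        have h1 : (h i)⁻¹ • Pt φ m = Pt φ (m' i) := inv_smul_eq_iff.2 (hh i).symm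
        obtain ⟨N, hN, hp⟩ := exists_periodic_of_smul_Pt hφ h1
        refine ⟨N, hN, hρ ?_⟩
        have key2 : ∀ k : ℕ, ρ ((fun p => nn i * α p)^[k] 1) =
            h i * (tw φ (m' i) m)^[k] (h i)⁻¹ := by
          intro k
          induction k with
          | zero => simp
          | succ k ih =>
            rw [Function.iterate_succ_apply', Function.iterate_succ_apply', map_mul, hα, ih, hnn]
            simp only [tw, map_mul]
            group
        rw [key2, hp, mul_inv_cancel, map_one]
      refine ⟨N * M, Nat.mul_pos hN hM, fun p => ?_⟩
      rw [key]
      have e1 : (fun p => nn i * α p)^[N * M] 1 = 1 := by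
        have : Function.IsPeriodicPt (fun p => nn i * α p) N 1 := hp
        exact this.mul_const M
      have e2 : α^[N * M] p = p := by
        have : Function.IsPeriodicPt α M p := hαM p
        exact this.const_mul N
      rw [e1, e2, one_mul]
    · intro i j u hu
      exact hsim i j _ ((hiff i j u).1 hu)
    · intro i
      obtain ⟨g, hg, hfg⟩ := hne i
      obtain ⟨p, hp⟩ := hconj i g hfg
      refine ⟨p, ?_, (hiff i i p).2 ?_⟩
      · rintro rfl
        rw [map_one, eq_comm, mul_inv_eq_one] at hp
        exact hg (mul_eq_left.1 hp)
      · have e : (h i)⁻¹ * ρ p * h i = g := by rw [hp]; group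
        rw [e, hfg]
  -- transport the generators back by conjugation
  let c : ι → FreeGroup (Fin r) →* FreeGroup (Fin n) := fun i => (innerAut (h i)⁻¹).comp ρ
  have hc : ∀ i p, c i p = (h i)⁻¹ * ρ p * h i := by
    intro i p
    change (h i)⁻¹ * ρ p * (h i)⁻¹⁻¹ = _
    rw [inv_inv]
  refine ⟨fun i => (S' i).image (c i), fun i => ?_, ?_⟩
  · rw [Finset.coe_image, ← MonoidHom.map_closure]
    ext g
    change _ ↔ ((innerAut (m' i)).comp φ) g = g
    rw [← tw_self, Subgroup.mem_map]
    constructor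
    · rintro ⟨p, hp, rfl⟩
      rw [hc]
      exact (hiff i i p).1 ((hS' i p).1 hp)
    · intro hg
      obtain ⟨p, hp⟩ : ∃ p, ρ p = h i * g * (h i)⁻¹ := by
        rw [hH, mul_smul, mul_smul, inv_smul_eq_iff.2 (hh i).symm,
          smul_Pt_eq_of_periodic (p := 1) one_pos hg, hh]
      have e : (h i)⁻¹ * ρ p * h i = g := by rw [hp]; group
      refine ⟨p, (hS' i p).2 ((hiff i i p).2 (by rw [e, hg])), ?_⟩
      rw [hc, e]
  · refine le_trans (Finset.sum_le_sum fun i _ => ?_) hsum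
    have := Finset.card_image_le (s := S' i) (f := c i)
    change 2 * (((S' i).image (c i)).card : ℤ) - 2 ≤ _
    omega

end FixedSubgroups

/-! ### The index of a family of endomorphisms -/

section Index

variable {n : ℕ} {φ : FreeGroup (Fin n) →* FreeGroup (Fin n)}

theorem closure_empty_eq_fixedSubgroup {m : FreeGroup (Fin n)}
    (hne : ¬ ∃ g ≠ 1, tw φ m m g = g) :
    Subgroup.closure ((∅ : Finset (FreeGroup (Fin n))) : Set (FreeGroup (Fin n))) =
      fixedSubgroup ((innerAut m).comp φ) := by
  rw [Finset.coe_empty, Subgroup.closure_empty, eq_comm, Subgroup.eq_bot_iff_forall]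
  intro g hg
  by_contra h1
  exact hne ⟨g, h1, (tw_self φ m g).trans hg⟩

/-- Variant of `index_of_class` which allows trivial fixed subgroups. -/
theorem sum_rank_class_le (hφ : Function.Injective φ) {m : FreeGroup (Fin n)} {r : ℕ}
    {ρ : FreeGroup (Fin r) →* FreeGroup (Fin n)} (hρ : Function.Injective ρ)
    (hH : ∀ g, (∃ p, ρ p = g) ↔ g • Pt φ m = Pt φ m)
    {ι : Type*} [Fintype ι] [Nonempty ι] (m' h : ι → FreeGroup (Fin n))
    (hh : ∀ i, h i • Pt φ (m' i) = Pt φ m)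
    (hsim : ∀ i j g, tw φ (m' j) (m' i) g = g → i = j) (R : ι → ℕ)
    (hR : ∀ i, ∀ S : Finset (FreeGroup (Fin n)), Subgroup.closure (S : Set (FreeGroup (Fin n))) =
      fixedSubgroup ((innerAut (m' i)).comp φ) → R i ≤ S.card) :
    ∑ i, (2 * (R i : ℤ) - 2) ≤ 2 * (r : ℤ) - 2 := by
  classical
  have hzero : ∀ i, (¬ ∃ g ≠ 1, tw φ (m' i) (m' i) g = g) → 2 * (R i : ℤ) - 2 = -2 := by
    intro i hi
    have := hR i ∅ (closure_empty_eq_fixedSubgroup hi)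
    rw [Finset.card_empty] at this
    omega
  by_cases hne : ∃ i, ∃ g ≠ 1, tw φ (m' i) (m' i) g = g
  · have : Nonempty {i // ∃ g ≠ 1, tw φ (m' i) (m' i) g = g} := hne.elim fun i hi => ⟨⟨i, hi⟩⟩
    obtain ⟨S, hS, hsum⟩ := index_of_class hφ hρ hH
      (ι := {i // ∃ g ≠ 1, tw φ (m' i) (m' i) g = g}) (fun i => m' i) (fun i => h i)
      (fun i => hh i) (fun i j g hg => Subtype.ext (hsim i j g hg)) (fun i => i.2)
    refine le_trans ?_ hsum
    rw [← Fintype.sum_subtype_add_sum_subtype (fun i => ∃ g ≠ 1, tw φ (m' i) (m' i) g = g)]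
    have h1 : ∑ i : {i // ¬ ∃ g ≠ 1, tw φ (m' i) (m' i) g = g}, (2 * (R i : ℤ) - 2) ≤ 0 :=
      Finset.sum_nonpos fun i _ => by rw [hzero i i.2]; norm_num
    have h2 : ∑ i : {i // ∃ g ≠ 1, tw φ (m' i) (m' i) g = g}, (2 * (R i : ℤ) - 2) ≤
        ∑ i, (2 * ((S i).card : ℤ) - 2) := Finset.sum_le_sum fun i _ => by
      have := hR i (S i) (hS i)
      omega
    linarith
  · push Not at hne
    obtain ⟨i⟩ := ‹Nonempty ι›
    rw [← Finset.add_sum_erase _ _ (Finset.mem_univ i), hzero i (by push Not; exact hne i)]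
    have : ∑ x ∈ Finset.univ.erase i, (2 * (R x : ℤ) - 2) ≤ 0 :=
      Finset.sum_nonpos fun j _ => by rw [hzero j (by push Not; exact hne j)]; norm_num
    omega

/-- The index inequality for finitely many endomorphisms `Y ↦ m i * φ Y * (m i)⁻¹`, no two of them
similar, where only finitely many attracting words are counted. -/
theorem sum_index_le (hn : 1 ≤ n) (hφ : Function.Injective φ) {J : Type*} [Fintype J] [Nonempty J]
    (m : J → FreeGroup (Fin n)) (hsim : ∀ i j g, tw φ (m j) (m i) g = g → i = j) (R : J → ℕ)
    (hR : ∀ i, ∀ S : Finset (FreeGroup (Fin n)), Subgroup.closure (S : Set (FreeGroup (Fin n))) =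
      fixedSubgroup ((innerAut (m i)).comp φ) → R i ≤ S.card)
    (b : J → ℕ) (W : ∀ i, Fin (b i) → InfWord (Fin n))
    (hW : ∀ i a, IsAttractingFixedWord ((innerAut (m i)).comp φ) (W i a))
    (hW' : ∀ i a a', EquivFixedWords ((innerAut (m i)).comp φ) (W i a) (W i a') → a = a') :
    ∑ i, (2 * (R i : ℤ) + b i - 2) ≤ 2 * (n : ℤ) - 2 := by
  classical
  have hinj : ∀ i, Function.Injective ((innerAut (m i)).comp φ) := fun i =>
    (MulAut.conj (m i)).injective.comp hφ
  -- the endomorphisms are grouped according to the orbits of their points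
  let s : Setoid J :=
    { r := fun i j => ∃ g : FreeGroup (Fin n), g • Pt φ (m i) = Pt φ (m j)
      iseqv :=
        { refl := fun i => ⟨1, one_smul _ _⟩
          symm := fun ⟨g, hg⟩ => ⟨g⁻¹, inv_smul_eq_iff.2 hg.symm⟩
          trans := fun ⟨g, hg⟩ ⟨g', hg'⟩ => ⟨g' * g, by rw [mul_smul, hg, hg']⟩ } }
  let c : J → Quotient s := Quotient.mk s
  have hc : ∀ i, ∃ g : FreeGroup (Fin n), g • Pt φ (m i) = Pt φ (m (c i).out) := fun i =>
    Setoid.symm (Quotient.mk_out i)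
  have : Nonempty (Quotient s) := ⟨c (Classical.arbitrary J)⟩
  choose g hg using hc
  choose l hl using fun i a => exists_attracting_radius (hinj i) (hW i a)
  choose r ρ hρ hH using fun q : Quotient s => exists_basis_stabilizer hn hφ (m q.out)
  obtain ⟨S, hZS, hS, hsum⟩ := Dendron.index_inequality hn (Dinf_dendron (Φ := facIter φ))
    (fun g q a b => Dinf_smul g q a b) (Dinf_comm (facIter_injective hφ)) (ι := Quotient s)
    (fun q => Pt φ (m q.out))
    (fun q q' g hg => by rw [← Quotient.out_equiv_out]; exact ⟨g, hg⟩)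
    (κ := Σ i : J, Fin (b i)) (fun k => c k.1)
    (fun k => g k.1 • wordPrefix (W k.1 k.2) (l k.1 k.2) • Pt φ (m k.1))
    (fun k hk => by
      rw [← hg] at hk
      exact wordPrefix_smul_Pt_ne (hl k.1 k.2) (MulAction.injective _ hk))
    (fun k => ⟨g k.1 * wordPrefix (W k.1 k.2) (l k.1 k.2) * (g k.1)⁻¹, c k.1, by
      rw [mul_smul, mul_smul, inv_smul_eq_iff.2 (hg k.1).symm]⟩)
    (by
      rintro ⟨i, a⟩ ⟨j, a'⟩ t ht hD
      dsimp only at ht hD ⊢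
      -- in terms of the original points, `t` becomes `u`
      obtain ⟨u, hu⟩ : ∃ u, u = (g j)⁻¹ * t * g i := ⟨_, rfl⟩
      have hu1 : u • Pt φ (m i) = Pt φ (m j) := by
        rw [hu, mul_smul, mul_smul, hg, ht, inv_smul_eq_iff, hg]
      have hD' := Dinf_smul (g j)⁻¹ _ _ _ hD
      rw [inv_smul_smul, inv_smul_eq_iff.2 (hg j).symm, ← mul_smul t, ← mul_smul _ (t * g i),
        ← mul_assoc, ← hu] at hD'
      obtain ⟨h1, h2⟩ := germ_attracting hφ hu1 (hl i a) (hl j a') hD'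
      obtain rfl := hsim _ _ _ h1
      rw [tw_self] at h1
      obtain rfl := hW' i a a' ⟨u, h1, h2.convergesTo⟩
      have h3 : u = 1 := eq_one_of_act (hl i a) h2 (p := 1) one_pos h1
      refine ⟨rfl, ?_⟩
      rw [h3, eq_comm] at hu
      simpa [mul_assoc, inv_mul_eq_one, mul_eq_right] using hu)
    (fun q => Finset.univ.image fun x => ρ q (FreeGroup.of x))
    (by
      intro q z hz
      obtain ⟨x, -, rfl⟩ := Finset.mem_image.1 hz
      exact (hH q _).1 ⟨_, rfl⟩)
  have hrS : ∀ q, r q ≤ (S q).card := by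
    intro q
    have := card_le_of_mem_closure (hρ q) Finset.univ (S q) (fun s hs => (hH q s).2 (hS q s hs))
      (fun x hx => hZS q (Finset.mem_coe.2 (Finset.mem_image_of_mem _ hx)))
    simpa using this
  have hclass : ∀ q, ∑ i : {i // c i = q}, (2 * (R i : ℤ) - 2) ≤ 2 * (r q : ℤ) - 2 := by
    intro q
    have : Nonempty {i // c i = q} := ⟨⟨q.out, Quotient.out_eq q⟩⟩
    refine sum_rank_class_le hφ (hρ q) (hH q) (ι := {i // c i = q}) (fun i => m i)
      (fun i => g i) ?_ (fun i j g hg => Subtype.ext (hsim i j g hg)) (fun i => R i)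
      (fun i => hR i)
    rintro ⟨i, rfl⟩
    exact hg i
  have h1 : ∑ i, (2 * (R i : ℤ) - 2) ≤ ∑ q, (2 * ((S q).card : ℤ) - 2) := by
    rw [← Fintype.sum_fiberwise c]
    refine Finset.sum_le_sum fun q _ => (hclass q).trans ?_
    have := hrS q
    omega
  have h2 : (Fintype.card (Σ i : J, Fin (b i)) : ℤ) = ∑ i, (b i : ℤ) := by
    simp [Fintype.card_sigma]
  have h3 : ∑ i, (2 * (R i : ℤ) + b i - 2) = ∑ i, (2 * (R i : ℤ) - 2) + ∑ i, (b i : ℤ) := by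
    rw [← Finset.sum_add_distrib]
    exact Finset.sum_congr rfl fun i _ => by ring
  linarith

/-- The truncated form of `sum_index_le`. -/
theorem sum_truncated_index_le (hn : 1 ≤ n) (hφ : Function.Injective φ) {J : Type*} [Fintype J]
    (m : J → FreeGroup (Fin n)) (hsim : ∀ i j g, tw φ (m j) (m i) g = g → i = j) (R : J → ℕ)
    (hR : ∀ i, ∀ S : Finset (FreeGroup (Fin n)), Subgroup.closure (S : Set (FreeGroup (Fin n))) =
      fixedSubgroup ((innerAut (m i)).comp φ) → R i ≤ S.card)
    (b : J → ℕ) (W : ∀ i, Fin (b i) → InfWord (Fin n))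
    (hW : ∀ i a, IsAttractingFixedWord ((innerAut (m i)).comp φ) (W i a))
    (hW' : ∀ i a a', EquivFixedWords ((innerAut (m i)).comp φ) (W i a) (W i a') → a = a') :
    ∑ i, (2 * R i + b i - 2) ≤ 2 * n - 2 := by
  classical
  have h0 : ∑ i : {i // ¬ 2 < 2 * R i + b i}, (2 * R i + b i - 2) = 0 :=
    Finset.sum_eq_zero fun i _ => by have := i.2; omega
  rw [← Fintype.sum_subtype_add_sum_subtype (fun i => 2 < 2 * R i + b i), h0, add_zero]
  rcases isEmpty_or_nonempty {i // 2 < 2 * R i + b i} with he | he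
  · simp
  · have h1 := sum_index_le hn hφ (J := {i // 2 < 2 * R i + b i}) (fun i => m i)
      (fun i j g hg => Subtype.ext (hsim i j g hg)) (fun i => R i) (fun i => hR i)
      (fun i => b i) (fun i => W i) (fun i => hW i) (fun i => hW' i)
    have h2 : ((∑ i : {i // 2 < 2 * R i + b i}, (2 * R i + b i - 2) : ℕ) : ℤ) =
        ∑ i : {i // 2 < 2 * R i + b i}, (2 * (R i : ℤ) + b i - 2) := by
      rw [Nat.cast_sum]
      refine Finset.sum_congr rfl fun i _ => ?_
      have := i.2
      omega
    omega

/-- The fixed subgroup is finitely generated, and its rank is attained. -/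
theorem exists_rank (hn : 1 ≤ n) (hφ : Function.Injective φ) (m : FreeGroup (Fin n)) :
    ∃ R : ℕ, grpRank (fixedSubgroup ((innerAut m).comp φ)) = R ∧
      ∀ S : Finset (FreeGroup (Fin n)), Subgroup.closure (S : Set (FreeGroup (Fin n))) =
        fixedSubgroup ((innerAut m).comp φ) → R ≤ S.card := by
  obtain ⟨S, hS⟩ : ∃ S : Finset (FreeGroup (Fin n)),
      Subgroup.closure (S : Set (FreeGroup (Fin n))) = fixedSubgroup ((innerAut m).comp φ) := by
    by_cases hne : ∃ g ≠ 1, tw φ m m g = g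
    · obtain ⟨r, ρ, hρ, hH⟩ := exists_basis_stabilizer hn hφ m
      obtain ⟨S, hS, -⟩ := index_of_class hφ hρ hH (ι := Unit) (fun _ => m) (fun _ => 1)
        (fun _ => one_smul _ _) (fun _ _ _ _ => rfl) (fun _ => hne)
      exact ⟨S (), hS ()⟩
    · exact ⟨∅, closure_empty_eq_fixedSubgroup hne⟩
  have hle : ∀ S : Finset (FreeGroup (Fin n)), Subgroup.closure (S : Set (FreeGroup (Fin n))) =
      fixedSubgroup ((innerAut m).comp φ) →
      grpRank (fixedSubgroup ((innerAut m).comp φ)) ≤ S.card := fun S hS =>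
    sInf_le ⟨S, hS, rfl⟩
  obtain ⟨R, hR⟩ := ENat.ne_top_iff_exists.1 (ne_top_of_le_ne_top (ENat.natCast_ne_top _) (hle S hS))
  refine ⟨R, hR.symm, fun S hS => ?_⟩
  have := hle S hS
  rw [← hR] at this
  exact_mod_cast this

/-- Any finite number of classes of attracting words has representatives. -/
theorem exists_words {ψ : FreeGroup (Fin n) →* FreeGroup (Fin n)} {b : ℕ} (hb : b ≤ aCard ψ) :
    ∃ W : Fin b → InfWord (Fin n), (∀ a, IsAttractingFixedWord ψ (W a)) ∧
      ∀ a a', EquivFixedWords ψ (W a) (W a') → a = a' := by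
  obtain ⟨f⟩ : Nonempty (Fin b ↪ Quot fun (W W' : {W : InfWord (Fin n) //
      IsAttractingFixedWord ψ W}) => EquivFixedWords ψ W.1 W'.1) := by
    rw [aCard] at hb
    rcases finite_or_infinite (Quot fun (W W' : {W : InfWord (Fin n) //
      IsAttractingFixedWord ψ W}) => EquivFixedWords ψ W.1 W'.1) with hf | hf
    · have := Fintype.ofFinite (Quot fun (W W' : {W : InfWord (Fin n) //
        IsAttractingFixedWord ψ W}) => EquivFixedWords ψ W.1 W'.1)
      rw [ENat.card_eq_coe_fintype_card] at hb
      exact Function.Embedding.nonempty_of_card_le (by simpa using hb)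
    · exact ⟨Fin.valEmbedding.trans (Infinite.natEmbedding _)⟩
  refine ⟨fun a => (f a).out.1, fun a => (f a).out.2, fun a a' h => f.injective ?_⟩
  have := Quot.sound (r := fun (W W' : {W : InfWord (Fin n) //
    IsAttractingFixedWord ψ W}) => EquivFixedWords ψ W.1 W'.1) h
  rwa [Quot.out_eq, Quot.out_eq] at this

end Index

/-- Theorem 2.6: for pairwise non-similar injective endomorphisms
`ψ j` in the Inn-coset of `φ`, `Σ_j max{0, 2·rk(fix ψ_j) + a(ψ_j) − 2} ≤ 2n − 2`. -/
theorem stmt1 {n : ℕ} (hn : 2 ≤ n)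
    (φ : FreeGroup (Fin n) →* FreeGroup (Fin n)) (hφ : Function.Injective φ)
    (k : ℕ) (ψ : Fin k → (FreeGroup (Fin n) →* FreeGroup (Fin n)))
    (hinj : ∀ j, Function.Injective (ψ j))
    (hcoset : ∀ j, ∃ m : FreeGroup (Fin n), ψ j = (innerAut m).comp φ)
    (hns : ∀ j j', j ≠ j' → ¬ Similar (ψ j) (ψ j')) :
    ∑ j : Fin k, (2 * grpRank (fixedSubgroup (ψ j)) + aCard (ψ j) - 2)
      ≤ 2 * (n : ℕ∞) - 2 := by
  have hn1 : 1 ≤ n := by omega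
  choose m hm using hcoset
  obtain rfl : ψ = fun j => (innerAut (m j)).comp φ := funext hm
  have hsim : ∀ i j g, tw φ (m j) (m i) g = g → i = j := by
    intro i j g hg
    by_contra hij
    exact hns i j hij (similar_of_tw_eq hg)
  choose R hR hR' using fun j => exists_rank hn1 hφ (m j)
  have key : ∀ b : Fin k → ℕ, (∀ j, (b j : ℕ∞) ≤ aCard ((innerAut (m j)).comp φ)) →
      ∑ j, (2 * R j + b j - 2) ≤ 2 * n - 2 := by
    intro b hb
    choose W hW hW' using fun j => exists_words (hb j)
    exact sum_truncated_index_le hn1 hφ m hsim R hR' b W hW hW'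
  have hfin : ∀ j, aCard ((innerAut (m j)).comp φ) ≠ ⊤ := by
    intro j hj
    have h1 := key (fun i => if i = j then 2 * n + 5 else 0) (by
      intro i
      split_ifs with hij
      · rw [hij, hj]; exact le_top
      · simp)
    have h2 := Finset.single_le_sum (f := fun i => 2 * R i + (if i = j then 2 * n + 5 else 0) - 2)
      (fun i _ => Nat.zero_le _) (Finset.mem_univ j)
    have h3 := h2.trans h1
    simp only [if_true] at h3
    omega
  choose b hb using fun j => ENat.ne_top_iff_exists.1 (hfin j)
  have h1 := key b fun j => (hb j).le
  have h2 : ∑ j : Fin k, (2 * grpRank (fixedSubgroup ((innerAut (m j)).comp φ)) +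
      aCard ((innerAut (m j)).comp φ) - 2) = ((∑ j, (2 * R j + b j - 2) : ℕ) : ℕ∞) := by
    rw [Nat.cast_sum]
    refine Finset.sum_congr rfl fun j _ => ?_
    rw [hR, ← hb]
    push_cast
    rfl
  rw [h2]
  have h3 : ((∑ j, (2 * R j + b j - 2) : ℕ) : ℕ∞) ≤ ((2 * n - 2 : ℕ) : ℕ∞) := by exact_mod_cast h1
  refine h3.trans_eq ?_
  push_cast
  rfl

end ZZFix
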